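/- arXiv:2404.16615 — 5 statements merged into one kernel-verified Lean document; each statement's English description precedes it below -/
import Mathlib

section
/- (Strong duality for the restricted second pair of programs.) Under Assumption (A), for every ε ∈ (0,t0) there exist a (P_{2,ε})-admissible measure μ_{2,ε} and a (D_{2,ε})-admissible measure λ_{2,ε} such that ∫ g dμ_{2,ε} = inf{∫ g dμ : μ (P_{2,ε})-admissible} = sup{λ(Ω_ε) : λ (D_{2,ε})-admissible} = λ_{2,ε}(Ω_ε), and the complementary slackness conditions hold: r_{μ_{2,ε}}(t, b(t)) = 1 for λ_{2,ε}-almost every t ∈ Ω_ε, and ∫_{Ω_ε} r_θ(t,b(t)) λ_{2,ε}(dt) = g(θ) for μ_{2,ε}-almost every θ ∈ [2b(0),∞). -/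
open MeasureTheory Set Filter
open scoped ENNReal NNReal Topology

noncomputable def rTheta (θ t x : ℝ) : ℝ := Real.exp (-θ ^ 2 / (2 * t) + θ * x / t)

noncomputable def rMu (μ : Measure ℝ) (t x : ℝ) : ℝ≥0∞ :=
  ∫⁻ θ, ENNReal.ofReal (rTheta θ t x) ∂μ

/-- `(P_{2,ε})`-admissibility: a finite nonnegative Borel measure on `[2b(0),∞)`
with `r_μ(t, b(t)) ≥ 1` for all `t ∈ Ω_ε = [ε, t0]`. -/
def P2epsAdm (b : ℝ → ℝ) (t0 ε : ℝ) (μ : Measure ℝ) : Prop :=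
  IsFiniteMeasure μ ∧ μ (Set.Ici (2 * b 0))ᶜ = 0 ∧
    ∀ t ∈ Set.Icc ε t0, 1 ≤ rMu μ t (b t)

/-- `(D_{2,ε})`-admissibility: a finite nonnegative Borel measure on `Ω_ε = [ε, t0]`
with `∫ r_θ(t, b(t)) λ(dt) ≤ g(θ) = r_θ(t0, x0)` for all `θ ∈ [2b(0),∞)`. -/
def D2epsAdm (b : ℝ → ℝ) (t0 x0 ε : ℝ) (lam : Measure ℝ) : Prop :=
  IsFiniteMeasure lam ∧ lam (Set.Icc ε t0)ᶜ = 0 ∧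
    ∀ θ ∈ Set.Ici (2 * b 0),
      (∫⁻ t, ENNReal.ofReal (rTheta θ t (b t)) ∂lam) ≤ ENNReal.ofReal (rTheta θ t0 x0)


lemma dual_finite {Y T : Type*} [MeasurableSpace Y] [Nonempty Y]
    [TopologicalSpace Y] [CompactSpace Y] [BorelSpace Y]
    (κ : Y → T → ℝ) (J : Finset T) (M : ℝ)
    (h1 : ∀ t ∈ J, Continuous (fun y => κ y t))
    (hno : ¬ ∃ ρ : ProbabilityMeasure Y, ∀ t ∈ J, 1 ≤ M * ∫ y, κ y t ∂(ρ : Measure Y)) :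
    ∃ f : T → ℝ, (∀ t, 0 ≤ f t) ∧ ∑ t ∈ J, f t = 1 ∧ ∀ y, M * ∑ t ∈ J, f t * κ y t ≤ 1 := by
  classical
  have hintg : ∀ (ρ : Measure Y) [IsFiniteMeasure ρ], ∀ t ∈ J, Integrable (fun y => κ y t) ρ := by
    intro ρ _ t ht
    exact (BoundedContinuousFunction.mkOfCompact ⟨_, h1 t ht⟩).integrable ρ
  let B : Set (J → ℝ) := {v | ∃ ρ : ProbabilityMeasure Y, ∀ t : J,
    v t < M * ∫ y, κ y t ∂(ρ : Measure Y)}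
  have hBo : IsOpen B := by
    have : B = ⋃ ρ : ProbabilityMeasure Y, ⋂ t : J,
        {v : J → ℝ | v t < M * ∫ y, κ y t ∂(ρ : Measure Y)} := by
      ext v; simp [B]
    rw [this]
    refine isOpen_iUnion fun ρ => isOpen_iInter_of_finite fun t => ?_
    exact isOpen_lt (continuous_apply t) continuous_const
  have hBc : Convex ℝ B := by
    rintro v ⟨ρ1, h1'⟩ w ⟨ρ2, h2'⟩ a b ha hb hab
    refine ⟨⟨ENNReal.ofReal a • (ρ1 : Measure Y) + ENNReal.ofReal b • (ρ2 : Measure Y), ?_⟩, ?_⟩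
    · constructor
      simp [← ENNReal.ofReal_add ha hb, hab]
    · intro t
      have e : ∫ y, κ y t ∂(ENNReal.ofReal a • (ρ1 : Measure Y) + ENNReal.ofReal b • (ρ2 : Measure Y))
        = a * ∫ y, κ y t ∂(ρ1 : Measure Y) + b * ∫ y, κ y t ∂(ρ2 : Measure Y) := by
        rw [integral_add_measure]
        · rw [integral_smul_measure, integral_smul_measure, ENNReal.toReal_ofReal ha,
            ENNReal.toReal_ofReal hb]; simp
        · exact (hintg _ t t.2).smul_measure (by simp)
        · exact (hintg _ t t.2).smul_measure (by simp)
      change a * v t + b * w t < M * ∫ y, κ y t ∂(ENNReal.ofReal a • (ρ1 : Measure Y) + ENNReal.ofReal b • (ρ2 : Measure Y))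
      rw [e]
      have := h1' t
      have := h2' t
      rcases ha.eq_or_lt with h | h
      · have : b = 1 := by linarith
        subst h; subst this; simpa using h2' t
      · nlinarith
  have h1B : (fun _ => 1 : J → ℝ) ∉ B := by
    rintro ⟨ρ, hρ⟩
    exact hno ⟨ρ, fun t ht => (hρ ⟨t, ht⟩).le⟩
  obtain ⟨φ, hφ⟩ := geometric_hahn_banach_open_point hBc hBo h1B
  have hφe : ∀ v : J → ℝ, φ v = ∑ t : J, φ (Pi.single t 1) * v t := by
    intro v
    conv_lhs => rw [← Finset.univ_sum_single v]
    rw [map_sum]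
    refine Finset.sum_congr rfl fun t _ => ?_
    have : (Pi.single t (v t) : J → ℝ) = v t • Pi.single t 1 := by
      rw [← Pi.single_smul]; simp
    rw [this, map_smul, smul_eq_mul, mul_comm]
  have hdirac : ∀ y, ∀ δ > 0, (fun t : J => M * κ y t - δ) ∈ B := by
    intro y δ hδ
    refine ⟨⟨Measure.dirac y, inferInstance⟩, fun t => ?_⟩
    change _ < M * ∫ y, κ y t ∂(Measure.dirac y)
    rw [integral_dirac' _ _ (h1 t t.2).stronglyMeasurable]
    linarith
  obtain ⟨yy⟩ := ‹Nonempty Y›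
  have hφnn : ∀ t, 0 ≤ φ (Pi.single t 1) := by
    intro t
    by_contra hneg
    push Not at hneg
    obtain ⟨v, hv⟩ : ∃ v, v ∈ B := ⟨_, hdirac yy 1 one_pos⟩
    have key : ∀ n : ℝ, 0 ≤ n → φ v - n * φ (Pi.single t 1) < φ (fun _ => 1) := by
      intro n hn
      have : v - n • Pi.single t 1 ∈ B := by
        obtain ⟨ρ, hρ⟩ := hv
        refine ⟨ρ, fun t' => lt_of_le_of_lt ?_ (hρ t')⟩
        have : 0 ≤ (Pi.single t 1 : J → ℝ) t' := by
          by_cases h : t' = t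
          · subst h; simp
          · simp [h]
        simp only [Pi.sub_apply, Pi.smul_apply, smul_eq_mul]
        nlinarith
      have := hφ _ this
      simpa using this
    have h0 := key (|φ (fun _ => 1) - φ v| / (-φ (Pi.single t 1))) (by
      apply div_nonneg (abs_nonneg _) (by linarith))
    have : |φ (fun _ => 1) - φ v| / (-φ (Pi.single t 1)) * φ (Pi.single t 1) = - |φ (fun _ => 1) - φ v| := by
      rw [div_neg, neg_mul, div_mul_cancel₀ _ hneg.ne]
    rw [this] at h0
    have := le_abs_self (φ (fun _ => 1) - φ v)
    linarith
  set S := ∑ t : J, φ (Pi.single t 1) with hS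
  have hS1 : φ (fun _ => 1) = S := by rw [hφe]; simp [hS]
  have hSpos : 0 < S := by
    rcases (Finset.sum_nonneg fun t _ => hφnn t : 0 ≤ S).eq_or_lt with h | h
    · exfalso
      have h0 : ∀ t, φ (Pi.single t 1) = 0 := by
        intro t
        exact (Finset.sum_eq_zero_iff_of_nonneg (fun t _ => hφnn t)).1 h.symm t (Finset.mem_univ _)
      have := hφ _ (hdirac yy 1 one_pos)
      rw [hφe, hS1, hS, ← h] at this
      simp [h0] at this
    · exact h
  refine ⟨fun t => if h : t ∈ J then φ (Pi.single ⟨t, h⟩ 1) / S else 0, ?_, ?_, ?_⟩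
  · intro t
    by_cases h : t ∈ J
    · simp only [h, dite_true]; exact div_nonneg (hφnn _) hSpos.le
    · simp [h]
  · rw [← Finset.sum_coe_sort]
    simp only [Finset.coe_mem, dite_true, Subtype.coe_eta]
    rw [← Finset.sum_div, ← hS, div_self hSpos.ne']
  · intro y
    rw [← Finset.sum_coe_sort J (fun t => (if h : t ∈ J then φ (Pi.single ⟨t, h⟩ 1) / S else 0) * κ y t)]
    simp only [Finset.coe_mem, dite_true, Subtype.coe_eta]
    have : ∀ δ > 0, M * (∑ t : J, φ (Pi.single t 1) * κ y t) < S + δ * S := by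
      intro δ hδ
      have := hφ _ (hdirac y δ hδ)
      rw [hφe, hS1] at this
      simp only [mul_sub, Finset.sum_sub_distrib, ← Finset.sum_mul, ← hS] at this
      rw [Finset.mul_sum]
      have e : ∀ t : J, M * (φ (Pi.single t 1) * κ y t) = φ (Pi.single t 1) * (M * κ y t) := by
        intro t; ring
      simp only [e]
      linarith
    have h2 : M * (∑ t : J, φ (Pi.single t 1) * κ y t) ≤ S := by
      refine le_of_forall_pos_le_add fun δ hδ => ?_
      have := this (δ / S) (by positivity)
      rw [div_mul_cancel₀ _ hSpos.ne'] at this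
      exact this.le
    have e : (∑ t : J, φ (Pi.single t 1) / S * κ y t) = (∑ t : J, φ (Pi.single t 1) * κ y t) / S := by
      rw [Finset.sum_div]; refine Finset.sum_congr rfl fun t _ => by ring
    rw [e, ← mul_div_assoc, div_le_one hSpos]
    exact h2

lemma dual_abs {Y T : Type*} [MeasurableSpace Y] [TopologicalSpace Y] [CompactSpace Y] [T2Space Y]
    [BorelSpace Y] [MeasurableSpace T] [TopologicalSpace T] [CompactSpace T] [T2Space T]
    [BorelSpace T] [Nonempty T]
    (κ : Y → T → ℝ) (hκ : ∀ y t, 0 ≤ κ y t) (T' : Set T) (Y' : Set Y)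
    (h1 : ∀ t ∈ T', Continuous (fun y => κ y t)) (h2 : ∀ y ∈ Y', Continuous (κ y))
    (y0 : Y) (hy0 : y0 ∈ Y') (h3 : ∀ t, 0 < κ y0 t) :
    ∃ D : ℝ, 0 ≤ D ∧ ∃ (ρ : ProbabilityMeasure Y) (π : ProbabilityMeasure T),
      (∀ t ∈ T', 1 ≤ D * ∫ y, κ y t ∂(ρ : Measure Y)) ∧
      (∀ y ∈ Y', D * ∫ t, κ y t ∂(π : Measure T) ≤ 1) := by
  classical
  let P : ℝ → ProbabilityMeasure T → Prop := fun M π => ∀ y ∈ Y', M * ∫ t, κ y t ∂(π : Measure T) ≤ 1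
  let S : Set ℝ := {M | 0 ≤ M ∧ ∃ π, P M π}
  obtain ⟨m, hm, hmk⟩ : ∃ m > 0, ∀ t, m ≤ κ y0 t := by
    obtain ⟨t, -, ht⟩ := isCompact_univ.exists_isMinOn (univ_nonempty (α := T)) (h2 y0 hy0).continuousOn
    exact ⟨κ y0 t, h3 t, fun s => ht (mem_univ s)⟩
  have hintgT : ∀ (π : ProbabilityMeasure T), ∀ y ∈ Y', Integrable (κ y) (π : Measure T) := by
    intro π y hy
    exact (BoundedContinuousFunction.mkOfCompact ⟨_, h2 y hy⟩).integrable _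
  have hSb : BddAbove S := by
    refine ⟨1 / m, ?_⟩
    rintro M ⟨hM, π, hπ⟩
    have h := hπ y0 hy0
    have : m ≤ ∫ t, κ y0 t ∂(π : Measure T) := by
      calc m = ∫ t, m ∂(π : Measure T) := by simp
        _ ≤ _ := integral_mono (integrable_const _) (hintgT π y0 hy0) hmk
    rw [le_div_iff₀ hm]
    nlinarith
  have hS0 : (0 : ℝ) ∈ S := by
    obtain ⟨t⟩ := ‹Nonempty T›
    exact ⟨le_rfl, ⟨Measure.dirac t, inferInstance⟩, fun y _ => by simp⟩
  set D := sSup S with hD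
  have hD0 : 0 ≤ D := le_csSup hSb hS0
  have : Nonempty Y := ⟨y0⟩
  -- dual
  have hdual : ∃ π : ProbabilityMeasure T, P D π := by
    let C : (Set.Ico (0:ℝ) D) → Set (ProbabilityMeasure T) := fun M => {π | P M π}
    by_cases hDpos : D = 0
    · obtain ⟨t⟩ := ‹Nonempty T›
      exact ⟨⟨Measure.dirac t, inferInstance⟩, fun y _ => by simp [hDpos]⟩
    have hDpos : 0 < D := lt_of_le_of_ne hD0 (Ne.symm hDpos)
    have hmono : ∀ M M' π, 0 ≤ M → M ≤ M' → P M' π → P M π := by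
      intro M M' π h0 h h' y hy
      refine le_trans ?_ (h' y hy)
      exact mul_le_mul_of_nonneg_right h (integral_nonneg fun t => hκ y t)
    have hne : (⋂ M, C M).Nonempty := by
      have : Nonempty (Set.Ico (0:ℝ) D) := ⟨⟨0, le_rfl, hDpos⟩⟩
      refine IsCompact.nonempty_iInter_of_directed_nonempty_isCompact_isClosed C ?_ ?_ ?_ ?_
      · intro M M'
        refine ⟨max M M', ?_, ?_⟩
        · intro π hπ; exact hmono _ _ _ M.2.1 (by exact_mod_cast le_max_left M M') hπ
        · intro π hπ; exact hmono _ _ _ M'.2.1 (by exact_mod_cast le_max_right M M') hπ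
      · rintro ⟨M, hM0, hM⟩
        obtain ⟨M', hM', h⟩ := exists_lt_of_lt_csSup ⟨0, hS0⟩ hM
        obtain ⟨hM'0, π, hπ⟩ := hM'
        exact ⟨π, hmono _ _ _ hM0 h.le hπ⟩
      · intro M
        apply IsClosed.isCompact
        have : C M = ⋂ y ∈ Y', {π : ProbabilityMeasure T | (M:ℝ) * ∫ t, κ y t ∂(π : Measure T) ≤ 1} := by
          ext π; simp [C, P]
        rw [this]
        refine isClosed_biInter fun y hy => isClosed_le ?_ continuous_const
        exact continuous_const.mul (ProbabilityMeasure.continuous_integral_continuousMap (⟨_, h2 y hy⟩ : C(T, ℝ)))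
      · intro M
        have : C M = ⋂ y ∈ Y', {π : ProbabilityMeasure T | (M:ℝ) * ∫ t, κ y t ∂(π : Measure T) ≤ 1} := by
          ext π; simp [C, P]
        rw [this]
        refine isClosed_biInter fun y hy => isClosed_le ?_ continuous_const
        exact continuous_const.mul (ProbabilityMeasure.continuous_integral_continuousMap (⟨_, h2 y hy⟩ : C(T, ℝ)))
    obtain ⟨π, hπ⟩ := hne
    refine ⟨π, fun y hy => ?_⟩
    have hπ' : ∀ M ∈ Set.Ico 0 D, M * ∫ t, κ y t ∂(π : Measure T) ≤ 1 := by
      intro M hM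
      exact mem_iInter.1 hπ ⟨M, hM⟩ y hy
    have ht : Tendsto (fun M : ℝ => M * ∫ t, κ y t ∂(π : Measure T)) (𝓝[<] D)
        (𝓝 (D * ∫ t, κ y t ∂(π : Measure T))) :=
      ((continuous_id.mul continuous_const).tendsto D).mono_left nhdsWithin_le_nhds
    refine le_of_tendsto ht ?_
    filter_upwards [Ico_mem_nhdsLT hDpos] with M hM using hπ' M hM
  obtain ⟨π, hπ⟩ := hdual
  -- primal
  have hprim : ∃ ρ : ProbabilityMeasure Y, ∀ t ∈ T', 1 ≤ D * ∫ y, κ y t ∂(ρ : Measure Y) := by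
    let C : (Set.Ioi D) × T' → Set (ProbabilityMeasure Y) :=
      fun q => {ρ | 1 ≤ (q.1 : ℝ) * ∫ y, κ y q.2 ∂(ρ : Measure Y)}
    have hne : (⋂ q, C q).Nonempty := by
      apply CompactSpace.iInter_nonempty
      · rintro ⟨M, t⟩
        exact isClosed_le continuous_const (continuous_const.mul
          (ProbabilityMeasure.continuous_integral_continuousMap (⟨_, h1 t t.2⟩ : C(Y, ℝ))))
      · intro s
        by_cases hs : s.Nonempty
        swap
        · rw [Finset.not_nonempty_iff_eq_empty] at hs
          subst hs
          simp only [Finset.notMem_empty, iInter_of_empty, iInter_univ]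
          exact ⟨⟨Measure.dirac y0, inferInstance⟩, mem_univ _⟩
        let M : ℝ := s.inf' hs (fun q => (q.1 : ℝ))
        have hMD : D < M := by
          rw [Finset.lt_inf'_iff]
          intro q _; exact q.1.2
        have hM : 0 < M := lt_of_le_of_lt hD0 hMD
        let J : Finset T := s.image (fun q => (q.2 : T))
        have hJT : ∀ t ∈ J, t ∈ T' := by
          intro t ht
          obtain ⟨q, -, rfl⟩ := Finset.mem_image.1 ht
          exact q.2.2
        have hex : ∃ ρ : ProbabilityMeasure Y, ∀ t ∈ J, 1 ≤ M * ∫ y, κ y t ∂(ρ : Measure Y) := by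
          by_contra hno
          obtain ⟨f, hf0, hf1, hf⟩ := dual_finite κ J M (fun t ht => h1 t (hJT t ht)) hno
          have hMS : M ∈ S := by
            refine ⟨hM.le, ⟨∑ t ∈ J, ENNReal.ofReal (f t) • Measure.dirac t, ?_⟩, ?_⟩
            · constructor
              simp only [Measure.coe_finsetSum, Finset.sum_apply, Measure.smul_apply, measure_univ,
                smul_eq_mul, mul_one]
              rw [← ENNReal.ofReal_sum_of_nonneg (fun t _ => hf0 t), hf1, ENNReal.ofReal_one]
            · intro y hy
              change M * ∫ t, κ y t ∂(∑ t ∈ J, ENNReal.ofReal (f t) • Measure.dirac t) ≤ 1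
              rw [integral_finsetSum_measure]
              · simp only [integral_smul_measure, ENNReal.toReal_ofReal (hf0 _)]
                refine le_trans (le_of_eq ?_) (hf y)
                congr 1
                refine Finset.sum_congr rfl fun t _ => ?_
                rw [integral_dirac' _ _ (h2 y hy).stronglyMeasurable, smul_eq_mul]
              · intro t _
                refine Integrable.smul_measure ?_ (by simp)
                exact (BoundedContinuousFunction.mkOfCompact ⟨_, h2 y hy⟩).integrable _
          exact absurd (le_csSup hSb hMS) (not_le.2 hMD)
        obtain ⟨ρ, hρ⟩ := hex
        refine ⟨ρ, ?_⟩
        simp only [mem_iInter]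
        intro q hq
        refine le_trans (hρ q.2 (Finset.mem_image_of_mem _ hq)) ?_
        refine mul_le_mul_of_nonneg_right (Finset.inf'_le _ hq) (integral_nonneg fun y => hκ y _)
    obtain ⟨ρ, hρ⟩ := hne
    refine ⟨ρ, fun t ht => ?_⟩
    have hρ' : ∀ M ∈ Set.Ioi D, 1 ≤ M * ∫ y, κ y t ∂(ρ : Measure Y) := by
      intro M hM
      exact mem_iInter.1 hρ ⟨⟨M, hM⟩, ⟨t, ht⟩⟩
    have hl : Tendsto (fun M : ℝ => M * ∫ y, κ y t ∂(ρ : Measure Y)) (𝓝[>] D)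
        (𝓝 (D * ∫ y, κ y t ∂(ρ : Measure Y))) :=
      ((continuous_id.mul continuous_const).tendsto D).mono_left nhdsWithin_le_nhds
    refine ge_of_tendsto hl ?_
    filter_upwards [self_mem_nhdsWithin] with M hM using hρ' M hM
  obtain ⟨ρ, hρ⟩ := hprim
  exact ⟨D, hD0, ρ, π, hρ, hπ⟩


lemma duality (a ε t0 : ℝ) (ha : 0 < a) (hε : ε < t0) (k : ℝ → ℝ → ℝ) (hpos : ∀ θ t, 0 < k θ t)
    (hcθ : ∀ θ, ContinuousOn (k θ) (Icc ε t0))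
    (hct : ∀ t ∈ Icc ε t0, Continuous (fun θ => k θ t))
    (hlim : ∀ t ∈ Ico ε t0, Tendsto (fun θ => k θ t) atTop (𝓝 0)) :
    ∃ (D : ℝ) (ν lam : Measure ℝ), 0 ≤ D ∧ IsFiniteMeasure ν ∧ IsFiniteMeasure lam ∧
      ν (Ici a)ᶜ = 0 ∧ lam (Icc ε t0)ᶜ = 0 ∧ ν univ ≤ ENNReal.ofReal D ∧
      lam univ = ENNReal.ofReal D ∧
      (∀ θ ∈ Ici a, ∫⁻ t, ENNReal.ofReal (k θ t) ∂lam ≤ 1) ∧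
      (∀ t ∈ Ico ε t0, 1 ≤ ∫⁻ θ, ENNReal.ofReal (k θ t) ∂ν) := by
  classical
  have : Nonempty (Icc ε t0) := ⟨⟨ε, le_rfl, hε.le⟩⟩
  let κ : Icc (0:ℝ) a⁻¹ → Icc ε t0 → ℝ := fun y t => if (y:ℝ) = 0 then 0 else k (y:ℝ)⁻¹ t
  have hκ0 : ∀ y t, 0 ≤ κ y t := by
    intro y t
    simp only [κ]; split_ifs
    · exact le_rfl
    · exact (hpos _ _).le
  have hainv : 0 < a⁻¹ := inv_pos.2 ha
  let T' : Set (Icc ε t0) := {t | (t:ℝ) < t0}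
  let Y' : Set (Icc (0:ℝ) a⁻¹) := {y | (y:ℝ) ≠ 0}
  have h1 : ∀ t ∈ T', Continuous (fun y => κ y t) := by
    intro t ht
    have : ContinuousOn (fun y : ℝ => if y = 0 then 0 else k y⁻¹ t) (Icc 0 a⁻¹) := by
      intro y hy
      by_cases h : y = 0
      · subst h
        rw [ContinuousWithinAt]
        simp only [if_true]
        have hsub : Icc (0:ℝ) a⁻¹ ⊆ insert 0 (Ioi 0) := by
          intro z hz
          rcases hz.1.eq_or_lt with h | h
          · left; exact h.symm
          · right; exact h
        refine Tendsto.mono_left ?_ (nhdsWithin_mono _ hsub)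
        rw [nhdsWithin_insert, tendsto_sup]
        constructor
        · rw [tendsto_pure_left]
          intro s hs
          simpa using mem_of_mem_nhds hs
        · have h2 : Tendsto (fun y : ℝ => k y⁻¹ t) (𝓝[>] 0) (𝓝 0) :=
            (hlim t ⟨t.2.1, ht⟩).comp tendsto_inv_nhdsGT_zero
          refine h2.congr' ?_
          filter_upwards [self_mem_nhdsWithin] with y hy
          rw [if_neg (ne_of_gt hy)]
      · apply ContinuousAt.continuousWithinAt
        have h2 : ContinuousAt (fun y : ℝ => k y⁻¹ t) y :=
          ((hct t t.2).continuousAt).comp (continuousAt_inv₀ h)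
        refine h2.congr ?_
        filter_upwards [isOpen_ne.mem_nhds h] with z hz
        rw [if_neg hz]
    exact continuousOn_iff_continuous_domRestrict.1 this
  have h2 : ∀ y ∈ Y', Continuous (κ y) := by
    intro y hy
    have : κ y = fun t : Icc ε t0 => k (y:ℝ)⁻¹ t := by
      funext t; simp only [κ]; rw [if_neg hy]
    rw [this]
    exact continuousOn_iff_continuous_domRestrict.1 (hcθ _)
  obtain ⟨D, hD, ρ, π, hρ, hπ⟩ := dual_abs κ hκ0 T' Y' h1 h2 ⟨a⁻¹, hainv.le, le_rfl⟩ hainv.ne'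
    (fun t => by simp only [κ]; rw [if_neg hainv.ne']; exact hpos _ _)
  have hY'm : MeasurableSet Y' := by
    have : IsOpen Y' := isOpen_ne.preimage continuous_subtype_val
    exact this.measurableSet
  have hgm : Measurable (fun y : Icc (0:ℝ) a⁻¹ => (y:ℝ)⁻¹) := measurable_subtype_coe.inv
  refine ⟨D, ENNReal.ofReal D • Measure.map (fun y : Icc (0:ℝ) a⁻¹ => (y:ℝ)⁻¹)
      ((ρ : Measure _).restrict Y'),
    ENNReal.ofReal D • Measure.map Subtype.val (π : Measure (Icc ε t0)), hD, ?_, ?_, ?_, ?_, ?_, ?_, ?_, ?_⟩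
  · exact Measure.smul_finite _ (by simp)
  · exact Measure.smul_finite _ (by simp)
  · rw [Measure.smul_apply, Measure.map_apply hgm measurableSet_Ici.compl,
      Measure.restrict_apply (hgm measurableSet_Ici.compl)]
    have : (fun y : Icc (0:ℝ) a⁻¹ => (y:ℝ)⁻¹) ⁻¹' (Ici a)ᶜ ∩ Y' = ∅ := by
      ext y
      simp only [mem_inter_iff, mem_preimage, mem_compl_iff, mem_Ici, not_le, Y', Set.mem_ofPred_eq,
        mem_empty_iff_false, iff_false, not_and, not_not]
      intro h
      by_contra hne
      have hy : 0 < (y:ℝ) := lt_of_le_of_ne y.2.1 (Ne.symm hne)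
      have := (inv_lt_comm₀ hy ha).1 h
      exact absurd y.2.2 (not_le.2 this)
    rw [this]; simp
  · rw [Measure.smul_apply, Measure.map_apply measurable_subtype_coe measurableSet_Icc.compl]
    have : (Subtype.val : Icc ε t0 → ℝ) ⁻¹' (Icc ε t0)ᶜ = ∅ := by
      ext y; simp
    rw [this]; simp
  · rw [Measure.smul_apply, Measure.map_apply hgm MeasurableSet.univ]
    calc ENNReal.ofReal D * _ ≤ ENNReal.ofReal D * 1 := by gcongr; exact (Measure.restrict_le_self _).trans prob_le_one
      _ = _ := mul_one _
  · rw [Measure.smul_apply, Measure.map_apply measurable_subtype_coe MeasurableSet.univ]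
    simp
  · intro θ hθ
    rw [lintegral_smul_measure, (MeasurableEmbedding.subtype_coe measurableSet_Icc).lintegral_map]
    have hθ0 : 0 < θ := lt_of_lt_of_le ha hθ
    have hy : (⟨θ⁻¹, (inv_pos.2 hθ0).le, inv_anti₀ ha hθ⟩ : Icc (0:ℝ) a⁻¹) ∈ Y' := (inv_pos.2 hθ0).ne'
    have h := hπ _ hy
    have e : ∀ t : Icc ε t0, κ ⟨θ⁻¹, (inv_pos.2 hθ0).le, inv_anti₀ ha hθ⟩ t = k θ t := by
      intro t; simp only [κ]; rw [if_neg (inv_pos.2 hθ0).ne', inv_inv]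
    simp only [e] at h
    rw [← ofReal_integral_eq_lintegral_ofReal]
    · rw [smul_eq_mul, ← ENNReal.ofReal_mul hD]
      exact ENNReal.ofReal_le_one.2 h
    · have hc : Continuous (fun t : Icc ε t0 => k θ t) := continuousOn_iff_continuous_domRestrict.1 (hcθ θ)
      exact (BoundedContinuousFunction.mkOfCompact ⟨_, hc⟩).integrable _
    · exact Eventually.of_forall fun t => (hpos _ _).le
  · intro t ht
    rw [lintegral_smul_measure, lintegral_map ((hct t ⟨ht.1, ht.2.le⟩).measurable.ennreal_ofReal) hgm]
    have hT : (⟨t, ht.1, ht.2.le⟩ : Icc ε t0) ∈ T' := ht.2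
    have h := hρ _ hT
    have e : ∫⁻ y in Y', ENNReal.ofReal (k (y:ℝ)⁻¹ t) ∂(ρ : Measure (Icc (0:ℝ) a⁻¹)) =
        ∫⁻ y, ENNReal.ofReal (κ y ⟨t, ht.1, ht.2.le⟩) ∂(ρ : Measure (Icc (0:ℝ) a⁻¹)) := by
      rw [← lintegral_indicator hY'm]
      refine lintegral_congr fun y => ?_
      by_cases hy : (y:ℝ) = 0
      · have : y ∉ Y' := fun h => h hy
        simp [indicator_of_notMem this, κ, hy]
      · have : y ∈ Y' := hy
        simp [indicator_of_mem this, κ, hy]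
    rw [e, ← ofReal_integral_eq_lintegral_ofReal]
    · rw [smul_eq_mul, ← ENNReal.ofReal_mul hD]
      exact ENNReal.one_le_ofReal.2 h
    · exact (BoundedContinuousFunction.mkOfCompact ⟨_, h1 _ hT⟩).integrable _
    · exact Eventually.of_forall fun y => hκ0 _ _


/-- A class of kernels for which differentiation under the integral sign is automatic. -/
structure PC {α : Type*} [MeasurableSpace α] (p : Measure α) (U : Set ℂ) (G : ℂ → α → ℂ) : Prop where
  meas : ∀ z ∈ U, AEStronglyMeasurable (G z) p
  diff : ∀ᵐ θ ∂p, DifferentiableOn ℂ (fun z => G z θ) U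
  bdd : ∀ z ∈ U, ∃ ρ > 0, ∃ C : ℝ, ∀ᵐ θ ∂p, ∀ w ∈ Metric.ball z ρ, ‖G w θ‖ ≤ C

lemma PC.integrable {α : Type*} [MeasurableSpace α] {p : Measure α} [IsFiniteMeasure p] {U : Set ℂ}
    {G : ℂ → α → ℂ} (h : PC p U G) {z : ℂ} (hz : z ∈ U) : Integrable (G z) p := by
  obtain ⟨ρ, hρ, C, hC⟩ := h.bdd z hz
  refine Integrable.of_bound (h.meas z hz) C ?_
  filter_upwards [hC] with θ hθ using hθ z (Metric.mem_ball_self hρ)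

lemma PC.deriv {α : Type*} [MeasurableSpace α] {p : Measure α} {U : Set ℂ} (hU : IsOpen U)
    {G : ℂ → α → ℂ} (h : PC p U G) : PC p U (fun z θ => deriv (fun w => G w θ) z) := by
  refine ⟨?_, ?_, ?_⟩
  · intro z hz
    obtain ⟨r, hr, hrU⟩ := Metric.isOpen_iff.1 hU z hz
    have hseq : Tendsto (fun n : ℕ => (r / 2) * (1 / ((n:ℝ) + 1))) atTop (𝓝 0) := by
      simpa using tendsto_one_div_add_atTop_nhds_zero_nat.const_mul (r / 2)
    have hpos : ∀ n : ℕ, 0 < (r / 2) * (1 / ((n:ℝ) + 1)) := fun n => by positivity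
    have hlt : ∀ n : ℕ, (r / 2) * (1 / ((n:ℝ) + 1)) < r := by
      intro n
      have : 1 / ((n:ℝ) + 1) ≤ 1 := by
        rw [div_le_one (by positivity)]; linarith [(Nat.cast_nonneg n : (0:ℝ) ≤ n)]
      nlinarith
    refine aestronglyMeasurable_of_tendsto_ae (u := atTop)
      (f := fun (n : ℕ) θ => ((((r / 2) * (1 / ((n:ℝ) + 1)) : ℝ) : ℂ))⁻¹ •
        (G (z + (((r / 2) * (1 / ((n:ℝ) + 1)) : ℝ) : ℂ)) θ - G z θ)) ?_ ?_
    · intro n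
      refine AEStronglyMeasurable.const_smul ((h.meas _ (hrU ?_)).sub (h.meas z hz)) ((((r / 2) * (1 / ((n:ℝ) + 1)) : ℝ) : ℂ))⁻¹
      rw [Metric.mem_ball, dist_eq_norm, add_sub_cancel_left, Complex.norm_real, Real.norm_eq_abs,
        abs_of_pos (hpos n)]
      exact hlt n
    · filter_upwards [h.diff] with θ hθ
      have hd : HasDerivAt (fun w => G w θ) (_root_.deriv (fun w => G w θ) z) z :=
        (hθ.differentiableAt (hU.mem_nhds hz)).hasDerivAt
      have := hasDerivAt_iff_tendsto_slope_zero.1 hd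
      refine this.comp ?_
      rw [tendsto_nhdsWithin_iff]
      constructor
      · have := (Complex.continuous_ofReal.tendsto 0).comp hseq
        rw [Complex.ofReal_zero] at this
        exact this
      · refine Eventually.of_forall fun n => ?_
        simp only [mem_compl_iff, mem_singleton_iff, Complex.ofReal_eq_zero]
        exact (hpos n).ne'
  · filter_upwards [h.diff] with θ hθ using hθ.deriv hU
  · intro z hz
    obtain ⟨r, hr, hrU⟩ := Metric.isOpen_iff.1 hU z hz
    obtain ⟨ρ, hρ, C, hC⟩ := h.bdd z hz
    set δ := min r ρ / 2 with hδ
    have hm : 0 < min r ρ := lt_min hr hρ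
    have hδ0 : 0 < δ := by positivity
    have hm1 := min_le_left r ρ
    have hm2 := min_le_right r ρ
    refine ⟨δ / 2, by positivity, C / (δ / 2), ?_⟩
    filter_upwards [h.diff, hC] with θ hθ hCθ w hw
    rw [Metric.mem_ball] at hw
    refine Complex.norm_deriv_le_of_forall_mem_sphere_norm_le (by positivity) ?_ ?_
    · refine DifferentiableOn.diffContOnCl ?_
      refine hθ.mono fun v hv => hrU ?_
      have := Metric.closure_ball_subset_closedBall hv
      rw [Metric.mem_closedBall] at this
      rw [Metric.mem_ball]
      linarith [dist_triangle v w z]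
    · intro v hv
      refine hCθ v ?_
      rw [Metric.mem_sphere] at hv
      rw [Metric.mem_ball]
      linarith [dist_triangle v w z]

lemma PC.hasDerivAt {α : Type*} [MeasurableSpace α] {p : Measure α} [IsFiniteMeasure p] {U : Set ℂ}
    (hU : IsOpen U) {G : ℂ → α → ℂ} (h : PC p U G) {z : ℂ} (hz : z ∈ U) :
    HasDerivAt (fun z => ∫ θ, G z θ ∂p) (∫ θ, _root_.deriv (fun w => G w θ) z ∂p) z := by
  obtain ⟨ρ, hρ, C, hC⟩ := (h.deriv hU).bdd z hz
  refine (hasDerivAt_integral_of_dominated_loc_of_deriv_le (s := Metric.ball z ρ ∩ U)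
    (F' := fun z θ => _root_.deriv (fun w => G w θ) z) (bound := fun _ => C)
    (Filter.inter_mem (Metric.ball_mem_nhds z hρ) (hU.mem_nhds hz)) ?_ (h.integrable hz)
    ((h.deriv hU).meas z hz) ?_ (integrable_const _) ?_).2
  · filter_upwards [hU.mem_nhds hz] with w hw using h.meas w hw
  · filter_upwards [hC] with θ hθ w hw using hθ w hw.1
  · filter_upwards [h.diff] with θ hθ w hw
    exact (hθ.differentiableAt (hU.mem_nhds hw.2)).hasDerivAt

lemma PC.differentiableOn {α : Type*} [MeasurableSpace α] {p : Measure α} [IsFiniteMeasure p]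
    {U : Set ℂ} (hU : IsOpen U) {G : ℂ → α → ℂ} (h : PC p U G) :
    DifferentiableOn ℂ (fun z => ∫ θ, G z θ ∂p) U :=
  fun _ hz => (h.hasDerivAt hU hz).differentiableAt.differentiableWithinAt

lemma PC.iter {α : Type*} [MeasurableSpace α] {p : Measure α} {U : Set ℂ} (hU : IsOpen U)
    {G : ℂ → α → ℂ} (h : PC p U G) (n : ℕ) :
    PC p U (fun z θ => iteratedDeriv n (fun w => G w θ) z) := by
  induction n with
  | zero => simpa using h
  | succ n ih =>
    have := ih.deriv hU
    simpa only [iteratedDeriv_succ] using this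

lemma PC.iteratedDeriv_eq {α : Type*} [MeasurableSpace α] {p : Measure α} [IsFiniteMeasure p]
    {U : Set ℂ} (hU : IsOpen U) {G : ℂ → α → ℂ} (h : PC p U G) (n : ℕ) :
    ∀ z ∈ U, iteratedDeriv n (fun z => ∫ θ, G z θ ∂p) z
      = ∫ θ, iteratedDeriv n (fun w => G w θ) z ∂p := by
  induction n with
  | zero => intro z _; simp
  | succ n ih =>
    intro z hz
    rw [iteratedDeriv_succ]
    have e : iteratedDeriv n (fun z => ∫ θ, G z θ ∂p) =ᶠ[𝓝 z]
        fun z => ∫ θ, iteratedDeriv n (fun w => G w θ) z ∂p := by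
      filter_upwards [hU.mem_nhds hz] with w hw using ih w hw
    rw [e.deriv_eq, ((h.iter hU n).hasDerivAt hU hz).deriv]
    simp only [iteratedDeriv_succ]

lemma complexify (c : ℝ → ℝ) (s : ℝ) (hc : AnalyticAt ℝ c s) :
    ∃ r > 0, ∃ C : ℂ → ℂ, DifferentiableOn ℂ C (Metric.ball (s:ℂ) r) ∧
      ∀ x : ℝ, |x - s| < r → C x = c x := by
  obtain ⟨p, R, hp⟩ := hc
  obtain ⟨r, hr0, hrR⟩ := ENNReal.lt_iff_exists_nnreal_btwn.1 hp.r_pos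
  have hr0' : 0 < (r:ℝ) := by exact_mod_cast hr0
  let q : FormalMultilinearSeries ℂ ℂ ℂ := FormalMultilinearSeries.ofScalars ℂ (fun n => ((p.coeff n : ℝ) : ℂ))
  have hqn : ∀ n, ‖q n‖ = ‖p n‖ := by
    intro n
    rw [FormalMultilinearSeries.norm_apply_eq_norm_coef]
    simp [q, FormalMultilinearSeries.ofScalars_norm]
  have hqr : (r : ℝ≥0∞) ≤ q.radius := by
    obtain ⟨C, hC0, hC⟩ := p.norm_mul_pow_le_of_lt_radius (lt_of_lt_of_le hrR hp.r_le)
    refine q.le_radius_of_bound C fun n => ?_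
    rw [hqn]; exact hC n
  have hq := q.hasFPowerSeriesOnBall (lt_of_lt_of_le hr0 hqr)
  refine ⟨r, hr0', fun z => q.sum (z - s), ?_, ?_⟩
  · have h1 : DifferentiableOn ℂ q.sum (Metric.ball 0 r) := by
      refine hq.differentiableOn.mono ?_
      intro z hz
      rw [Metric.mem_eball, edist_zero_right]
      rw [mem_ball_zero_iff] at hz
      refine lt_of_lt_of_le ?_ hqr
      rw [enorm_eq_nnnorm]
      exact_mod_cast hz
    refine h1.comp (by fun_prop) ?_
    intro z hz
    rw [Metric.mem_ball, dist_eq_norm] at hz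
    simpa using hz
  · intro x hx
    have hx' : (x - s) ∈ Metric.eball (0:ℝ) R := by
      rw [Metric.mem_eball, edist_zero_right]
      refine lt_trans ?_ hrR
      rw [enorm_eq_nnnorm]
      have : ‖x - s‖ < r := hx
      exact_mod_cast this
    have h := hp.hasSum hx'
    rw [add_sub_cancel] at h
    have h2 := Complex.hasSum_ofReal.2 h
    have h3 : q.sum ((x:ℂ) - s) = ∑' n, ((p n (fun _ => x - s) : ℝ) : ℂ) := by
      rw [FormalMultilinearSeries.sum]
      refine tsum_congr fun n => ?_
      simp only [q, FormalMultilinearSeries.ofScalars_apply_eq, FormalMultilinearSeries.apply_eq_pow_smul_coeff]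
      push_cast
      simp [mul_comm]
    change q.sum ((x:ℂ) - s) = _
    rw [h3, h2.tsum_eq]


/-- The kernel `exp(-θ² z / 2 + θ d(z))`. -/
noncomputable def Ek (d : ℂ → ℂ) (θ : ℝ) (z : ℂ) : ℂ :=
  Complex.exp (-((θ ^ 2 / 2 : ℝ) : ℂ) * z + (θ : ℂ) * d z)

lemma sum_bd1 (n : ℕ) (x Y q : ℝ) (hx : 0 ≤ x) (hY : 0 ≤ Y) (hq : 0 < q) (hq2 : q ≤ 1 / 2)
    (h : Y ≤ q * x) :
    ∑ k ∈ Finset.range n, x ^ (n - (k + 1)) * Y ^ (k + 1) ≤ 2 * q * x ^ n := by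
  have h1 : ∀ k ∈ Finset.range n, x ^ (n - (k + 1)) * Y ^ (k + 1) ≤ x ^ n * q * (1 / 2) ^ k := by
    intro k hk
    have hk' : k + 1 ≤ n := Finset.mem_range.1 hk
    calc x ^ (n - (k + 1)) * Y ^ (k + 1) ≤ x ^ (n - (k + 1)) * (q * x) ^ (k + 1) := by gcongr
      _ = x ^ n * q * q ^ k := by
        rw [mul_pow]
        have : x ^ n = x ^ (n - (k + 1)) * x ^ (k + 1) := by
          rw [← pow_add]; congr 1; omega
        rw [this]; ring
      _ ≤ x ^ n * q * (1 / 2) ^ k := by gcongr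
  refine (Finset.sum_le_sum h1).trans ?_
  rw [← Finset.mul_sum]
  have h2 : ∑ k ∈ Finset.range n, (1 / 2 : ℝ) ^ k ≤ 2 := by
    have := Summable.sum_le_tsum (Finset.range n) (fun k _ => by positivity)
      (summable_geometric_two)
    rw [tsum_geometric_two] at this
    exact this
  have h3 : 0 ≤ x ^ n * q := by positivity
  nlinarith

lemma sum_bd2 (n : ℕ) (x Y q : ℝ) (hx : 0 ≤ x) (hY : 0 ≤ Y) (hq : 0 < q) (hq2 : q ≤ 1 / 2)
    (h : q * x ≤ Y) :
    ∑ k ∈ Finset.range n, x ^ (n - (k + 1)) * Y ^ (k + 1) ≤ (2 * Y / q) ^ n := by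
  have hx1 : x ≤ Y / q := by rw [le_div_iff₀ hq]; linarith
  have hY1 : Y ≤ Y / q := by rw [le_div_iff₀ hq]; nlinarith
  have h1 : ∀ k ∈ Finset.range n, x ^ (n - (k + 1)) * Y ^ (k + 1) ≤ (Y / q) ^ n := by
    intro k hk
    have hk' : k + 1 ≤ n := Finset.mem_range.1 hk
    calc x ^ (n - (k + 1)) * Y ^ (k + 1) ≤ (Y / q) ^ (n - (k + 1)) * (Y / q) ^ (k + 1) := by gcongr
      _ = (Y / q) ^ n := by rw [← pow_add]; congr 1; omega
  refine (Finset.sum_le_sum h1).trans ?_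
  rw [Finset.sum_const, Finset.card_range, nsmul_eq_mul, mul_div_assoc, mul_pow]
  have : (n : ℝ) ≤ 2 ^ n := by exact_mod_cast Nat.lt_two_pow_self.le
  gcongr

lemma Ek_iter (d : ℂ → ℂ) (z : ℂ) (r0 D a θ : ℝ) (hr0 : 0 < r0) (hD : 0 ≤ D) (ha : 0 < a)
    (hθ : a ≤ θ) (hd : DifferentiableOn ℂ d (Metric.closedBall z r0))
    (hl : ∀ w ∈ Metric.closedBall z r0, ‖d w - d z‖ ≤ D * ‖w - z‖) (n : ℕ) :
    ‖iteratedDeriv n (Ek d θ) z - (-((θ ^ 2 / 2 : ℝ) : ℂ)) ^ n * Ek d θ z‖ ≤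
      ‖Ek d θ z‖ * Real.exp (D * (r0 * a)) *
        ∑ k ∈ Finset.range n, (θ ^ 2 / 2) ^ (n - (k + 1)) * (n * (θ / (r0 * a))) ^ (k + 1) := by
  have hθ0 : 0 < θ := lt_of_lt_of_le ha hθ
  set x : ℝ := θ ^ 2 / 2 with hx
  have hx0 : 0 ≤ x := by positivity
  set ρ : ℝ := r0 * a / θ with hρ
  have hρ0 : 0 < ρ := by positivity
  have hρr : ρ ≤ r0 := by rw [hρ, div_le_iff₀ hθ0]; gcongr
  let h : ℂ → ℂ := fun w => Complex.exp ((θ : ℂ) * (d w - d z))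
  let e : ℂ → ℂ := fun w => Complex.exp ((θ : ℂ) * d z) * Complex.exp (-(x : ℂ) * w)
  have hE : Ek d θ = fun w => h w * e w := by
    funext w
    simp only [Ek, h, e, ← Complex.exp_add]
    congr 1; ring
  have hhd : DifferentiableOn ℂ h (Metric.closedBall z r0) := by
    intro w hw
    exact (((hd w hw).sub_const (d z)).const_mul (θ : ℂ)).cexp
  have hhc : ContDiffAt ℂ n h z := by
    have : AnalyticAt ℂ h z := hhd.analyticAt (Metric.closedBall_mem_nhds z hr0)
    exact this.contDiffAt
  have hec : ContDiffAt ℂ n e z := by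
    simp only [e]
    fun_prop
  have hh : ∀ k : ℕ, ‖iteratedDeriv k h z‖ ≤ k.factorial * Real.exp (D * (r0 * a)) / ρ ^ k := by
    intro k
    refine Complex.norm_iteratedDeriv_le_of_forall_mem_sphere_norm_le k hρ0 ?_ ?_
    · refine DifferentiableOn.diffContOnCl (hhd.mono ?_)
      exact Metric.closure_ball_subset_closedBall.trans (Metric.closedBall_subset_closedBall hρr)
    · intro w hw
      rw [Metric.mem_sphere, dist_eq_norm] at hw
      simp only [h, Complex.norm_exp]
      refine Real.exp_le_exp.2 ?_
      refine (Complex.re_le_norm _).trans ?_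
      rw [norm_mul, Complex.norm_real, Real.norm_eq_abs, abs_of_pos hθ0]
      have := hl w (by rw [Metric.mem_closedBall, dist_eq_norm, hw]; exact hρr)
      rw [hw] at this
      calc θ * ‖d w - d z‖ ≤ θ * (D * ρ) := by gcongr
        _ = D * (r0 * a) := by rw [hρ]; field_simp
  have hei : ∀ k : ℕ, iteratedDeriv k e z = (-(x : ℂ)) ^ k * e z := by
    intro k
    simp only [e]
    rw [iteratedDeriv_const_mul_field, iteratedDeriv_cexp_const_mul]
    ring
  have hhz : h z = 1 := by simp [h]
  have hEz : Ek d θ z = e z := by rw [hE]; simp [hhz]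
  rw [hEz, hE, iteratedDeriv_fun_mul hhc hec, Finset.sum_range_succ']
  simp only [Nat.choose_zero_right, iteratedDeriv_zero, hhz, Nat.sub_zero, hei]
  rw [Nat.cast_one, one_mul, one_mul, add_sub_cancel_right]
  refine (norm_sum_le _ _).trans ?_
  rw [Finset.mul_sum]
  refine Finset.sum_le_sum fun k hk => ?_
  rw [norm_mul, norm_mul, norm_mul, norm_pow, norm_neg, Complex.norm_real, Real.norm_eq_abs,
    abs_of_nonneg hx0, Complex.norm_natCast]
  have hc : ((n.choose (k + 1) : ℕ) : ℝ) * ((k + 1).factorial : ℝ) ≤ (n : ℝ) ^ (k + 1) := by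
    have h1 := Nat.descFactorial_le_pow n (k + 1)
    rw [Nat.descFactorial_eq_factorial_mul_choose] at h1
    rw [mul_comm]
    exact_mod_cast h1
  calc (n.choose (k + 1) : ℝ) * ‖iteratedDeriv (k + 1) h z‖ * (x ^ (n - (k + 1)) * ‖e z‖)
      ≤ (n.choose (k + 1) : ℝ) * ((k + 1).factorial * Real.exp (D * (r0 * a)) / ρ ^ (k + 1)) *
        (x ^ (n - (k + 1)) * ‖e z‖) := by gcongr; exact hh _
    _ = ((n.choose (k + 1) : ℝ) * (k + 1).factorial) * (θ / (r0 * a)) ^ (k + 1) *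
        (Real.exp (D * (r0 * a)) * x ^ (n - (k + 1)) * ‖e z‖) := by
        have : (θ / (r0 * a)) ^ (k + 1) = 1 / ρ ^ (k + 1) := by
          rw [hρ, div_pow, div_pow, one_div_div]
        rw [this]; ring
    _ ≤ (n : ℝ) ^ (k + 1) * (θ / (r0 * a)) ^ (k + 1) *
        (Real.exp (D * (r0 * a)) * x ^ (n - (k + 1)) * ‖e z‖) := by gcongr
    _ = _ := by rw [mul_pow]; ring

/-- Main pointwise derivative estimate. -/
lemma Ek_est (d : ℂ → ℂ) (S : Set ℂ) (r0 D a : ℝ) (hr0 : 0 < r0) (hD : 0 ≤ D) (ha : 0 < a)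
    (hd : ∀ z ∈ S, DifferentiableOn ℂ d (Metric.closedBall z r0))
    (hl : ∀ z ∈ S, ∀ w ∈ Metric.closedBall z r0, ‖d w - d z‖ ≤ D * ‖w - z‖) :
    ∃ C B : ℝ, 0 < C ∧ 0 < B ∧ ∀ z ∈ S, ∀ θ : ℝ, a ≤ θ → ∀ n : ℕ,
      ‖iteratedDeriv n (Ek d θ) z - (-((θ ^ 2 / 2 : ℝ) : ℂ)) ^ n * Ek d θ z‖ ≤
      ‖Ek d θ z‖ * (1 / 2 * (θ ^ 2 / 2) ^ n + C * (B * (n:ℝ) ^ 2) ^ n) := by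
  set r1 := r0 * a with hr1
  have hr10 : 0 < r1 := by positivity
  set q : ℝ := Real.exp (-(D * r1)) / 4 with hq
  have hq0 : 0 < q := by positivity
  have hq1 : q ≤ 1 / 4 := by
    have : Real.exp (-(D * r1)) ≤ 1 := Real.exp_le_one_iff.2 (by
      have : 0 ≤ D * r1 := by positivity
      linarith)
    rw [hq]; linarith
  refine ⟨Real.exp (D * r1), 4 / (q ^ 2 * r1 ^ 2), by positivity, by positivity, ?_⟩
  intro z hz θ hθ n
  have hθ0 : 0 < θ := lt_of_lt_of_le ha hθ
  refine (Ek_iter d z r0 D a θ hr0 hD ha hθ (hd z hz) (hl z hz) n).trans ?_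
  rw [mul_assoc, ← hr1]
  refine mul_le_mul_of_nonneg_left ?_ (norm_nonneg _)
  have hY : 0 ≤ (n : ℝ) * (θ / r1) := by positivity
  have hB : 0 ≤ Real.exp (D * r1) * (4 / (q ^ 2 * r1 ^ 2) * (n:ℝ) ^ 2) ^ n := by positivity
  rcases le_total ((n : ℝ) * (θ / r1)) (q * (θ ^ 2 / 2)) with h | h
  · have := sum_bd1 n (θ ^ 2 / 2) ((n : ℝ) * (θ / r1)) q (by positivity) hY hq0 (by linarith) h
    have h3 := mul_le_mul_of_nonneg_left this (Real.exp_pos (D * r1)).le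
    have h4 : Real.exp (D * r1) * (2 * q * (θ ^ 2 / 2) ^ n) = 1 / 2 * (θ ^ 2 / 2) ^ n := by
      have : Real.exp (D * r1) * Real.exp (-(D * r1)) = 1 := by rw [← Real.exp_add]; simp
      rw [hq]
      linear_combination (1 / 2 * (θ ^ 2 / 2) ^ n) * this
    linarith
  · have := sum_bd2 n (θ ^ 2 / 2) ((n : ℝ) * (θ / r1)) q (by positivity) hY hq0 (by linarith) h
    have hθn : q * r1 * θ ≤ 2 * n := by
      have h5 : q * (θ ^ 2 / 2) * r1 ≤ n * θ := by
        calc q * (θ ^ 2 / 2) * r1 ≤ ((n : ℝ) * (θ / r1)) * r1 := by gcongr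
          _ = n * θ := by field_simp
      have : (q * r1 * θ) * θ ≤ (2 * n) * θ := by nlinarith
      exact le_of_mul_le_mul_right this hθ0
    have h6 : 2 * ((n : ℝ) * (θ / r1)) / q ≤ 4 / (q ^ 2 * r1 ^ 2) * (n:ℝ) ^ 2 := by
      rw [show 2 * ((n : ℝ) * (θ / r1)) / q = (2 * n * (q * r1 * θ)) / (q ^ 2 * r1 ^ 2) by
        field_simp]
      rw [show 4 / (q ^ 2 * r1 ^ 2) * (n:ℝ) ^ 2 = (2 * n * (2 * n)) / (q ^ 2 * r1 ^ 2) by ring]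
      gcongr
    have h7 : (2 * ((n : ℝ) * (θ / r1)) / q) ^ n ≤ (4 / (q ^ 2 * r1 ^ 2) * (n:ℝ) ^ 2) ^ n := by
      gcongr
    have h3 := mul_le_mul_of_nonneg_left (this.trans h7) (Real.exp_pos (D * r1)).le
    have : 0 ≤ 1 / 2 * (θ ^ 2 / 2) ^ n := by positivity
    linarith


/-- The disc tangent to the imaginary axis at `0`. -/
def Dl (δ : ℝ) : Set ℂ := {z | ‖z‖ ^ 2 < δ * z.re}

lemma Dl_eq_ball (δ : ℝ) (hδ : 0 < δ) : Dl δ = Metric.ball ((δ / 2 : ℝ) : ℂ) (δ / 2) := by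
  ext z
  rw [Metric.mem_ball, dist_eq_norm, ← sq_lt_sq₀ (norm_nonneg _) (by positivity)]
  simp only [Dl, mem_ofPred_eq, ← Complex.normSq_eq_norm_sq, Complex.normSq_apply, Complex.sub_re,
    Complex.sub_im, Complex.ofReal_re, Complex.ofReal_im]
  constructor <;> intro h <;> nlinarith

lemma Dl_open (δ : ℝ) (hδ : 0 < δ) : IsOpen (Dl δ) := by
  rw [Dl_eq_ball δ hδ]; exact Metric.isOpen_ball

lemma Dl_convex (δ : ℝ) (hδ : 0 < δ) : Convex ℝ (Dl δ) := by
  rw [Dl_eq_ball δ hδ]; exact convex_ball _ _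

lemma Dl_re_pos {δ : ℝ} (hδ : 0 < δ) {z : ℂ} (hz : z ∈ Dl δ) : 0 < z.re := by
  have h : ‖z‖ ^ 2 < δ * z.re := hz
  have : 0 < δ * z.re := lt_of_le_of_lt (by positivity) h
  exact (pos_iff_pos_of_mul_pos this).1 hδ

lemma Dl_norm_lt {δ : ℝ} (hδ : 0 < δ) {z : ℂ} (hz : z ∈ Dl δ) : ‖z‖ < δ := by
  have h : ‖z‖ ^ 2 < δ * z.re := hz
  have h1 := Complex.re_le_norm z
  have h2 := Dl_re_pos hδ hz
  have : ‖z‖ * ‖z‖ < δ * ‖z‖ := by nlinarith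
  exact lt_of_mul_lt_mul_right this (norm_nonneg _)

lemma Dl_real {δ : ℝ} {s : ℝ} (h0 : 0 < s) (h1 : s < δ) : (s : ℂ) ∈ Dl δ := by
  change ‖(s:ℂ)‖ ^ 2 < δ * (s:ℂ).re
  rw [Complex.norm_real, Real.norm_eq_abs, sq_abs, Complex.ofReal_re]
  nlinarith

lemma Dl_smul {δ : ℝ} (hδ : 0 < δ) {z : ℂ} (hz : z ∈ Dl δ) {t : ℝ} (h0 : 0 < t) (h1 : t ≤ 1) :
    (t : ℂ) * z ∈ Dl δ := by
  have h2 := Dl_re_pos hδ hz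
  have h : ‖z‖ ^ 2 < δ * z.re := hz
  change ‖(t:ℂ) * z‖ ^ 2 < δ * ((t:ℂ) * z).re
  rw [norm_mul, Complex.norm_real, Real.norm_eq_abs, mul_pow, sq_abs, Complex.re_ofReal_mul]
  have h3 : t ^ 2 * ‖z‖ ^ 2 < t ^ 2 * (δ * z.re) := by gcongr
  have h4 : t ^ 2 * (δ * z.re) ≤ t * (δ * z.re) := by
    have : 0 < δ * z.re := by positivity
    gcongr
    nlinarith
  linarith

/-- Uniqueness: exponentially flat functions on a tangent disc vanish. -/
lemma flat_PL (f : ℂ → ℂ) (δ C c : ℝ) (hδ : 0 < δ) (hC : 0 ≤ C) (hc : 0 < c)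
    (hf : DifferentiableOn ℂ f (Dl δ))
    (hb : ∀ z ∈ Dl δ, ‖f z‖ ≤ C * Real.exp (-c / ‖z‖)) :
    ∃ r' > 0, ∀ s ∈ Ioo 0 r', f (s : ℝ) = 0 := by
  set κ : ℝ := max 1 (2 / δ) with hκ
  have hκ1 : 1 ≤ κ := le_max_left _ _
  have hκ2 : 2 / δ ≤ κ := le_max_right _ _
  have hκδ : 2 ≤ δ * κ := by rw [div_le_iff₀ hδ] at hκ2; linarith
  have hmem : ∀ v : ℂ, κ / 2 < v.re → v⁻¹ ∈ Dl δ := by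
    intro v hv
    have hv0 : v ≠ 0 := by rintro rfl; simp at hv; linarith
    change ‖v⁻¹‖ ^ 2 < δ * (v⁻¹).re
    rw [Complex.inv_re, norm_inv, inv_pow, ← Complex.normSq_eq_norm_sq v, ← mul_div_assoc,
      inv_eq_one_div]
    have : 0 < Complex.normSq v := Complex.normSq_pos.2 hv0
    gcongr
    nlinarith
  set u : ℝ := c / Real.pi with hu
  have hu0 : 0 < u := by positivity
  let G : ℂ → ℂ := fun w => f ((w + κ)⁻¹) * Complex.exp (-(u : ℂ) * ((w + κ) * Complex.log (w + κ)))
  have hre : ∀ w : ℂ, (w + (κ:ℂ)).re = w.re + κ := fun w => by simp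
  have hGd : DifferentiableOn ℂ G {w | -(κ / 2) < w.re} := by
    intro w hw
    have hw' : -(κ / 2) < w.re := hw
    have h1 : κ / 2 < (w + (κ:ℂ)).re := by rw [hre]; linarith
    have h0 : w + (κ:ℂ) ≠ 0 := by intro h; rw [h] at h1; simp at h1; linarith
    have hsl : w + (κ:ℂ) ∈ Complex.slitPlane := Or.inl (by linarith)
    refine DifferentiableAt.differentiableWithinAt ?_
    have hfa : DifferentiableAt ℂ f ((w + κ)⁻¹) :=
      hf.differentiableAt ((Dl_open δ hδ).mem_nhds (hmem _ h1))
    have hi : DifferentiableAt ℂ (fun w : ℂ => (w + κ)⁻¹) w := by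
      fun_prop (disch := assumption)
    refine (hfa.comp w hi).mul ?_
    fun_prop (disch := assumption)
  have hGb : ∀ w : ℂ, 0 ≤ w.re → ‖G w‖ ≤ C * Real.exp (-u * ((w.re + κ) * Real.log ‖w + κ‖)) := by
    intro w hw
    have h1 : κ / 2 < (w + (κ:ℂ)).re := by rw [hre]; linarith
    have hfb := hb _ (hmem _ h1)
    rw [norm_inv, div_inv_eq_mul] at hfb
    simp only [G]
    rw [norm_mul, Complex.norm_exp]
    refine (mul_le_mul_of_nonneg_right hfb (Real.exp_pos _).le).trans ?_
    rw [mul_assoc, ← Real.exp_add]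
    refine mul_le_mul_of_nonneg_left (Real.exp_le_exp.2 ?_) hC
    have e : (-(u : ℂ) * ((w + κ) * Complex.log (w + κ))).re =
        -u * ((w.re + κ) * Real.log ‖w + κ‖ - (w + κ).im * (w + κ).arg) := by
      rw [← Complex.ofReal_neg, Complex.re_ofReal_mul, Complex.mul_re, Complex.log_re,
        Complex.log_im, hre]
    rw [e]
    have h2 : (w + (κ:ℂ)).im * (w + (κ:ℂ)).arg ≤ ‖w + κ‖ * Real.pi := by
      refine (le_abs_self _).trans ?_
      rw [abs_mul]
      gcongr
      · exact Complex.abs_im_le_norm _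
      · exact Complex.abs_arg_le_pi _
    have h3 : u * ((w + (κ:ℂ)).im * (w + (κ:ℂ)).arg) ≤ c * ‖w + κ‖ := by
      calc _ ≤ u * (‖w + κ‖ * Real.pi) := by gcongr
        _ = c * ‖w + κ‖ := by rw [hu]; field_simp
    linarith
  have hnorm : ∀ w : ℂ, 0 ≤ w.re → 1 ≤ ‖w + (κ:ℂ)‖ := by
    intro w hw
    have := Complex.re_le_norm (w + κ)
    rw [hre] at this; linarith
  have hGC : ∀ w : ℂ, 0 ≤ w.re → ‖G w‖ ≤ C := by
    intro w hw
    refine (hGb w hw).trans (mul_le_of_le_one_right hC (Real.exp_le_one_iff.2 ?_))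
    have := Real.log_nonneg (hnorm w hw)
    have h2 : 0 ≤ w.re + κ := by linarith
    have : 0 ≤ u * ((w.re + κ) * Real.log ‖w + κ‖) := by positivity
    linarith
  have key : EqOn G 0 {z : ℂ | 0 ≤ z.re} := by
    refine PhragmenLindelof.eq_zero_on_right_half_plane_of_superexponential_decay ?_ ?_ ?_ ?_
    · refine DifferentiableOn.diffContOnCl (hGd.mono ?_)
      rw [Complex.closure_setOfPred_lt_re]
      intro w hw
      have : 0 ≤ w.re := hw
      change -(κ / 2) < w.re
      linarith
    · refine ⟨1, by norm_num, 0, ?_⟩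
      refine Asymptotics.IsBigO.of_bound C ?_
      refine Filter.mem_inf_of_right ?_
      intro w hw
      have hw : 0 < w.re := hw
      simpa using hGC w hw.le
    · intro n
      have hlim : Tendsto (fun x : ℝ => C * Real.exp (-x)) atTop (𝓝 0) := by
        have := (Real.tendsto_exp_neg_atTop_nhds_zero).const_mul C
        simpa using this
      have hlog : ∀ᶠ x : ℝ in atTop, (n + 1) / u ≤ Real.log (x + κ) :=
        (Real.tendsto_log_atTop.comp (tendsto_atTop_add_const_right _ κ tendsto_id)).eventually_ge_atTop _
      refine squeeze_zero' (Eventually.of_forall fun x => by positivity) ?_ hlim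
      filter_upwards [hlog, eventually_ge_atTop 0] with x hx hx0
      have h1 := hGb x (by simpa using hx0)
      have h2 : ‖(x:ℂ) + κ‖ = x + κ := by
        rw [← Complex.ofReal_add, Complex.norm_real, Real.norm_eq_abs, abs_of_nonneg (by linarith)]
      rw [h2, Complex.ofReal_re] at h1
      calc Real.exp x ^ n * ‖G x‖ ≤ Real.exp x ^ n * (C * Real.exp (-u * ((x + κ) * Real.log (x + κ)))) := by
            gcongr
        _ = C * Real.exp (n * x + -u * ((x + κ) * Real.log (x + κ))) := by
            rw [Real.exp_add, ← Real.exp_nat_mul]; ring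
        _ ≤ C * Real.exp (-x) := by
            gcongr
            rw [div_le_iff₀ hu0] at hx
            have : (x + κ) * (n + 1) ≤ (x + κ) * (Real.log (x + κ) * u) := by
              gcongr
            have : 0 ≤ κ * (n + 1) := by positivity
            nlinarith
    · exact ⟨C, fun x => hGC _ (by simp)⟩
  refine ⟨1 / κ, by positivity, fun s hs => ?_⟩
  have hs0 : 0 < s := hs.1
  have h1 : κ ≤ s⁻¹ := by
    have := hs.2
    rw [lt_div_iff₀ (by linarith)] at this
    rw [← one_div, le_div_iff₀ hs0]; linarith
  have h2 := key (show ((s⁻¹ - κ : ℝ) : ℂ) ∈ {z : ℂ | 0 ≤ z.re} by simpa using h1)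
  simp only [G, Pi.zero_apply, mul_eq_zero, Complex.exp_ne_zero, or_false] at h2
  push_cast at h2
  rw [sub_add_cancel, inv_inv] at h2
  exact h2


lemma flat_step (g : ℂ → ℂ) (δ K : ℝ) (k : ℕ) (hδ : 0 < δ) (hK : 0 ≤ K)
    (hg : DifferentiableOn ℂ g (Dl δ)) (hb : ∀ w ∈ Dl δ, ‖deriv g w‖ ≤ K * ‖w‖ ^ k)
    (hz : ∀ η > 0, ∃ s ∈ Ioo 0 η, g (s : ℝ) = 0) :
    ∀ z ∈ Dl δ, ‖g z‖ ≤ K * ‖z‖ ^ (k + 1) / (k + 1) := by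
  have hda : ∀ w ∈ Dl δ, DifferentiableAt ℂ g w := fun w hw =>
    hg.differentiableAt ((Dl_open δ hδ).mem_nhds hw)
  have hlip : ∀ z ∈ Dl δ, ‖g z‖ ≤ K * δ ^ k * ‖z‖ := by
    intro z hz'
    refine le_of_forall_pos_le_add fun e he => ?_
    obtain ⟨s, hs, hs0⟩ := hz (min δ (e / (K * δ ^ k + 1))) (by positivity)
    have hsD : (s : ℂ) ∈ Dl δ := Dl_real hs.1 (lt_of_lt_of_le hs.2 (min_le_left _ _))
    have h1 := Convex.norm_image_sub_le_of_norm_deriv_le (f := g) (C := K * δ ^ k) hda (fun w hw => by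
      refine (hb w hw).trans ?_
      have := (Dl_norm_lt hδ hw).le
      gcongr) (Dl_convex δ hδ) hsD hz'
    rw [hs0, sub_zero] at h1
    have h2 : ‖z - s‖ ≤ ‖z‖ + s := by
      refine (norm_sub_le _ _).trans ?_
      rw [Complex.norm_real, Real.norm_eq_abs, abs_of_pos hs.1]
    have h3 : K * δ ^ k * s ≤ e := by
      have h4 : s ≤ e / (K * δ ^ k + 1) := (hs.2.trans_le (min_le_right _ _)).le
      have h5 : 0 ≤ K * δ ^ k := by positivity
      rw [le_div_iff₀ (by positivity)] at h4
      nlinarith [hs.1]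
    calc ‖g z‖ ≤ K * δ ^ k * ‖z - s‖ := h1
      _ ≤ K * δ ^ k * (‖z‖ + s) := by gcongr
      _ ≤ _ := by linarith
  intro z hzD
  refine le_of_forall_pos_le_add fun e he => ?_
  set L : ℝ := K * δ ^ k * ‖z‖ with hL
  have hL0 : 0 ≤ L := by positivity
  set τ : ℝ := min 1 (e / (L + 1)) with hτ
  have hτ0 : 0 < τ := by positivity
  have hτ1 : τ ≤ 1 := min_le_left _ _
  have hLτ : L * τ ≤ e := by
    have h4 : τ ≤ e / (L + 1) := min_le_right _ _
    rw [le_div_iff₀ (by positivity)] at h4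
    nlinarith
  have hin : ∀ t ∈ Icc τ 1, (t : ℂ) * z ∈ Dl δ := fun t ht =>
    Dl_smul hδ hzD (lt_of_lt_of_le hτ0 ht.1) ht.2
  have hder : ∀ t ∈ Icc τ 1, HasDerivAt (fun t : ℝ => g (t * z)) (deriv g (t * z) * z) t := by
    intro t ht
    have h1 := (hda _ (hin t ht)).hasDerivAt
    have h2 : HasDerivAt (fun w : ℂ => w * z) z (t : ℂ) := by
      simpa using (hasDerivAt_id (t:ℂ)).mul_const z
    exact (h1.comp (t : ℂ) h2).comp_ofReal
  have hB : ∀ t : ℝ, HasDerivAt (fun t : ℝ => e + K * ‖z‖ ^ (k + 1) * t ^ (k + 1) / (k + 1))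
      (K * ‖z‖ ^ (k + 1) * t ^ k) t := by
    intro t
    have h1 := (((hasDerivAt_pow (k + 1) t).const_mul (K * ‖z‖ ^ (k + 1))).div_const ((k:ℝ) + 1)).const_add e
    have hk : ((k:ℝ) + 1) ≠ 0 := by positivity
    have e2 : K * ‖z‖ ^ (k + 1) * (((k + 1 : ℕ) : ℝ) * t ^ (k + 1 - 1)) / ((k:ℝ) + 1) =
        K * ‖z‖ ^ (k + 1) * t ^ k := by
      rw [Nat.add_sub_cancel]
      push_cast
      field_simp
    rw [e2] at h1
    exact h1
  have key := image_norm_le_of_norm_deriv_right_le_deriv_boundary (f := fun t : ℝ => g (t * z))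
    (f' := fun t : ℝ => deriv g (t * z) * z) (a := τ) (b := 1)
    (fun t ht => (hder t ht).continuousAt.continuousWithinAt)
    (fun t ht => (hder t ⟨ht.1, ht.2.le⟩).hasDerivWithinAt)
    (B := fun t : ℝ => e + K * ‖z‖ ^ (k + 1) * t ^ (k + 1) / (k + 1)) ?_ hB ?_ (right_mem_Icc.2 hτ1)
  · simpa [add_comm] using key
  · have h1 := hlip _ (hin τ (left_mem_Icc.2 hτ1))
    rw [norm_mul, Complex.norm_real, Real.norm_eq_abs, abs_of_pos hτ0] at h1
    have : 0 ≤ K * ‖z‖ ^ (k + 1) * τ ^ (k + 1) / (k + 1) := by positivity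
    have e1 : K * δ ^ k * (τ * ‖z‖) = L * τ := by rw [hL]; ring
    change ‖g (τ * z)‖ ≤ e + K * ‖z‖ ^ (k + 1) * τ ^ (k + 1) / (k + 1)
    linarith
  · intro t ht
    have h1 := hb _ (hin t ⟨ht.1, ht.2.le⟩)
    have ht0 : 0 ≤ t := hτ0.le.trans ht.1
    rw [norm_mul, Complex.norm_real, Real.norm_eq_abs, abs_of_nonneg ht0] at h1
    change ‖deriv g (t * z) * z‖ ≤ _
    rw [norm_mul]
    calc ‖deriv g (t * z)‖ * ‖z‖ ≤ K * (t * ‖z‖) ^ k * ‖z‖ := by gcongr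
      _ = _ := by rw [mul_pow]; ring

lemma flat_taylor (f : ℂ → ℂ) (δ K : ℝ) (n : ℕ) (hδ : 0 < δ) (hK : 0 ≤ K)
    (hg : ∀ m, DifferentiableOn ℂ (iteratedDeriv m f) (Dl δ))
    (hb : ∀ w ∈ Dl δ, ‖iteratedDeriv n f w‖ ≤ K)
    (hz : ∀ m : ℕ, ∀ η > 0, ∃ s ∈ Ioo 0 η, iteratedDeriv m f (s : ℝ) = 0) :
    ∀ z ∈ Dl δ, ‖f z‖ ≤ K * ‖z‖ ^ n / n.factorial := by
  have key : ∀ k ≤ n, ∀ z ∈ Dl δ, ‖iteratedDeriv (n - k) f z‖ ≤ K * ‖z‖ ^ k / k.factorial := by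
    intro k
    induction k with
    | zero => intro _ z hz'; simpa using hb z hz'
    | succ k ih =>
      intro hk z hz'
      have h1 := flat_step (iteratedDeriv (n - (k + 1)) f) δ (K / k.factorial) k hδ (by positivity)
        (hg _) (fun w hw => by
          rw [← iteratedDeriv_succ, show n - (k + 1) + 1 = n - k by omega]
          refine (ih (by omega) w hw).trans (le_of_eq (by ring))) (hz _) z hz'
      refine h1.trans (le_of_eq ?_)
      rw [Nat.factorial_succ]
      push_cast
      field_simp
  intro z hz'
  simpa using key n le_rfl z hz'

lemma flat_decay (f : ℂ → ℂ) (δ C B : ℝ) (hδ : 0 < δ) (hC : 0 ≤ C) (hB : 0 < B)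
    (hg : ∀ m, DifferentiableOn ℂ (iteratedDeriv m f) (Dl δ))
    (hb : ∀ n : ℕ, ∀ w ∈ Dl δ, ‖iteratedDeriv n f w‖ ≤ C * (B * (n:ℝ) ^ 2) ^ n)
    (hz : ∀ m : ℕ, ∀ η > 0, ∃ s ∈ Ioo 0 η, iteratedDeriv m f (s : ℝ) = 0) :
    ∃ C' c : ℝ, 0 ≤ C' ∧ 0 < c ∧ ∀ z ∈ Dl δ, ‖f z‖ ≤ C' * Real.exp (-c / ‖z‖) := by
  set E := Real.exp 1 with hE
  have hE0 : 0 < E := Real.exp_pos 1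
  refine ⟨C * E, 1 / (B * E ^ 2), by positivity, by positivity, fun z hzD => ?_⟩
  have hz0 : 0 < ‖z‖ := by
    have := Dl_re_pos hδ hzD
    rw [norm_pos_iff]; rintro rfl; simp at this
  set X : ℝ := 1 / (B * E ^ 2) / ‖z‖ with hX
  have hX0 : 0 ≤ X := by positivity
  set n : ℕ := ⌊X⌋₊ with hn
  have hn1 : (n : ℝ) ≤ X := Nat.floor_le hX0
  have hn2 : X < n + 1 := Nat.lt_floor_add_one X
  have h1 := flat_taylor f δ (C * (B * (n:ℝ) ^ 2) ^ n) n hδ (by positivity) hg (hb n) hz z hzD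
  have h2 : (n : ℝ) ^ n / n.factorial ≤ E ^ n := by
    have := Real.pow_div_factorial_le_exp (n : ℝ) (by positivity) n
    rwa [show Real.exp (n:ℝ) = E ^ n by rw [hE, ← Real.exp_nat_mul, mul_one]] at this
  have h3 : B * E * n * ‖z‖ ≤ E⁻¹ := by
    have : (n : ℝ) * ‖z‖ ≤ 1 / (B * E ^ 2) := by
      rw [hX, le_div_iff₀ hz0] at hn1; exact hn1
    calc B * E * n * ‖z‖ = B * E * (n * ‖z‖) := by ring
      _ ≤ B * E * (1 / (B * E ^ 2)) := by gcongr
      _ = E⁻¹ := by field_simp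
  calc ‖f z‖ ≤ C * (B * (n:ℝ) ^ 2) ^ n * ‖z‖ ^ n / n.factorial := h1
    _ = C * (B * n * ‖z‖) ^ n * ((n : ℝ) ^ n / n.factorial) := by
      rw [mul_pow, mul_pow, mul_pow, ← pow_mul, mul_comm 2 n, pow_mul]; ring
    _ ≤ C * (B * n * ‖z‖) ^ n * E ^ n := by gcongr
    _ = C * (B * E * n * ‖z‖) ^ n := by rw [mul_assoc, ← mul_pow]; ring_nf
    _ ≤ C * E⁻¹ ^ n := by gcongr
    _ = C * Real.exp (-n) := by
      rw [hE, ← Real.exp_neg, ← Real.exp_nat_mul]; ring_nf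
    _ ≤ C * Real.exp (1 + -X) := by gcongr; linarith
    _ = C * E * Real.exp (-(1 / (B * E ^ 2)) / ‖z‖) := by
      rw [Real.exp_add, ← hE, hX, neg_div]; ring

lemma zeros_iter (f : ℂ → ℂ) (δ : ℝ) (hδ : 0 < δ)
    (hg : ∀ m, DifferentiableOn ℂ (iteratedDeriv m f) (Dl δ))
    (him : ∀ s ∈ Ioo 0 δ, (f (s : ℝ)).im = 0)
    (hz : ∀ η > 0, ∃ s ∈ Ioo 0 η, f (s : ℝ) = 0) :
    ∀ m : ℕ, ∀ η > 0, ∃ s ∈ Ioo 0 η, iteratedDeriv m f (s : ℝ) = 0 := by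
  have hd : ∀ m : ℕ, ∀ s ∈ Ioo 0 δ, HasDerivAt (iteratedDeriv m f) (iteratedDeriv (m + 1) f (s:ℝ)) (s:ℂ) := by
    intro m s hs
    rw [iteratedDeriv_succ]
    exact ((hg m).differentiableAt ((Dl_open δ hδ).mem_nhds (Dl_real hs.1 hs.2))).hasDerivAt
  have him' : ∀ m : ℕ, ∀ s ∈ Ioo 0 δ, (iteratedDeriv m f (s : ℝ)).im = 0 := by
    intro m
    induction m with
    | zero => simpa using him
    | succ m ih =>
      intro s hs
      have h1 := ((hd m s hs).const_mul (-Complex.I)).real_of_complex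
      have e : (fun x : ℝ => (-Complex.I * iteratedDeriv m f x).re) =ᶠ[𝓝 s] fun _ => (0:ℝ) := by
        filter_upwards [Ioo_mem_nhds hs.1 hs.2] with x hx
        simpa using ih x hx
      have h2 := h1.unique ((hasDerivAt_const s (0:ℝ)).congr_of_eventuallyEq e)
      simpa using h2
  intro m
  induction m with
  | zero => simpa using hz
  | succ m ih =>
    intro η hη
    obtain ⟨s2, hs2, h2⟩ := ih (min η δ) (lt_min hη hδ)
    obtain ⟨s1, hs1, h1⟩ := ih s2 hs2.1
    have hsub : ∀ x ∈ Icc s1 s2, x ∈ Ioo 0 δ := fun x hx =>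
      ⟨lt_of_lt_of_le hs1.1 hx.1, lt_of_le_of_lt hx.2 (lt_of_lt_of_le hs2.2 (min_le_right _ _))⟩
    have hdr : ∀ x ∈ Icc s1 s2, HasDerivAt (fun x : ℝ => (iteratedDeriv m f x).re)
        (iteratedDeriv (m + 1) f (x:ℝ)).re x := fun x hx => (hd m x (hsub x hx)).real_of_complex
    obtain ⟨x, hx, hx0⟩ := exists_hasDerivAt_eq_zero hs1.2
      (fun x hx => (hdr x hx).continuousAt.continuousWithinAt) (by rw [h1, h2])
      (fun x hx => hdr x ⟨hx.1.le, hx.2.le⟩)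
    refine ⟨x, ⟨hs1.1.trans hx.1, hx.2.trans (lt_of_lt_of_le hs2.2 (min_le_left _ _))⟩, ?_⟩
    exact Complex.ext hx0 (him' _ x (hsub x ⟨hx.1.le, hx.2.le⟩))


lemma d_geom (d : ℂ → ℂ) (r : ℝ) (hr : 0 < r) (hd : DifferentiableOn ℂ d (Metric.ball 0 r))
    (hd0 : d 0 = 0) (hreal : ∀ x : ℝ, |x| < r → (d x).im = 0) :
    ∃ δ r0 D M : ℝ, 0 < δ ∧ δ < r ∧ 0 < r0 ∧ 0 ≤ D ∧ 0 < M ∧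
      (∀ z ∈ Dl δ, Metric.closedBall z r0 ⊆ Metric.ball 0 r) ∧
      (∀ z ∈ Dl δ, ∀ w ∈ Metric.closedBall z r0, ‖d w - d z‖ ≤ D * ‖w - z‖) ∧
      (∀ z ∈ Dl δ, (d z).re ≤ M * z.re) := by
  have hcb : Metric.closedBall (0:ℂ) (r / 2) ⊆ Metric.ball 0 r :=
    Metric.closedBall_subset_ball (by linarith)
  have hcomp : IsCompact (Metric.closedBall (0:ℂ) (r / 2)) := isCompact_closedBall _ _
  have hn : Metric.ball (0:ℂ) r ∈ 𝓝 (0:ℂ) := Metric.ball_mem_nhds _ hr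
  obtain ⟨D, hD⟩ := hcomp.exists_bound_of_continuousOn
    ((hd.deriv Metric.isOpen_ball).continuousOn.mono hcb)
  have hD0 : 0 ≤ D := (norm_nonneg _).trans (hD 0 (by simp; positivity))
  have hg := (Complex.differentiableOn_dslope (c := 0) hn).2 hd
  have hh := (Complex.differentiableOn_dslope (c := 0) hn).2 hg
  obtain ⟨K, hK⟩ := hcomp.exists_bound_of_continuousOn (hh.continuousOn.mono hcb)
  have hK0 : 0 ≤ K := (norm_nonneg _).trans (hK 0 (by simp; positivity))
  have him : (deriv d 0).im = 0 := by
    have h0 : HasDerivAt d (deriv d 0) ((0:ℝ):ℂ) := by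
      rw [Complex.ofReal_zero]
      exact (hd.differentiableAt hn).hasDerivAt
    have h1 := (h0.const_mul (-Complex.I)).real_of_complex
    have e : (fun x : ℝ => (-Complex.I * d x).re) =ᶠ[𝓝 0] fun _ => (0:ℝ) := by
      filter_upwards [Metric.ball_mem_nhds (0:ℝ) hr] with x hx
      have : |x| < r := by simpa using hx
      simpa using hreal x this
    have h2 := h1.unique ((hasDerivAt_const (0:ℝ) (0:ℝ)).congr_of_eventuallyEq e)
    simpa using h2
  have hnorm : ∀ z ∈ Dl (r / 4), ‖z‖ < r / 4 := fun z hz => Dl_norm_lt (by positivity) hz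
  have hsub : ∀ z ∈ Dl (r / 4), Metric.closedBall z (r / 4) ⊆ Metric.closedBall 0 (r / 2) := by
    intro z hz
    refine Metric.closedBall_subset_closedBall' ?_
    rw [dist_zero_right]
    linarith [hnorm z hz]
  refine ⟨r / 4, r / 4, D, |(deriv d 0).re| + K * (r / 4) + 1, by positivity, by linarith,
    by positivity, hD0, by positivity, fun z hz => (hsub z hz).trans hcb, ?_, ?_⟩
  · intro z hz w hw
    exact Convex.norm_image_sub_le_of_norm_deriv_le
      (fun v hv => hd.differentiableAt (Metric.isOpen_ball.mem_nhds (hcb hv))) hD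
      (convex_closedBall _ _) (hsub z hz (Metric.mem_closedBall_self (by positivity))) (hsub z hz hw)
  · intro z hz
    have h1 := sub_smul_dslope d 0 z
    have h2 := sub_smul_dslope (dslope d 0) 0 z
    rw [dslope_same, sub_zero, smul_eq_mul] at h2
    rw [sub_zero, smul_eq_mul, hd0, sub_zero] at h1
    have h3 : d z = deriv d 0 * z + z * z * dslope (dslope d 0) 0 z := by
      rw [← h1, show dslope d 0 z = deriv d 0 + z * dslope (dslope d 0) 0 z by rw [h2]; ring]
      ring
    have hzr := Dl_re_pos (by positivity) hz
    have hz2 : ‖z‖ ^ 2 < r / 4 * z.re := hz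
    have h4 : (z * z * dslope (dslope d 0) 0 z).re ≤ K * ‖z‖ ^ 2 := by
      refine (Complex.re_le_norm _).trans ?_
      rw [norm_mul, norm_mul]
      have := hK z (hsub z hz (Metric.mem_closedBall_self (by positivity)))
      calc ‖z‖ * ‖z‖ * ‖dslope (dslope d 0) 0 z‖ ≤ ‖z‖ * ‖z‖ * K := by gcongr
        _ = _ := by ring
    have h5 : (deriv d 0 * z).re = (deriv d 0).re * z.re := by rw [Complex.mul_re, him]; ring
    have h6 : (deriv d 0).re * z.re ≤ |(deriv d 0).re| * z.re := by
      gcongr; exact le_abs_self _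
    have h7 : K * ‖z‖ ^ 2 ≤ K * (r / 4 * z.re) := by gcongr
    rw [h3, Complex.add_re, h5]
    nlinarith

lemma Ek_norm (d : ℂ → ℂ) (θ : ℝ) (z : ℂ) :
    ‖Ek d θ z‖ = Real.exp (-(θ ^ 2 / 2) * z.re + θ * (d z).re) := by
  rw [Ek, Complex.norm_exp, Complex.add_re, ← Complex.ofReal_neg, Complex.re_ofReal_mul,
    Complex.re_ofReal_mul]

lemma Ek_real (d : ℂ → ℂ) (θ : ℝ) (z : ℂ) (hz : z.im = 0) (hd : (d z).im = 0) :
    Ek d θ z = ((‖Ek d θ z‖ : ℝ) : ℂ) := by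
  rw [Ek_norm, Ek, Complex.ofReal_exp]
  congr 1
  refine Complex.ext ?_ ?_ <;> simp [hz, hd, -neg_mul]

lemma Ek_bound (d : ℂ → ℂ) (θ : ℝ) (z : ℂ) (M δ : ℝ) (hθ : 0 ≤ θ) (hz0 : 0 ≤ z.re)
    (hz : z.re ≤ δ) (hM : (d z).re ≤ M * z.re) : ‖Ek d θ z‖ ≤ Real.exp (δ * (M ^ 2 / 2)) := by
  rw [Ek_norm]
  refine Real.exp_le_exp.2 ?_
  have h1 : θ * (d z).re ≤ θ * (M * z.re) := by gcongr
  have h2 : z.re * (M ^ 2 / 2) ≤ δ * (M ^ 2 / 2) := by gcongr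
  nlinarith [mul_nonneg hz0 (sq_nonneg (θ - M))]

lemma Ek_PC (p : Measure ℝ) (a : ℝ) (hp : p (Ici a)ᶜ = 0) (d : ℂ → ℂ) (U : Set ℂ)
    (hd : DifferentiableOn ℂ d U)
    (hb : ∀ z ∈ U, ∃ ρ > 0, ∃ C : ℝ, ∀ θ ≥ a, ∀ w ∈ Metric.ball z ρ, ‖Ek d θ w‖ ≤ C) :
    PC p U (fun z θ => Ek d θ z) := by
  have hae : ∀ᵐ θ ∂p, a ≤ θ := hp
  refine ⟨?_, ?_, ?_⟩
  · intro z _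
    refine Continuous.aestronglyMeasurable ?_
    simp only [Ek]
    fun_prop
  · refine Eventually.of_forall fun θ z hz => ?_
    simp only [Ek]
    exact (((differentiableWithinAt_id).const_mul _).add ((hd z hz).const_mul _)).cexp
  · intro z hz
    obtain ⟨ρ, hρ, C, hC⟩ := hb z hz
    refine ⟨ρ, hρ, C, ?_⟩
    filter_upwards [hae] with θ hθ using hC θ hθ


lemma moment_at_zero (p : Measure ℝ) [IsFiniteMeasure p] (a : ℝ)
    (hp : p (Ici a)ᶜ = 0) (d : ℂ → ℂ) (δ A C' : ℝ) (hδ : 0 < δ)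
    (hA : ∀ z ∈ Dl δ, ∀ θ ≥ a, ‖Ek d θ z‖ ≤ A) (hPC : PC p (Dl δ) (fun z θ => Ek d θ z))
    (n : ℕ) (hC' : 0 ≤ C')
    (hest : ∀ z ∈ Dl δ, ∀ θ ≥ a,
      ‖iteratedDeriv n (Ek d θ) z - (-((θ ^ 2 / 2 : ℝ) : ℂ)) ^ n * Ek d θ z‖ ≤
      ‖Ek d θ z‖ * (1 / 2 * (θ ^ 2 / 2) ^ n + C'))
    (s : ℝ) (hs : s ∈ Ioo 0 δ) (hds : (d s).im = 0)
    (hz : ∫ θ, iteratedDeriv n (Ek d θ) s ∂p = 0) :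
    ∫⁻ θ, ENNReal.ofReal ((θ ^ 2 / 2) ^ n * ‖Ek d θ s‖) ∂p ≤
      ENNReal.ofReal (2 * (A * C') * p.real univ) := by
  have hae : ∀ᵐ θ ∂p, a ≤ θ := hp
  have hsD : (s : ℂ) ∈ Dl δ := Dl_real hs.1 hs.2
  have hIi : Integrable (fun θ => iteratedDeriv n (Ek d θ) s) p :=
    (hPC.iter (Dl_open δ hδ) n).integrable hsD
  have hEmeas : AEStronglyMeasurable (fun θ => Ek d θ s) p := hPC.meas _ hsD
  have hI : Integrable (fun θ => (θ ^ 2 / 2) ^ n * ‖Ek d θ s‖) p := by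
    refine Integrable.mono' (g := fun θ => 2 * (‖iteratedDeriv n (Ek d θ) s‖ + A * C'))
      ((hIi.norm.add (integrable_const _)).const_mul 2) ?_ ?_
    · exact (Continuous.aestronglyMeasurable (by fun_prop)).mul hEmeas.norm
    · filter_upwards [hae] with θ hθ
      have h1 := hest _ hsD θ hθ
      have h2 := norm_sub_norm_le ((-((θ ^ 2 / 2 : ℝ) : ℂ)) ^ n * Ek d θ s) (iteratedDeriv n (Ek d θ) s)
      rw [norm_sub_rev, norm_mul, norm_pow, norm_neg, Complex.norm_real, Real.norm_eq_abs,
        abs_of_nonneg (by positivity)] at h2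
      rw [Real.norm_eq_abs, abs_of_nonneg (by positivity)]
      have h3 : ‖Ek d θ s‖ * C' ≤ A * C' := by gcongr; exact hA _ hsD θ hθ
      nlinarith
  have hI2 : Integrable (fun θ => (-((θ ^ 2 / 2 : ℝ) : ℂ)) ^ n * Ek d θ s) p := by
    refine Integrable.mono' hI ?_ ?_
    · exact (Continuous.aestronglyMeasurable (by fun_prop)).mul hEmeas
    · refine Eventually.of_forall fun θ => le_of_eq ?_
      rw [norm_mul, norm_pow, norm_neg, Complex.norm_real, Real.norm_eq_abs,
        abs_of_nonneg (by positivity)]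
  have e1 : ‖∫ θ, (-((θ ^ 2 / 2 : ℝ) : ℂ)) ^ n * Ek d θ s ∂p‖ = ∫ θ, (θ ^ 2 / 2) ^ n * ‖Ek d θ s‖ ∂p := by
    have : ∀ θ : ℝ, (-((θ ^ 2 / 2 : ℝ) : ℂ)) ^ n * Ek d θ s =
        (-1) ^ n * (((θ ^ 2 / 2) ^ n * ‖Ek d θ s‖ : ℝ) : ℂ) := by
      intro θ
      rw [Ek_real d θ s (by simp) hds, neg_pow]
      push_cast
      rw [Complex.norm_real, norm_norm]
      ring
    simp_rw [this]
    rw [integral_const_mul, norm_mul, norm_pow, norm_neg, norm_one, one_pow, one_mul,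
      integral_complex_ofReal, Complex.norm_real, Real.norm_eq_abs, abs_of_nonneg]
    exact integral_nonneg fun θ => by positivity
  have e2 : ∫ θ, (iteratedDeriv n (Ek d θ) s - (-((θ ^ 2 / 2 : ℝ) : ℂ)) ^ n * Ek d θ s) ∂p =
      - ∫ θ, (-((θ ^ 2 / 2 : ℝ) : ℂ)) ^ n * Ek d θ s ∂p := by
    rw [integral_sub hIi hI2, hz, zero_sub]
  have e3 : ‖∫ θ, (iteratedDeriv n (Ek d θ) s - (-((θ ^ 2 / 2 : ℝ) : ℂ)) ^ n * Ek d θ s) ∂p‖ ≤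
      ∫ θ, (1 / 2 * ((θ ^ 2 / 2) ^ n * ‖Ek d θ s‖) + A * C') ∂p := by
    refine norm_integral_le_of_norm_le ((hI.const_mul _).add (integrable_const _)) ?_
    filter_upwards [hae] with θ hθ
    have h1 := hest _ hsD θ hθ
    have h3 : ‖Ek d θ s‖ * C' ≤ A * C' := by gcongr; exact hA _ hsD θ hθ
    nlinarith
  rw [integral_add (hI.const_mul _) (integrable_const _), integral_const_mul, integral_const,
    smul_eq_mul, e2, norm_neg, e1] at e3
  rw [← ofReal_integral_eq_lintegral_ofReal hI (Eventually.of_forall fun θ => by positivity)]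
  refine ENNReal.ofReal_le_ofReal ?_
  linarith

lemma moments (p : Measure ℝ) [IsFiniteMeasure p] (a : ℝ)
    (hp : p (Ici a)ᶜ = 0) (d : ℂ → ℂ) (δ A C' : ℝ) (hδ : 0 < δ)
    (hd0 : d 0 = 0) (hdc : ContinuousAt d 0)
    (hA : ∀ z ∈ Dl δ, ∀ θ ≥ a, ‖Ek d θ z‖ ≤ A) (hPC : PC p (Dl δ) (fun z θ => Ek d θ z))
    (n : ℕ) (hC' : 0 ≤ C')
    (hest : ∀ z ∈ Dl δ, ∀ θ ≥ a,
      ‖iteratedDeriv n (Ek d θ) z - (-((θ ^ 2 / 2 : ℝ) : ℂ)) ^ n * Ek d θ z‖ ≤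
      ‖Ek d θ z‖ * (1 / 2 * (θ ^ 2 / 2) ^ n + C'))
    (hds : ∀ s ∈ Ioo 0 δ, (d (s:ℝ)).im = 0)
    (hz : ∀ η > 0, ∃ s ∈ Ioo 0 η, ∫ θ, iteratedDeriv n (Ek d θ) (s:ℝ) ∂p = 0) :
    ∫⁻ θ, ENNReal.ofReal ((θ ^ 2 / 2) ^ n) ∂p ≤ ENNReal.ofReal (2 * (A * C') * p.real univ) := by
  have hpos : ∀ j : ℕ, 0 < min δ (1 / ((j:ℝ) + 1)) := fun j => by positivity
  choose σ hσ hσz using fun j : ℕ => hz _ (hpos j)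
  have hσ0 : Tendsto σ atTop (𝓝 0) := by
    refine squeeze_zero (fun j => (hσ j).1.le) (fun j => (hσ j).2.le.trans (min_le_right _ _)) ?_
    exact tendsto_one_div_add_atTop_nhds_zero_nat
  have hlim : ∀ θ : ℝ, Tendsto (fun j => ENNReal.ofReal ((θ ^ 2 / 2) ^ n * ‖Ek d θ (σ j)‖)) atTop
      (𝓝 (ENNReal.ofReal ((θ ^ 2 / 2) ^ n))) := by
    intro θ
    have hc : ContinuousAt (fun z => (θ ^ 2 / 2) ^ n * ‖Ek d θ z‖) 0 := by
      have : ContinuousAt (fun z => Ek d θ z) 0 := by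
        simp only [Ek]
        exact ((continuousAt_id.const_mul _).add (hdc.const_mul _)).cexp
      exact this.norm.const_mul _
    have h1 : (θ ^ 2 / 2) ^ n * ‖Ek d θ 0‖ = (θ ^ 2 / 2) ^ n := by simp [Ek, hd0]
    have h2 : Tendsto (fun j => ((σ j : ℝ) : ℂ)) atTop (𝓝 0) := by
      have := (Complex.continuous_ofReal.tendsto 0).comp hσ0
      rw [Complex.ofReal_zero] at this
      exact this
    have h3 := hc.tendsto.comp h2
    rw [h1] at h3
    exact (ENNReal.continuous_ofReal.tendsto _).comp h3
  calc ∫⁻ θ, ENNReal.ofReal ((θ ^ 2 / 2) ^ n) ∂p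
      = ∫⁻ θ, liminf (fun j => ENNReal.ofReal ((θ ^ 2 / 2) ^ n * ‖Ek d θ (σ j)‖)) atTop ∂p := by
        refine lintegral_congr fun θ => (hlim θ).liminf_eq.symm
    _ ≤ liminf (fun j => ∫⁻ θ, ENNReal.ofReal ((θ ^ 2 / 2) ^ n * ‖Ek d θ (σ j)‖) ∂p) atTop := by
        refine lintegral_liminf_le fun j => ?_
        refine Measurable.ennreal_ofReal ?_
        refine Continuous.measurable ?_
        simp only [Ek]
        fun_prop
    _ ≤ ENNReal.ofReal (2 * (A * C') * p.real univ) := by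
        refine liminf_le_of_le ?_ ?_
        · isBoundedDefault
        intro b hb
        obtain ⟨j, hj⟩ := hb.exists
        have hs : σ j ∈ Ioo 0 δ := ⟨(hσ j).1, (hσ j).2.trans_le (min_le_left _ _)⟩
        exact hj.trans (moment_at_zero p a hp d δ A C' hδ hA hPC n hC' hest (σ j) hs (hds _ hs) (hσz j))

theorem core_local (p : Measure ℝ) [IsFiniteMeasure p] (a : ℝ) (ha : 0 < a)
    (hp : p (Ici a)ᶜ = 0) (d : ℂ → ℂ) (r : ℝ) (hr : 0 < r)
    (hd : DifferentiableOn ℂ d (Metric.ball 0 r))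
    (hd0 : d 0 = 0) (hreal : ∀ x : ℝ, |x| < r → (d x).im = 0)
    (hz : ∀ η > 0, ∃ s ∈ Ioo 0 η, ∫ θ, Ek d θ (s:ℝ) ∂p = 1) :
    ∃ r' > 0, ∀ s ∈ Ioo 0 r', ∫ θ, Ek d θ (s:ℝ) ∂p = 1 := by
  have hae : ∀ᵐ θ ∂p, a ≤ θ := hp
  obtain ⟨δ, r0, D, M, hδ, hδr, hr0, hD, hM, hcb, hlip, hre⟩ := d_geom d r hr hd hd0 hreal
  have hDl : Dl δ ⊆ Metric.ball 0 r := fun z hz' => hcb z hz' (Metric.mem_closedBall_self hr0.le)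
  set A := Real.exp (δ * (M ^ 2 / 2)) with hAdef
  have hA0 : 0 < A := Real.exp_pos _
  have hA : ∀ z ∈ Dl δ, ∀ θ ≥ a, ‖Ek d θ z‖ ≤ A := fun z hz' θ hθ =>
    Ek_bound d θ z M δ (by linarith) (Dl_re_pos hδ hz').le
      ((Complex.re_le_norm z).trans (Dl_norm_lt hδ hz').le) (hre z hz')
  have hO := Dl_open δ hδ
  have hPC : PC p (Dl δ) (fun z θ => Ek d θ z) := by
    refine Ek_PC p a hp d (Dl δ) (hd.mono hDl) fun z hz' => ?_
    obtain ⟨ρ, hρ, hρs⟩ := Metric.isOpen_iff.1 hO z hz'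
    exact ⟨ρ, hρ, A, fun θ hθ w hw => hA w (hρs hw) θ hθ⟩
  obtain ⟨C, B, hC, hB, hest⟩ := Ek_est d (Dl δ) r0 D a hr0 hD ha
    (fun z hz' => hd.mono (hcb z hz')) hlip
  let f : ℂ → ℂ := fun z => (∫ θ, Ek d θ z ∂p) - 1
  have hf : DifferentiableOn ℂ f (Dl δ) := (hPC.differentiableOn hO).sub_const 1
  have hg : ∀ m, DifferentiableOn ℂ (iteratedDeriv m f) (Dl δ) := by
    intro m
    induction m with
    | zero => simpa using hf
    | succ m ih => rw [iteratedDeriv_succ]; exact ih.deriv hO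
  have hds : ∀ s ∈ Ioo 0 δ, (d (s:ℝ)).im = 0 := fun s hs =>
    hreal s (by rw [abs_of_pos hs.1]; exact hs.2.trans hδr)
  have him : ∀ s ∈ Ioo 0 δ, (f (s : ℝ)).im = 0 := by
    intro s hs
    have e : ∫ θ, Ek d θ s ∂p = ((∫ θ, ‖Ek d θ s‖ ∂p : ℝ) : ℂ) := by
      rw [← integral_complex_ofReal]
      exact integral_congr_ae (Eventually.of_forall fun θ => Ek_real d θ s (by simp) (hds s hs))
    simp only [f, e]
    simp
  have hzf := zeros_iter f δ hδ hg him (fun η hη => by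
    obtain ⟨s, hs, h⟩ := hz η hη
    exact ⟨s, hs, by simp [f, h]⟩)
  have hder : ∀ n : ℕ, ∀ z ∈ Dl δ, iteratedDeriv (n + 1) f z = ∫ θ, iteratedDeriv (n + 1) (Ek d θ) z ∂p := by
    intro n z hz'
    rw [← hPC.iteratedDeriv_eq hO (n + 1) z hz', iteratedDeriv_succ', iteratedDeriv_succ']
    congr 1
    funext w
    exact deriv_sub_const _
  set P := p.real univ with hP
  have hP0 : 0 ≤ P := measureReal_nonneg
  have hbound : ∀ n : ℕ, ∀ w ∈ Dl δ,
      ‖iteratedDeriv n f w‖ ≤ (A * P + 1 + (3 / 2) * A * (2 * (A * C) * P) + A * C * P) * (B * (n:ℝ) ^ 2) ^ n := by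
    intro n w hw
    rcases n with _ | n
    · simp only [iteratedDeriv_zero, pow_zero, mul_one]
      have h1 : ‖∫ θ, Ek d θ w ∂p‖ ≤ A * P := by
        refine norm_integral_le_of_norm_le_const ?_
        filter_upwards [hae] with θ hθ using hA w hw θ hθ
      have h2 : ‖f w‖ ≤ ‖∫ θ, Ek d θ w ∂p‖ + 1 := by
        refine (norm_sub_le _ _).trans ?_
        rw [norm_one]
      have : 0 ≤ (3 / 2) * A * (2 * (A * C) * P) + A * C * P := by positivity
      linarith
    · set T : ℝ := (B * ((n + 1 : ℕ) : ℝ) ^ 2) ^ (n + 1) with hT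
      have hT0 : 0 ≤ T := by positivity
      have hCT : 0 ≤ C * T := by positivity
      have hestn : ∀ z ∈ Dl δ, ∀ θ ≥ a,
          ‖iteratedDeriv (n + 1) (Ek d θ) z - (-((θ ^ 2 / 2 : ℝ) : ℂ)) ^ (n + 1) * Ek d θ z‖ ≤
          ‖Ek d θ z‖ * (1 / 2 * (θ ^ 2 / 2) ^ (n + 1) + C * T) := fun z hz' θ hθ => hest z hz' θ hθ (n + 1)
      have hmom := moments p a hp d δ A (C * T) hδ hd0
        (hd.differentiableAt (Metric.ball_mem_nhds _ hr)).continuousAt hA hPC (n + 1) hCT hestn hds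
        (fun η hη => by
          obtain ⟨s, hs, h⟩ := hzf (n + 1) (min η δ) (lt_min hη hδ)
          refine ⟨s, ⟨hs.1, hs.2.trans_le (min_le_left _ _)⟩, ?_⟩
          rw [← hder n s (Dl_real hs.1 (hs.2.trans_le (min_le_right _ _))), h])
      have hintg : Integrable (fun θ : ℝ => (θ ^ 2 / 2) ^ (n + 1)) p := by
        refine ⟨Continuous.aestronglyMeasurable (by fun_prop), ?_⟩
        rw [hasFiniteIntegral_iff_ofReal (Eventually.of_forall fun θ => by positivity)]
        exact lt_of_le_of_lt hmom ENNReal.ofReal_lt_top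
      have hmom2 : ∫ θ, (θ ^ 2 / 2) ^ (n + 1) ∂p ≤ 2 * (A * (C * T)) * P := by
        rw [← ofReal_integral_eq_lintegral_ofReal hintg (Eventually.of_forall fun θ => by positivity)] at hmom
        exact (ENNReal.ofReal_le_ofReal_iff (by positivity)).1 hmom
      rw [hder n w hw]
      have h1 : ‖∫ θ, iteratedDeriv (n + 1) (Ek d θ) w ∂p‖ ≤
          ∫ θ, (3 / 2 * A * (θ ^ 2 / 2) ^ (n + 1) + A * (C * T)) ∂p := by
        refine norm_integral_le_of_norm_le ((hintg.const_mul _).add (integrable_const _)) ?_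
        filter_upwards [hae] with θ hθ
        have h2 := norm_sub_norm_le (iteratedDeriv (n + 1) (Ek d θ) w)
          ((-((θ ^ 2 / 2 : ℝ) : ℂ)) ^ (n + 1) * Ek d θ w)
        rw [norm_mul, norm_pow, norm_neg, Complex.norm_real, Real.norm_eq_abs,
          abs_of_nonneg (by positivity)] at h2
        have h3 := hestn w hw θ hθ
        have h4 : ‖Ek d θ w‖ * (3 / 2 * (θ ^ 2 / 2) ^ (n + 1) + C * T) ≤
            A * (3 / 2 * (θ ^ 2 / 2) ^ (n + 1) + C * T) := by
          gcongr; exact hA w hw θ hθ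
        nlinarith
      rw [integral_add (hintg.const_mul _) (integrable_const _), integral_const_mul, integral_const,
        smul_eq_mul, ← hP] at h1
      have h5 : 3 / 2 * A * ∫ θ, (θ ^ 2 / 2) ^ (n + 1) ∂p ≤ 3 / 2 * A * (2 * (A * (C * T)) * P) := by
        gcongr
      have h6 : 0 ≤ (A * P + 1) * T := by positivity
      nlinarith
  obtain ⟨C', c, hC', hc, hdec⟩ := flat_decay f δ _ B hδ (by positivity) hB hg hbound hzf
  obtain ⟨r', hr', h⟩ := flat_PL f δ C' c hδ hC' hc hf hdec
  exact ⟨r', hr', fun s hs => sub_eq_zero.1 (h s hs)⟩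


lemma Q_analytic (ν : Measure ℝ) [IsFiniteMeasure ν] (a : ℝ) (ha : 0 < a) (hν : ν (Ici a)ᶜ = 0)
    (c : ℝ → ℝ) (s : ℝ) (hs : 0 < s) (hc : AnalyticAt ℝ c s) :
    AnalyticAt ℝ (fun s => ∫ θ, Real.exp (-(θ ^ 2 / 2) * s + θ * c s) ∂ν) s := by
  obtain ⟨r, hr, C, hCd, hCr⟩ := complexify c s hc
  have hCc : ContinuousAt C s :=
    (hCd.differentiableAt (Metric.ball_mem_nhds _ hr)).continuousAt
  have hev : ∀ᶠ z in 𝓝 (s:ℂ), ‖C z‖ < ‖C s‖ + 1 :=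
    hCc.norm.eventually (gt_mem_nhds (by linarith))
  obtain ⟨r1, hr1, hK⟩ := Metric.eventually_nhds_iff_ball.1 hev
  set K := ‖C s‖ + 1 with hKdef
  set ρ := min (min r r1) (s / 2) with hρ
  have hρ0 : 0 < ρ := by positivity
  have hρr : ρ ≤ r := (min_le_left _ _).trans (min_le_left _ _)
  have hρr1 : ρ ≤ r1 := (min_le_left _ _).trans (min_le_right _ _)
  have hρs : ρ ≤ s / 2 := min_le_right _ _
  have hPC : PC ν (Metric.ball (s:ℂ) ρ) (fun z θ => Ek C θ z) := by
    refine Ek_PC ν a hν C _ (hCd.mono (Metric.ball_subset_ball hρr)) fun z hz => ?_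
    obtain ⟨ρ', hρ', hsub⟩ := Metric.isOpen_iff.1 Metric.isOpen_ball z hz
    refine ⟨ρ', hρ', Real.exp (K ^ 2 / s), fun θ hθ w hw => ?_⟩
    have hw := hsub hw
    rw [Ek_norm]
    refine Real.exp_le_exp.2 ?_
    have h1 : (C w).re ≤ K := (Complex.re_le_norm _).trans (hK w (Metric.ball_subset_ball hρr1 hw)).le
    have h2 : s / 2 ≤ w.re := by
      rw [Metric.mem_ball, dist_eq_norm] at hw
      have := Complex.abs_re_le_norm (w - s)
      rw [Complex.sub_re, Complex.ofReal_re] at this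
      have := neg_abs_le (w.re - s)
      linarith
    have hθ0 : 0 ≤ θ := by linarith
    have h3 : θ * (C w).re ≤ θ * K := by gcongr
    have h4 : θ ^ 2 / 2 * (s / 2) ≤ θ ^ 2 / 2 * w.re := by gcongr
    have h5 : K ^ 2 / s = θ * K - θ ^ 2 / 2 * (s / 2) + (θ * s / 2 - K) ^ 2 / s := by
      field_simp; ring
    have h6 : 0 ≤ (θ * s / 2 - K) ^ 2 / s := by positivity
    linarith
  have hΦ : AnalyticAt ℂ (fun z => ∫ θ, Ek C θ z ∂ν) (s:ℂ) :=
    (hPC.differentiableOn Metric.isOpen_ball).analyticAt (Metric.ball_mem_nhds _ hρ0)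
  have h1 : AnalyticAt ℝ (fun x : ℝ => (∫ θ, Ek C θ (x:ℂ) ∂ν).re) s := by
    exact (Complex.reCLM.analyticAt _).comp
      ((hΦ.restrictScalars (𝕜 := ℝ)).comp (Complex.ofRealCLM.analyticAt s))
  refine h1.congr ?_
  filter_upwards [Metric.ball_mem_nhds s hr] with x hx
  have hx' : |x - s| < r := hx
  have e : ∫ θ, Ek C θ x ∂ν = ((∫ θ, ‖Ek C θ x‖ ∂ν : ℝ) : ℂ) := by
    rw [← integral_complex_ofReal]
    exact integral_congr_ae (Eventually.of_forall fun θ =>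
      Ek_real C θ x (by simp) (by rw [hCr x hx']; simp))
  rw [e, Complex.ofReal_re]
  refine integral_congr_ae (Eventually.of_forall fun θ => ?_)
  simp only [Ek_norm, hCr x hx', Complex.ofReal_re]

theorem core_global (ν : Measure ℝ) [IsFiniteMeasure ν] (a : ℝ) (ha : 0 < a) (hν : ν (Ici a)ᶜ = 0)
    (c : ℝ → ℝ) (hc : AnalyticOnNhd ℝ c (Ici 0))
    (hz : ∀ η > 0, ∃ s ∈ Ioo 0 η, ∫⁻ θ, ENNReal.ofReal (Real.exp (-(θ ^ 2 / 2) * s + θ * c s)) ∂ν = 1) :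
    ∀ s > 0, ∫⁻ θ, ENNReal.ofReal (Real.exp (-(θ ^ 2 / 2) * s + θ * c s)) ∂ν = 1 := by
  have hc0 := hc 0 (mem_Ici.2 le_rfl)
  -- Fatou at zero
  have hfat : ∫⁻ θ, ENNReal.ofReal (Real.exp (θ * c 0)) ∂ν ≤ 1 := by
    have hpos : ∀ j : ℕ, 0 < (1 / ((j:ℝ) + 1)) := fun j => by positivity
    choose σ hσ hσz using fun j : ℕ => hz _ (hpos j)
    have hσ0 : Tendsto σ atTop (𝓝 0) :=
      squeeze_zero (fun j => (hσ j).1.le) (fun j => (hσ j).2.le) tendsto_one_div_add_atTop_nhds_zero_nat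
    have hlim : ∀ θ : ℝ, Tendsto (fun j => ENNReal.ofReal (Real.exp (-(θ ^ 2 / 2) * σ j + θ * c (σ j))))
        atTop (𝓝 (ENNReal.ofReal (Real.exp (θ * c 0)))) := by
      intro θ
      have hcc : ContinuousAt c 0 := hc0.continuousAt
      have h1 : ContinuousAt (fun s => Real.exp (-(θ ^ 2 / 2) * s + θ * c s)) 0 := by fun_prop
      have h2 := h1.tendsto.comp hσ0
      rw [mul_zero, zero_add] at h2
      exact (ENNReal.continuous_ofReal.tendsto _).comp h2
    calc ∫⁻ θ, ENNReal.ofReal (Real.exp (θ * c 0)) ∂ν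
        = ∫⁻ θ, liminf (fun j => ENNReal.ofReal (Real.exp (-(θ ^ 2 / 2) * σ j + θ * c (σ j)))) atTop ∂ν :=
          lintegral_congr fun θ => (hlim θ).liminf_eq.symm
      _ ≤ liminf (fun j => ∫⁻ θ, ENNReal.ofReal (Real.exp (-(θ ^ 2 / 2) * σ j + θ * c (σ j))) ∂ν) atTop :=
          lintegral_liminf_le fun j => by fun_prop
      _ ≤ 1 := by simp only [hσz]; simp
  let p : Measure ℝ := ν.withDensity (fun θ => ENNReal.ofReal (Real.exp (θ * c 0)))
  have hpfin : IsFiniteMeasure p :=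
    isFiniteMeasure_withDensity (ne_top_of_le_ne_top ENNReal.one_ne_top hfat)
  have hpa : p (Ici a)ᶜ = 0 := withDensity_absolutelyContinuous _ _ hν
  obtain ⟨r, hr, d, hdd, hdr⟩ := complexify (fun s => c s - c 0) 0 (hc0.sub analyticAt_const)
  simp only [sub_zero, Complex.ofReal_zero] at hdd hdr
  have hrel : ∀ s : ℝ, |s| < r → ∫⁻ θ, ENNReal.ofReal (Real.exp (-(θ ^ 2 / 2) * s + θ * c s)) ∂ν =
      ∫⁻ θ, ENNReal.ofReal ‖Ek d θ s‖ ∂p := by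
    intro s hs
    have hm : Measurable fun θ => ENNReal.ofReal ‖Ek d θ s‖ := by
      refine Measurable.ennreal_ofReal (Continuous.measurable ?_)
      simp only [Ek]; fun_prop
    rw [lintegral_withDensity_eq_lintegral_mul _ (by fun_prop) hm]
    refine lintegral_congr fun θ => ?_
    rw [Pi.mul_apply, ← ENNReal.ofReal_mul (Real.exp_pos _).le, Ek_norm, hdr s hs, ← Real.exp_add,
      Complex.ofReal_re, Complex.ofReal_re]
    congr 2; ring
  have hrel2 : ∀ s : ℝ, |s| < r → ∫ θ, Ek d θ s ∂p =
      (((∫⁻ θ, ENNReal.ofReal (Real.exp (-(θ ^ 2 / 2) * s + θ * c s)) ∂ν).toReal : ℝ) : ℂ) := by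
    intro s hs
    rw [hrel s hs, ← integral_eq_lintegral_of_nonneg_ae (Eventually.of_forall fun θ => norm_nonneg _),
      ← integral_complex_ofReal]
    · exact integral_congr_ae (Eventually.of_forall fun θ =>
        Ek_real d θ s (by simp) (by rw [hdr s hs]; exact Complex.ofReal_im _))
    · refine Continuous.aestronglyMeasurable ?_
      simp only [Ek]; fun_prop
  obtain ⟨r', hr', hloc⟩ := core_local p a ha hpa d r hr hdd
    (by have := hdr 0 (by simpa using hr); simpa using this)
    (fun x hx => by rw [hdr x hx]; exact Complex.ofReal_im _)
    (fun η hη => by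
      obtain ⟨s, hs, h⟩ := hz (min η r) (lt_min hη hr)
      refine ⟨s, ⟨hs.1, hs.2.trans_le (min_le_left _ _)⟩, ?_⟩
      rw [hrel2 s (by rw [abs_of_pos hs.1]; exact hs.2.trans_le (min_le_right _ _)), h]
      simp)
  set Q : ℝ → ℝ := fun s => ∫ θ, Real.exp (-(θ ^ 2 / 2) * s + θ * c s) ∂ν with hQ
  have hQR : ∀ s, Q s = (∫⁻ θ, ENNReal.ofReal (Real.exp (-(θ ^ 2 / 2) * s + θ * c s)) ∂ν).toReal := by
    intro s
    exact integral_eq_lintegral_of_nonneg_ae (Eventually.of_forall fun θ => (Real.exp_pos _).le)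
      (Continuous.aestronglyMeasurable (by fun_prop))
  have hQa : AnalyticOnNhd ℝ Q (Ioi 0) := fun s hs =>
    Q_analytic ν a ha hν c s hs (hc s (mem_Ici.2 (le_of_lt (mem_Ioi.1 hs))))
  have hm : 0 < min r r' := lt_min hr hr'
  have hQ1 : Q =ᶠ[𝓝 (min r r' / 2)] fun _ => 1 := by
    filter_upwards [Ioo_mem_nhds (show 0 < min r r' / 2 by positivity)
      (show min r r' / 2 < min r r' by linarith)] with s hs
    have h1 := hloc s ⟨hs.1, hs.2.trans_le (min_le_right _ _)⟩
    rw [hrel2 s (by rw [abs_of_pos hs.1]; exact hs.2.trans_le (min_le_left _ _)), ← hQR] at h1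
    exact_mod_cast h1
  have hfin := hQa.eqOn_of_preconnected_of_eventuallyEq (g := fun _ => (1:ℝ)) analyticOnNhd_const
    isPreconnected_Ioi (show min r r' / 2 ∈ Ioi 0 from by simpa using hm) hQ1
  intro s hs
  have h1 := hfin hs
  simp only [hQR] at h1
  rw [ENNReal.toReal_eq_one_iff] at h1
  exact h1


/-- The normalised kernel `r_θ(t,b(t)) / g(θ)`. -/
noncomputable def kk (b : ℝ → ℝ) (t0 x0 θ t : ℝ) : ℝ := rTheta θ t (b t) / rTheta θ t0 x0

lemma kk_eq (b : ℝ → ℝ) (t0 x0 θ t : ℝ) :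
    kk b t0 x0 θ t = Real.exp (-(θ ^ 2 / 2) * (1 / t - 1 / t0) + θ * (b t / t - x0 / t0)) := by
  rw [kk, rTheta, rTheta, ← Real.exp_sub]
  congr 1
  ring

lemma gap (b : ℝ → ℝ) (t0 x0 ε a : ℝ) (hε : 0 < ε) (hεt : ε < t0) (hx0 : x0 < b t0)
    (hbc : ContinuousOn b (Ici 0)) (lam : Measure ℝ) [IsFiniteMeasure lam]
    (hlam : lam (Icc ε t0)ᶜ = 0) :
    ∃ η > 0, ∀ θ ∈ Ioo a (a + η), ∫⁻ t, ENNReal.ofReal (kk b t0 x0 θ t) ∂lam ≠ 1 := by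
  have ht0 : 0 < t0 := hε.trans hεt
  have hae : ∀ᵐ t ∂lam, t ∈ Icc ε t0 := hlam
  have hres : lam.restrict (Icc ε t0) = lam := Measure.restrict_eq_self_of_ae_mem hae
  set S : ℝ → ℝ := fun t => 1 / t - 1 / t0 with hS
  set C : ℝ → ℝ := fun t => b t / t - x0 / t0 with hC
  have hne : ∀ t ∈ Icc ε t0, t ≠ 0 := fun t ht => (hε.trans_le ht.1).ne'
  have hSc : ContinuousOn S (Icc ε t0) := by
    refine ContinuousOn.sub (ContinuousOn.div continuousOn_const continuousOn_id hne) continuousOn_const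
  have hCc : ContinuousOn C (Icc ε t0) := by
    refine ContinuousOn.sub (ContinuousOn.div (hbc.mono ?_) continuousOn_id hne) continuousOn_const
    intro t ht
    exact (hε.le.trans ht.1)
  obtain ⟨KS, hKS⟩ := isCompact_Icc.exists_bound_of_continuousOn hSc
  obtain ⟨KC, hKC⟩ := isCompact_Icc.exists_bound_of_continuousOn hCc
  have hmem0 : t0 ∈ Icc ε t0 := ⟨hεt.le, le_rfl⟩
  have hKS0 : 0 ≤ KS := (norm_nonneg _).trans (hKS t0 hmem0)
  have hKC0 : 0 ≤ KC := (norm_nonneg _).trans (hKC t0 hmem0)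
  let G : ℂ → ℝ → ℂ := fun z t => Complex.exp (-(z ^ 2 / 2) * (S t : ℂ) + z * (C t : ℂ))
  have hGm : ∀ z, AEStronglyMeasurable (G z) lam := by
    intro z
    rw [← hres]
    refine ContinuousOn.aestronglyMeasurable ?_ measurableSet_Icc
    refine ContinuousOn.cexp ?_
    have h1 := Complex.continuous_ofReal.comp_continuousOn hSc
    have h2 := Complex.continuous_ofReal.comp_continuousOn hCc
    exact (h1.const_mul _).add (h2.const_mul _)
  have hPC : PC lam univ G := by
    refine ⟨fun z _ => hGm z, Eventually.of_forall fun t => ?_, fun z _ => ?_⟩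
    · simp only [G]; fun_prop
    · refine ⟨1, one_pos, Real.exp ((‖z‖ + 1) ^ 2 / 2 * KS + (‖z‖ + 1) * KC), ?_⟩
      filter_upwards [hae] with t ht w hw
      have hw' : ‖w‖ ≤ ‖z‖ + 1 := by
        rw [Metric.mem_ball, dist_eq_norm] at hw
        have := norm_sub_norm_le w z
        linarith
      simp only [G, Complex.norm_exp]
      refine Real.exp_le_exp.2 ((Complex.re_le_norm _).trans ((norm_add_le _ _).trans ?_))
      rw [norm_mul, norm_mul, norm_neg, norm_div, norm_pow, Complex.norm_real, Complex.norm_real,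
        Complex.norm_two]
      gcongr
      · exact hKS t ht
      · exact hKC t ht
  set H : ℂ → ℂ := fun z => ∫ t, G z t ∂lam with hH
  have hHa : AnalyticOnNhd ℂ H univ := (hPC.differentiableOn isOpen_univ).analyticOnNhd isOpen_univ
  have hGr : ∀ θ t : ℝ, G θ t = ((kk b t0 x0 θ t : ℝ) : ℂ) := by
    intro θ t
    simp only [G, kk_eq, Complex.ofReal_exp, S, C]
    congr 1
    push_cast
    ring
  have hHr : ∀ θ : ℝ, ∫⁻ t, ENNReal.ofReal (kk b t0 x0 θ t) ∂lam = 1 → H θ = 1 := by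
    intro θ h
    have h1 : H θ = ((∫ t, kk b t0 x0 θ t ∂lam : ℝ) : ℂ) := by
      rw [← integral_complex_ofReal]
      exact integral_congr_ae (Eventually.of_forall fun t => hGr θ t)
    have hm : AEStronglyMeasurable (fun t => kk b t0 x0 θ t) lam := by
      have := (hGm θ).re
      refine this.congr (Eventually.of_forall fun t => ?_)
      simp [hGr]
    rw [h1, integral_eq_lintegral_of_nonneg_ae (Eventually.of_forall fun t => by
      rw [kk_eq]; exact (Real.exp_pos _).le) hm, h]
    simp
  -- decay at minus infinity
  have hlim : Tendsto (fun n : ℕ => H (-(n:ℂ))) atTop (𝓝 0) := by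
    have hC0 : 0 < C t0 := by
      simp only [C]; rw [← sub_div]; exact div_pos (by linarith) ht0
    have hev := (hCc t0 hmem0).eventually (lt_mem_nhds hC0)
    obtain ⟨δ, hδ, hδC⟩ := Metric.mem_nhdsWithin_iff.1 hev
    have hS0 : ∀ t ∈ Icc ε t0, 0 ≤ S t := by
      intro t ht
      have : 0 < t := hε.trans_le ht.1
      exact sub_nonneg.2 (one_div_le_one_div_of_le this ht.2)
    set s1 : ℝ := δ / (t0 * t0) with hs1
    have hs10 : 0 < s1 := by positivity
    have hnorm : ∀ (n : ℕ) (t : ℝ), ‖G (-(n:ℂ)) t‖ = Real.exp (-((n:ℝ) ^ 2 / 2) * S t - n * C t) := by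
      intro n t
      have := hGr (-(n:ℝ)) t
      push_cast at this
      rw [this, Complex.norm_real, Real.norm_eq_abs, kk_eq, abs_of_pos (Real.exp_pos _)]
      congr 1
      simp only [S, C]; ring
    have := tendsto_integral_of_dominated_convergence (μ := lam) (F := fun (n : ℕ) t => G (-(n:ℂ)) t)
      (f := fun _ => (0:ℂ)) (fun _ => Real.exp (KC ^ 2 / (2 * s1))) (fun n => hGm _) (integrable_const _)
      ?_ ?_
    · simpa using this
    · intro n
      filter_upwards [hae] with t ht
      rw [hnorm]
      refine Real.exp_le_exp.2 ?_
      have hn : (0:ℝ) ≤ n := Nat.cast_nonneg n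
      by_cases hd : dist t t0 < δ
      · have h1 : 0 < C t := hδC ⟨hd, ht⟩
        have h2 := hS0 t ht
        have h3 : 0 ≤ (n:ℝ) ^ 2 / 2 * S t := by positivity
        have h4 : 0 ≤ n * C t := by positivity
        have h5 : 0 ≤ KC ^ 2 / (2 * s1) := by positivity
        linarith
      · have ht' : 0 < t := hε.trans_le ht.1
        have h1 : δ ≤ t0 - t := by
          rw [not_lt, Real.dist_eq, abs_sub_comm, abs_of_nonneg (by linarith [ht.2])] at hd
          exact hd
        have h2 : s1 ≤ S t := by
          simp only [S]
          rw [div_sub_div _ _ ht'.ne' ht0.ne', hs1, one_mul, mul_one]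
          have := ht.2
          gcongr
        have h3 : -KC ≤ C t := (abs_le.1 (hKC t ht)).1
        have h4 : (n:ℝ) ^ 2 / 2 * s1 ≤ (n:ℝ) ^ 2 / 2 * S t := by gcongr
        have h5 : (n:ℝ) * (-KC) ≤ n * C t := by gcongr
        have h6 : KC ^ 2 / (2 * s1) = n * KC - (n:ℝ) ^ 2 / 2 * s1 + (n * s1 - KC) ^ 2 / (2 * s1) := by
          field_simp; ring
        have h7 : 0 ≤ (n * s1 - KC) ^ 2 / (2 * s1) := by positivity
        linarith
    · filter_upwards [hae] with t ht
      rw [tendsto_zero_iff_norm_tendsto_zero]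
      simp only [hnorm]
      refine Real.tendsto_exp_atBot.comp ?_
      have hnat := tendsto_natCast_atTop_atTop (R := ℝ)
      have h1 : Tendsto (fun n : ℕ => (n:ℝ) * ((n:ℝ) / 2 * S t + C t)) atTop atTop := by
        rcases (hS0 t ht).lt_or_eq with h | h
        · refine hnat.atTop_mul_atTop₀ ?_
          exact tendsto_atTop_add_const_right _ _ ((hnat.atTop_div_const two_pos).atTop_mul_const h)
        · have htt : t = t0 := by
            have h2 : 1 / t = 1 / t0 := by simp only [S] at h; linarith
            simpa using h2
          rw [← h, htt]
          simp only [mul_zero, zero_add]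
          exact hnat.atTop_mul_const hC0
      refine (tendsto_neg_atTop_atBot.comp h1).congr fun n => ?_
      simp only [Function.comp]; ring
  rcases (hHa (a:ℂ) (mem_univ _)).eventually_eq_or_eventually_ne (analyticAt_const (v := (1:ℂ))) with h | h
  · exfalso
    have h1 := hHa.eqOn_of_preconnected_of_eventuallyEq analyticOnNhd_const isPreconnected_univ
      (mem_univ _) h
    have h2 : (fun n : ℕ => H (-(n:ℂ))) = fun _ => 1 := funext fun n => h1 (mem_univ _)
    rw [h2] at hlim
    exact one_ne_zero (tendsto_nhds_unique tendsto_const_nhds hlim)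
  · obtain ⟨η, hη, hsub⟩ := Metric.mem_nhdsWithin_iff.1 h
    refine ⟨η, hη, fun θ hθ hF => ?_⟩
    have h1 : (θ:ℂ) ∈ Metric.ball (a:ℂ) η ∩ {(a:ℂ)}ᶜ := by
      refine ⟨?_, ?_⟩
      · rw [Metric.mem_ball, Complex.dist_of_im_eq (by simp)]
        rw [Complex.ofReal_re, Complex.ofReal_re, Real.dist_eq, abs_of_pos (by linarith [hθ.1])]
        linarith [hθ.2]
      · simp only [mem_compl_iff, mem_singleton_iff, Complex.ofReal_inj]
        exact hθ.1.ne'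
    exact hsub h1 (hHr θ hF)

lemma analytic_flat (A : ℝ → ℝ) (κ : ℝ) (hκ : 0 < κ) (hA : AnalyticAt ℝ A 0)
    (hb : ∀ᶠ t in 𝓝[>] (0:ℝ), |A t| ≤ Real.exp (-(κ / t))) : ∀ᶠ t in 𝓝 (0:ℝ), A t = 0 := by
  by_contra hcon
  obtain ⟨n, g, hg, hg0, hfg⟩ := hA.exists_eventuallyEq_pow_smul_nonzero_iff.2 hcon
  have h1 : Tendsto (fun t : ℝ => κ / t) (𝓝[>] 0) atTop :=
    (tendsto_inv_nhdsGT_zero.const_mul_atTop hκ).congr fun t => (div_eq_mul_inv κ t).symm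
  have h2 := ((Real.tendsto_pow_mul_exp_neg_atTop_nhds_zero n).comp h1).const_mul ((κ ^ n)⁻¹)
  rw [mul_zero] at h2
  have h3 : Tendsto g (𝓝[>] 0) (𝓝 0) := by
    refine squeeze_zero_norm' ?_ h2
    filter_upwards [hb, hfg.filter_mono nhdsWithin_le_nhds, self_mem_nhdsWithin] with t ht ht2 ht0
    have ht0 : 0 < t := ht0
    rw [ht2, sub_zero, smul_eq_mul, abs_mul, abs_of_pos (by positivity)] at ht
    simp only [Function.comp, div_pow, Real.norm_eq_abs]
    rw [show (κ ^ n)⁻¹ * (κ ^ n / t ^ n * Real.exp (-(κ / t))) = Real.exp (-(κ / t)) / t ^ n by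
      field_simp]
    rw [le_div_iff₀ (by positivity)]
    linarith
  have h4 : Tendsto g (𝓝[>] 0) (𝓝 (g 0)) := hg.continuousAt.tendsto.mono_left nhdsWithin_le_nhds
  exact hg0 (tendsto_nhds_unique h4 h3)

lemma tail_zero (b : ℝ → ℝ) (t0 x0 η : ℝ) (ht0 : 0 < t0) (hb0 : 0 < b 0) (hη : 0 < η)
    (hba : AnalyticAt ℝ b 0) (ν : Measure ℝ) [IsFiniteMeasure ν] (hν : ν (Ici (2 * b 0))ᶜ = 0)
    (hgap : ν (Ioo (2 * b 0) (2 * b 0 + η)) = 0)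
    (hR : ∀ t ∈ Ioo 0 t0, ∫⁻ θ, ENNReal.ofReal (kk b t0 x0 θ t) ∂ν = 1) :
    ν (Ioi (2 * b 0)) = 0 := by
  set a := 2 * b 0 with ha
  have ha0 : 0 < a := by positivity
  let β : ℝ → ℝ := dslope b 0
  have hβ : AnalyticAt ℝ β 0 := by
    obtain ⟨p, hp⟩ := hba
    exact ⟨_, hp.has_fpower_series_dslope_fslope⟩
  have hβe : ∀ t, b t = b 0 + t * β t := by
    intro t
    have := sub_smul_dslope b 0 t
    rw [sub_zero, smul_eq_mul] at this
    simp only [β]; linarith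
  have hker : ∀ θ t : ℝ, 0 < t → kk b t0 x0 θ t =
      Real.exp (-(θ * (θ - a)) / 2 * (1 / t) + θ * β t) / rTheta θ t0 x0 := by
    intro θ t ht
    rw [kk, rTheta, hβe t]
    congr 2
    rw [ha]
    field_simp
    ring
  have hg : ∀ θ, 0 < rTheta θ t0 x0 := fun θ => Real.exp_pos _
  have hkpos : ∀ θ t, 0 < kk b t0 x0 θ t := fun θ t => by rw [kk_eq]; exact Real.exp_pos _
  have hkm : ∀ t, Measurable (fun θ => ENNReal.ofReal (kk b t0 x0 θ t)) := by
    intro t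
    simp only [kk_eq]
    fun_prop
  set w : ℝ := ν.real {a} / rTheta a t0 x0 with hw
  let A : ℝ → ℝ := fun t => 1 - w * Real.exp (a * β t)
  have hAa : AnalyticAt ℝ A 0 := by
    simp only [A]
    fun_prop
  have hsplit : ∀ t ∈ Ioo 0 t0, ∫⁻ θ in Ioi a, ENNReal.ofReal (kk b t0 x0 θ t) ∂ν = ENNReal.ofReal (A t) := by
    intro t ht
    have h1 := hR t ht
    rw [← lintegral_add_compl _ (measurableSet_Ioi (a := a))] at h1
    have h2 : ∫⁻ θ in (Ioi a)ᶜ, ENNReal.ofReal (kk b t0 x0 θ t) ∂ν = ENNReal.ofReal (w * Real.exp (a * β t)) := by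
      have e : (((Ioi a)ᶜ : Set ℝ)) =ᵐ[ν] ({a} : Set ℝ) := by
        have hae : ∀ᵐ θ ∂ν, a ≤ θ := hν
        filter_upwards [hae] with θ hθ
        apply propext
        change ¬ (a < θ) ↔ θ = a
        rw [not_lt]
        exact ⟨fun h => le_antisymm h hθ, fun h => h.le⟩
      rw [show ν.restrict (Ioi a)ᶜ = ν.restrict {a} from Measure.restrict_congr_set e, lintegral_singleton, hker a t ht.1, sub_self, hw, mul_comm (ENNReal.ofReal _),
        ← ofReal_measureReal, ← ENNReal.ofReal_mul measureReal_nonneg]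
      congr 1
      simp
      ring
    rw [h2] at h1
    have h3 : ENNReal.ofReal (A t) = 1 - ENNReal.ofReal (w * Real.exp (a * β t)) := by
      simp only [A]
      rw [ENNReal.ofReal_sub _ (by have := hg a; positivity), ENNReal.ofReal_one]
    rw [h3, ← h1, ENNReal.add_sub_cancel_right ENNReal.ofReal_ne_top]
  have hA0 : ∀ t ∈ Ioo 0 t0, 0 ≤ A t := by
    intro t ht
    have h1 := hR t ht
    by_contra hneg
    push Not at hneg
    have h2 : ENNReal.ofReal (w * Real.exp (a * β t)) ≤ 1 := by
      rw [← h1]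
      have : ENNReal.ofReal (w * Real.exp (a * β t)) = ∫⁻ θ in ({a} : Set ℝ), ENNReal.ofReal (kk b t0 x0 θ t) ∂ν := by
        rw [lintegral_singleton, hker a t ht.1, sub_self, hw, mul_comm (ENNReal.ofReal _),
          ← ofReal_measureReal, ← ENNReal.ofReal_mul measureReal_nonneg]
        congr 1
        simp
        ring
      rw [this]
      exact setLIntegral_le_lintegral _ _
    rw [ENNReal.ofReal_le_one] at h2
    simp only [A] at hneg
    linarith
  -- flatness
  set t1 := t0 / 2 with ht1
  have ht1m : t1 ∈ Ioo 0 t0 := ⟨by positivity, by linarith⟩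
  set K := |β 0| + 1 + |β t1| with hK
  have hK0 : 0 < K := by positivity
  have hflat : ∀ᶠ t in 𝓝[>] (0:ℝ), |A t| ≤ Real.exp (-((a * η / 8) / t)) := by
    have hβc : ∀ᶠ t in 𝓝 (0:ℝ), |β t| < |β 0| + 1 :=
      hβ.continuousAt.abs.eventually (gt_mem_nhds (by linarith))
    have hsm : ∀ᶠ t in 𝓝 (0:ℝ), t < min (t1 / 2) (η / (8 * K)) :=
      gt_mem_nhds (lt_min (by linarith [ht1m.1]) (by positivity))
    filter_upwards [hβc.filter_mono nhdsWithin_le_nhds, hsm.filter_mono nhdsWithin_le_nhds,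
      self_mem_nhdsWithin] with t hβt hts htp
    have htp : 0 < t := htp
    have hts1 : t < t1 / 2 := hts.trans_le (min_le_left _ _)
    have hts2 : t < η / (8 * K) := hts.trans_le (min_le_right _ _)
    have htm : t ∈ Ioo 0 t0 := ⟨htp, by linarith⟩
    rw [abs_of_nonneg (hA0 t htm)]
    rw [← ENNReal.ofReal_le_ofReal_iff (Real.exp_pos _).le, ← hsplit t htm]
    have hinv : 1 / (2 * t) ≤ 1 / t - 1 / t1 := by
      have : 1 / t1 ≤ 1 / (2 * t) := one_div_le_one_div_of_le (by positivity) (by linarith)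
      have e : 1 / t = 1 / (2 * t) + 1 / (2 * t) := by field_simp; norm_num
      linarith
    have hKt : K ≤ η / (8 * t) := by
      rw [lt_div_iff₀ (by positivity)] at hts2
      rw [le_div_iff₀ (by positivity)]; linarith
    have hpt : ∀ᵐ θ ∂(ν.restrict (Ioi a)), ENNReal.ofReal (kk b t0 x0 θ t) ≤
        ENNReal.ofReal (Real.exp (-((a * η / 8) / t))) * ENNReal.ofReal (kk b t0 x0 θ t1) := by
      rw [ae_restrict_iff' measurableSet_Ioi]
      have hae : ∀ᵐ θ ∂ν, θ ∉ Ioo a (a + η) := measure_eq_zero_iff_ae_notMem.1 hgap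
      filter_upwards [hae] with θ hθ1 hθ2
      have hθ2 : a < θ := hθ2
      have hθ : a + η ≤ θ := by
        by_contra h
        push Not at h
        exact hθ1 ⟨hθ2, h⟩
      rw [← ENNReal.ofReal_mul (Real.exp_pos _).le]
      refine ENNReal.ofReal_le_ofReal ?_
      rw [hker θ t htp, hker θ t1 ht1m.1, ← mul_div_assoc (Real.exp (-((a * η / 8) / t))), ← Real.exp_add]
      refine div_le_div_of_nonneg_right (Real.exp_le_exp.2 ?_) (hg θ).le
      have hθ0 : 0 < θ := ha0.trans hθ2
      have hb1 : β t - β t1 ≤ K := by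
        have h1 := le_abs_self (β t)
        have h2 := neg_abs_le (β t1)
        rw [hK]; linarith
      have h1 : θ * (β t - β t1) ≤ θ * (η / (8 * t)) := by
        gcongr; linarith
      have h2 : θ * η / 2 * (1 / (2 * t)) ≤ θ * (θ - a) / 2 * (1 / t - 1 / t1) := by
        have : 0 ≤ θ - a := by linarith
        gcongr; linarith
      have h3 : a * η / 8 / t ≤ θ * η / 8 / t := by gcongr
      have h4 : θ * η / 2 * (1 / (2 * t)) - θ * (η / (8 * t)) = θ * η / 8 / t := by
        field_simp; norm_num
      have h5 : -(θ * (θ - a)) / 2 * (1 / t) + θ * β t = -(θ * (θ - a)) / 2 * (1 / t1) + θ * β t1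
          - θ * (θ - a) / 2 * (1 / t - 1 / t1) + θ * (β t - β t1) := by ring
      linarith
    calc ∫⁻ θ in Ioi a, ENNReal.ofReal (kk b t0 x0 θ t) ∂ν
        ≤ ∫⁻ θ in Ioi a, ENNReal.ofReal (Real.exp (-((a * η / 8) / t))) * ENNReal.ofReal (kk b t0 x0 θ t1) ∂ν :=
          lintegral_mono_ae hpt
      _ = ENNReal.ofReal (Real.exp (-((a * η / 8) / t))) * ∫⁻ θ in Ioi a, ENNReal.ofReal (kk b t0 x0 θ t1) ∂ν :=
          lintegral_const_mul _ (hkm t1)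
      _ ≤ ENNReal.ofReal (Real.exp (-((a * η / 8) / t))) * 1 := by
          gcongr
          rw [← hR t1 ht1m]
          exact setLIntegral_le_lintegral _ _
      _ = _ := mul_one _
  have hzero := analytic_flat A (a * η / 8) (by positivity) hAa hflat
  have hz2 : ∀ᶠ t in 𝓝[>] (0:ℝ), A t = 0 ∧ t ∈ Ioo 0 t0 :=
    (hzero.filter_mono nhdsWithin_le_nhds).and (Ioo_mem_nhdsGT ht0)
  obtain ⟨t, hAt, ht⟩ := hz2.exists
  have h1 := hsplit t ht
  rw [hAt, ENNReal.ofReal_zero, lintegral_eq_zero_iff (hkm t)] at h1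
  by_contra hne
  have h2 : ∀ᵐ θ ∂(ν.restrict (Ioi a)), False := by
    filter_upwards [h1] with θ hθ
    simp only [Pi.zero_apply, ENNReal.ofReal_eq_zero] at hθ
    exact absurd hθ (not_le.2 (hkpos θ t))
  rw [ae_iff] at h2
  simp at h2
  exact hne h2


lemma rTheta_pos (θ t x : ℝ) : 0 < rTheta θ t x := Real.exp_pos _

lemma joint_meas (b : ℝ → ℝ) (t0 ε : ℝ) (hε : 0 < ε) (hbc : ContinuousOn b (Ici 0)) :
    ∃ Φ : ℝ × ℝ → ℝ≥0∞, Measurable Φ ∧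
      ∀ t ∈ Icc ε t0, ∀ θ, Φ (t, θ) = ENNReal.ofReal (rTheta θ t (b t)) := by
  classical
  have hb' : Measurable ((Icc ε t0).piecewise b (fun _ => 0)) :=
    ContinuousOn.measurable_piecewise (hbc.mono fun t ht => hε.le.trans ht.1)
      continuousOn_const measurableSet_Icc
  refine ⟨fun p => ENNReal.ofReal (rTheta p.2 p.1 ((Icc ε t0).piecewise b (fun _ => 0) p.1)), ?_, ?_⟩
  · unfold rTheta
    have h1 : Measurable (fun p : ℝ × ℝ => (Icc ε t0).piecewise b (fun _ => 0) p.1) :=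
      hb'.comp measurable_fst
    refine ENNReal.measurable_ofReal.comp (Real.measurable_exp.comp ?_)
    refine Measurable.add ?_ ((measurable_snd.mul h1).div measurable_fst)
    exact ((measurable_snd.pow_const 2).neg).div (measurable_fst.const_mul 2)
  · intro t ht θ
    simp only [piecewise_eq_of_mem _ _ _ ht]

lemma tonelli (b : ℝ → ℝ) (t0 ε : ℝ) (hε : 0 < ε) (hbc : ContinuousOn b (Ici 0))
    (μ lam : Measure ℝ) [SFinite μ] [IsFiniteMeasure lam] (hlam : lam (Icc ε t0)ᶜ = 0) :
    AEMeasurable (fun t => rMu μ t (b t)) lam ∧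
    Measurable (fun θ => ∫⁻ t, ENNReal.ofReal (rTheta θ t (b t)) ∂lam) ∧
    ∫⁻ t, rMu μ t (b t) ∂lam = ∫⁻ θ, ∫⁻ t, ENNReal.ofReal (rTheta θ t (b t)) ∂lam ∂μ := by
  obtain ⟨Φ, hΦ, hΦe⟩ := joint_meas b t0 ε hε hbc
  have hae : ∀ᵐ t ∂lam, t ∈ Icc ε t0 := hlam
  have h1 : (fun t => ∫⁻ θ, Φ (t, θ) ∂μ) =ᵐ[lam] fun t => rMu μ t (b t) := by
    filter_upwards [hae] with t ht
    simp only [rMu, hΦe t ht]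
  have h2 : ∀ θ, ∫⁻ t, Φ (t, θ) ∂lam = ∫⁻ t, ENNReal.ofReal (rTheta θ t (b t)) ∂lam := by
    intro θ
    refine lintegral_congr_ae ?_
    filter_upwards [hae] with t ht
    exact hΦe t ht θ
  refine ⟨⟨_, hΦ.lintegral_prod_right', h1.symm⟩, ?_, ?_⟩
  · simp only [← h2]
    exact hΦ.lintegral_prod_left'
  · rw [← lintegral_congr_ae h1]
    simp only [← h2]
    exact lintegral_lintegral_swap hΦ.aemeasurable

lemma g_meas (t0 x0 : ℝ) : Measurable (fun θ => ENNReal.ofReal (rTheta θ t0 x0)) := by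
  unfold rTheta
  fun_prop

lemma weak (b : ℝ → ℝ) (t0 x0 ε a : ℝ) (hε : 0 < ε) (hbc : ContinuousOn b (Ici 0))
    (μ lam : Measure ℝ) [SFinite μ] [IsFiniteMeasure lam] (hlam : lam (Icc ε t0)ᶜ = 0)
    (hμ : μ (Ici a)ᶜ = 0) (hP : ∀ᵐ t ∂lam, 1 ≤ rMu μ t (b t))
    (hD : ∀ θ ∈ Ici a, (∫⁻ t, ENNReal.ofReal (rTheta θ t (b t)) ∂lam) ≤ ENNReal.ofReal (rTheta θ t0 x0)) :
    lam univ ≤ ∫⁻ t, rMu μ t (b t) ∂lam ∧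
    ∫⁻ t, rMu μ t (b t) ∂lam ≤ ∫⁻ θ, ENNReal.ofReal (rTheta θ t0 x0) ∂μ := by
  obtain ⟨h1, h2, h3⟩ := tonelli b t0 ε hε hbc μ lam hlam
  constructor
  · rw [← lintegral_one]
    exact lintegral_mono_ae hP
  · rw [h3]
    have hae : ∀ᵐ θ ∂μ, θ ∈ Ici a := hμ
    refine lintegral_mono_ae ?_
    filter_upwards [hae] with θ hθ
    exact hD θ hθ

lemma slack (b : ℝ → ℝ) (t0 x0 ε a : ℝ) (hε : 0 < ε) (hbc : ContinuousOn b (Ici 0))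
    (μ lam : Measure ℝ) [SFinite μ] [IsFiniteMeasure lam] (hlam : lam (Icc ε t0)ᶜ = 0)
    (hμ : μ (Ici a)ᶜ = 0) (hP : ∀ᵐ t ∂lam, 1 ≤ rMu μ t (b t))
    (hD : ∀ θ ∈ Ici a, (∫⁻ t, ENNReal.ofReal (rTheta θ t (b t)) ∂lam) ≤ ENNReal.ofReal (rTheta θ t0 x0))
    (hle : ∫⁻ θ, ENNReal.ofReal (rTheta θ t0 x0) ∂μ ≤ lam univ) :
    ∫⁻ θ, ENNReal.ofReal (rTheta θ t0 x0) ∂μ = lam univ ∧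
    (∀ᵐ t ∂lam, rMu μ t (b t) = 1) ∧
    (∀ᵐ θ ∂μ, (∫⁻ t, ENNReal.ofReal (rTheta θ t (b t)) ∂lam) = ENNReal.ofReal (rTheta θ t0 x0)) := by
  obtain ⟨h1, h2, h3⟩ := tonelli b t0 ε hε hbc μ lam hlam
  obtain ⟨h4, h5⟩ := weak b t0 x0 ε a hε hbc μ lam hlam hμ hP hD
  have hae : ∀ᵐ θ ∂μ, θ ∈ Ici a := hμ
  have hfin : lam univ ≠ ∞ := measure_ne_top _ _
  refine ⟨le_antisymm hle (h4.trans h5), ?_, ?_⟩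
  · have := ae_eq_of_ae_le_of_lintegral_le (μ := lam) (f := fun _ => 1) (g := fun t => rMu μ t (b t))
      hP (by rw [lintegral_one]; exact hfin) h1 (by rw [lintegral_one]; exact h5.trans hle)
    filter_upwards [this] with t ht
    exact ht.symm
  · refine ae_eq_of_ae_le_of_lintegral_le ?_ ?_ (g_meas t0 x0).aemeasurable ?_
    · filter_upwards [hae] with θ hθ
      exact hD θ hθ
    · rw [← h3]
      exact ne_top_of_le_ne_top hfin (h5.trans hle)
    · rw [← h3]
      exact hle.trans h4

/-- The measure `g⁻¹ ν`. -/
noncomputable def wd (t0 x0 : ℝ) (ν : Measure ℝ) : Measure ℝ :=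
  ν.withDensity (fun θ => ENNReal.ofReal (1 / rTheta θ t0 x0))

lemma ginv_meas (t0 x0 : ℝ) : Measurable (fun θ => ENNReal.ofReal (1 / rTheta θ t0 x0)) := by
  unfold rTheta
  fun_prop

lemma rMu_wd (b : ℝ → ℝ) (t0 x0 t : ℝ) (ν : Measure ℝ) :
    rMu (wd t0 x0 ν) t (b t) = ∫⁻ θ, ENNReal.ofReal (kk b t0 x0 θ t) ∂ν := by
  rw [rMu, wd, lintegral_withDensity_eq_lintegral_mul _ (ginv_meas t0 x0) (g_meas t (b t))]
  refine lintegral_congr fun θ => ?_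
  have := rTheta_pos θ t0 x0
  simp only [Pi.mul_apply]
  rw [← ENNReal.ofReal_mul (by positivity), kk]
  congr 1
  ring

lemma g_wd (t0 x0 : ℝ) (ν : Measure ℝ) :
    ∫⁻ θ, ENNReal.ofReal (rTheta θ t0 x0) ∂(wd t0 x0 ν) = ν univ := by
  rw [wd, lintegral_withDensity_eq_lintegral_mul _ (ginv_meas t0 x0) (g_meas t0 x0), ← lintegral_one]
  refine lintegral_congr fun θ => ?_
  have := rTheta_pos θ t0 x0
  simp only [Pi.mul_apply]
  rw [← ENNReal.ofReal_mul (by positivity), one_div_mul_cancel this.ne', ENNReal.ofReal_one]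

lemma lam_kk (b : ℝ → ℝ) (t0 x0 θ : ℝ) (lam : Measure ℝ) :
    ∫⁻ t, ENNReal.ofReal (rTheta θ t (b t)) ∂lam =
      ENNReal.ofReal (rTheta θ t0 x0) * ∫⁻ t, ENNReal.ofReal (kk b t0 x0 θ t) ∂lam := by
  rw [← lintegral_const_mul' _ _ ENNReal.ofReal_ne_top]
  refine lintegral_congr fun t => ?_
  have := rTheta_pos θ t0 x0
  rw [← ENNReal.ofReal_mul this.le, kk]
  congr 1
  field_simp

lemma ae_wd (t0 x0 : ℝ) (ν : Measure ℝ) (p : ℝ → Prop) :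
    (∀ᵐ θ ∂(wd t0 x0 ν), p θ) ↔ ∀ᵐ θ ∂ν, p θ := by
  rw [wd, ae_withDensity_iff (ginv_meas t0 x0)]
  refine eventually_congr (Eventually.of_forall fun θ => ?_)
  have := rTheta_pos θ t0 x0
  have h : ENNReal.ofReal (1 / rTheta θ t0 x0) ≠ 0 := by
    rw [Ne, ENNReal.ofReal_eq_zero, not_le]; positivity
  exact ⟨fun hh => hh h, fun hh _ => hh⟩


lemma kk_pos (b : ℝ → ℝ) (t0 x0 θ t : ℝ) : 0 < kk b t0 x0 θ t := by
  rw [kk_eq]; exact Real.exp_pos _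

lemma SC_cont (b : ℝ → ℝ) (t0 x0 ε : ℝ) (hε : 0 < ε) (hbc : ContinuousOn b (Ici 0)) :
    ContinuousOn (fun t => 1 / t - 1 / t0) (Icc ε t0) ∧
    ContinuousOn (fun t => b t / t - x0 / t0) (Icc ε t0) := by
  have hne : ∀ t ∈ Icc ε t0, t ≠ 0 := fun t ht => (hε.trans_le ht.1).ne'
  constructor
  · exact ContinuousOn.sub (ContinuousOn.div continuousOn_const continuousOn_id hne) continuousOn_const
  · refine ContinuousOn.sub (ContinuousOn.div (hbc.mono ?_) continuousOn_id hne) continuousOn_const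
    intro t ht
    exact (hε.le.trans ht.1)

lemma kk_cont_t (b : ℝ → ℝ) (t0 x0 ε : ℝ) (hε : 0 < ε) (hbc : ContinuousOn b (Ici 0)) (θ : ℝ) :
    ContinuousOn (kk b t0 x0 θ) (Icc ε t0) := by
  obtain ⟨h1, h2⟩ := SC_cont b t0 x0 ε hε hbc
  have : kk b t0 x0 θ = fun t => Real.exp (-(θ ^ 2 / 2) * (1 / t - 1 / t0) + θ * (b t / t - x0 / t0)) :=
    funext fun t => kk_eq b t0 x0 θ t
  rw [this]
  exact ((h1.const_mul _).add (h2.const_mul _)).rexp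

lemma kk_cont_th (b : ℝ → ℝ) (t0 x0 t : ℝ) : Continuous (fun θ => kk b t0 x0 θ t) := by
  simp only [kk_eq]
  fun_prop

lemma quad_exp_lim (s c : ℝ) (hs : 0 < s) :
    Tendsto (fun θ : ℝ => Real.exp (-(θ ^ 2 / 2) * s + θ * c)) atTop (𝓝 0) := by
  refine Real.tendsto_exp_atBot.comp ?_
  have h1 : Tendsto (fun θ : ℝ => θ * (θ * (s / 2) + -c)) atTop atTop :=
    tendsto_id.atTop_mul_atTop₀
      (tendsto_atTop_add_const_right _ _ (tendsto_id.atTop_mul_const (by positivity)))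
  refine (tendsto_neg_atTop_atBot.comp h1).congr fun θ => ?_
  simp only [Function.comp]; ring

lemma S_pos {t t0 : ℝ} (ht : 0 < t) (htt : t < t0) : 0 < 1 / t - 1 / t0 :=
  sub_pos.2 (one_div_lt_one_div_of_lt ht htt)

lemma kk_lim (b : ℝ → ℝ) (t0 x0 t : ℝ) (ht : 0 < t) (htt : t < t0) :
    Tendsto (fun θ => kk b t0 x0 θ t) atTop (𝓝 0) := by
  simp only [kk_eq]
  exact quad_exp_lim _ _ (S_pos ht htt)

lemma lam_t0 (b : ℝ → ℝ) (t0 x0 a : ℝ) (ht0 : 0 < t0) (hx0 : x0 < b t0) (lam : Measure ℝ)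
    [IsFiniteMeasure lam]
    (hF : ∀ θ ∈ Ici a, ∫⁻ t, ENNReal.ofReal (kk b t0 x0 θ t) ∂lam ≤ 1) : lam {t0} = 0 := by
  by_contra hne
  have hm : 0 < lam.real {t0} := by
    rw [measureReal_def]; exact ENNReal.toReal_pos hne (measure_ne_top _ _)
  set m := lam.real {t0} with hmdef
  set c0 : ℝ := b t0 / t0 - x0 / t0 with hc0
  have hc : 0 < c0 := by
    rw [hc0, ← sub_div]; exact div_pos (by linarith) ht0
  set θ := max a (2 / (m * c0)) with hθ
  have h1 := hF θ (mem_Ici.2 (le_max_left _ _))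
  have h2 : ENNReal.ofReal (kk b t0 x0 θ t0) * lam {t0} ≤ 1 := by
    rw [← lintegral_singleton (fun t => ENNReal.ofReal (kk b t0 x0 θ t)) t0]
    exact (setLIntegral_le_lintegral _ _).trans h1
  rw [← ofReal_measureReal, ← ENNReal.ofReal_mul (kk_pos _ _ _ _ _).le, ENNReal.ofReal_le_one,
    ← hmdef, kk_eq, sub_self, mul_zero, zero_add, ← hc0] at h2
  have h3 : 2 / (m * c0) ≤ θ := le_max_right _ _
  rw [div_le_iff₀ (by positivity)] at h3
  have h4 := Real.add_one_le_exp (θ * c0)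
  have h5 : θ * c0 * m ≤ Real.exp (θ * c0) * m := by
    gcongr; linarith
  nlinarith

lemma support_A (b : ℝ → ℝ) (t0 x0 ε a t1 : ℝ) (hε : 0 < ε) (hbc : ContinuousOn b (Ici 0))
    (ν lam : Measure ℝ) [IsFiniteMeasure lam] (hlam : lam (Icc ε t0)ᶜ = 0)
    (h0 : lam {t0} = 0) (ht1 : t1 ∈ Ico ε t0) (h1 : lam (Ioo t1 t0) = 0)
    (hF : ∀ᵐ θ ∂ν, ∫⁻ t, ENNReal.ofReal (kk b t0 x0 θ t) ∂lam = 1) : ∃ N, a ≤ N ∧ ν (Ioi N) = 0 := by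
  have hae : ∀ᵐ t ∂lam, t ∈ Icc ε t0 := hlam
  have hae0 : ∀ᵐ t ∂lam, t ∉ ({t0} : Set ℝ) := measure_eq_zero_iff_ae_notMem.1 h0
  have hae1 : ∀ᵐ t ∂lam, t ∉ Ioo t1 t0 := measure_eq_zero_iff_ae_notMem.1 h1
  obtain ⟨KC, hKC⟩ := isCompact_Icc.exists_bound_of_continuousOn (SC_cont b t0 x0 ε hε hbc).2
  have hs : 0 < 1 / t1 - 1 / t0 := S_pos (hε.trans_le ht1.1) ht1.2
  have hb : ∀ θ, 0 ≤ θ → ∫⁻ t, ENNReal.ofReal (kk b t0 x0 θ t) ∂lam ≤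
      ENNReal.ofReal (Real.exp (-(θ ^ 2 / 2) * (1 / t1 - 1 / t0) + θ * KC) * lam.real univ) := by
    intro θ hθ
    rw [ENNReal.ofReal_mul (Real.exp_pos _).le, ofReal_measureReal, ← lintegral_const]
    refine lintegral_mono_ae ?_
    filter_upwards [hae, hae0, hae1] with t ht ht' ht''
    have htt1 : t ≤ t1 := by
      by_contra h
      push Not at h
      exact ht'' ⟨h, lt_of_le_of_ne ht.2 ht'⟩
    refine ENNReal.ofReal_le_ofReal ?_
    rw [kk_eq]
    refine Real.exp_le_exp.2 ?_
    have e1 : 1 / t1 ≤ 1 / t := one_div_le_one_div_of_le (hε.trans_le ht.1) htt1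
    have e2 : b t / t - x0 / t0 ≤ KC := (abs_le.1 (hKC t ht)).2
    have e3 : θ * (b t / t - x0 / t0) ≤ θ * KC := by gcongr
    have e4 : θ ^ 2 / 2 * (1 / t1 - 1 / t0) ≤ θ ^ 2 / 2 * (1 / t - 1 / t0) := by gcongr
    linarith
  have hlim := (quad_exp_lim _ KC hs).mul_const (lam.real univ)
  rw [zero_mul] at hlim
  obtain ⟨N, hN⟩ := eventually_atTop.1 (hlim.eventually (gt_mem_nhds one_pos))
  refine ⟨max (max N a) 0, (le_max_right _ _).trans (le_max_left _ _), ?_⟩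
  rw [measure_eq_zero_iff_ae_notMem]
  filter_upwards [hF] with θ hθ hmem
  have hmem : max (max N a) 0 < θ := hmem
  have g1 : N ≤ θ := ((le_max_left _ _).trans (le_max_left _ _)).trans hmem.le
  have g2 : 0 ≤ θ := (le_max_right _ _).trans hmem.le
  have := hb θ g2
  rw [hθ, ENNReal.one_le_ofReal] at this
  exact absurd (hN θ g1) (not_lt.2 this)

lemma support_B (b : ℝ → ℝ) (t0 x0 ε : ℝ) (hε : 0 < ε) (hεt : ε < t0) (hx0 : x0 < b t0)
    (hba : AnalyticOnNhd ℝ b (Ici 0)) (hb0 : 0 < b 0)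
    (ν lam : Measure ℝ) [IsFiniteMeasure ν] [IsFiniteMeasure lam] (hlam : lam (Icc ε t0)ᶜ = 0)
    (hν : ν (Ici (2 * b 0))ᶜ = 0)
    (h1 : ∀ t1 ∈ Ico ε t0, lam (Ioo t1 t0) ≠ 0)
    (hR : ∀ᵐ t ∂lam, ∫⁻ θ, ENNReal.ofReal (kk b t0 x0 θ t) ∂ν = 1)
    (hF : ∀ᵐ θ ∂ν, ∫⁻ t, ENNReal.ofReal (kk b t0 x0 θ t) ∂lam = 1) : ν (Ioi (2 * b 0)) = 0 := by
  have ht0 : 0 < t0 := hε.trans hεt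
  have hbc : ContinuousOn b (Ici 0) := hba.continuousOn
  let c : ℝ → ℝ := fun s => b ((s + 1 / t0)⁻¹) * (s + 1 / t0) - x0 / t0
  have hck : ∀ θ t, t ≠ 0 → kk b t0 x0 θ t =
      Real.exp (-(θ ^ 2 / 2) * (1 / t - 1 / t0) + θ * c (1 / t - 1 / t0)) := by
    intro θ t ht
    rw [kk_eq]
    have : c (1 / t - 1 / t0) = b t / t - x0 / t0 := by
      simp only [c, sub_add_cancel, div_eq_mul_inv, one_mul, inv_inv]
    rw [this]
  have hca : AnalyticOnNhd ℝ c (Ici 0) := by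
    intro s hs
    have hs : 0 ≤ s := hs
    have hp : 0 < s + 1 / t0 := by positivity
    have e1 : AnalyticAt ℝ (fun s : ℝ => s + 1 / t0) s := by fun_prop
    have e2 : AnalyticAt ℝ (fun s : ℝ => (s + 1 / t0)⁻¹) s := e1.inv hp.ne'
    have e3 : AnalyticAt ℝ b ((s + 1 / t0)⁻¹) := hba _ (by simp only [mem_Ici]; positivity)
    have e4 : AnalyticAt ℝ (fun s : ℝ => b ((s + 1 / t0)⁻¹)) s :=
      AnalyticAt.fun_comp (f := fun s : ℝ => (s + 1 / t0)⁻¹) e3 e2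
    exact (e4.mul e1).sub analyticAt_const
  have hz : ∀ η > 0, ∃ s ∈ Ioo 0 η,
      ∫⁻ θ, ENNReal.ofReal (Real.exp (-(θ ^ 2 / 2) * s + θ * c s)) ∂ν = 1 := by
    intro η hη
    have hlt : 1 / (η + 1 / t0) < t0 := by
      rw [div_lt_iff₀ (by positivity)]
      have : t0 * (η + 1 / t0) = t0 * η + 1 := by field_simp
      rw [this]
      have := mul_pos ht0 hη
      linarith
    have hne := h1 (max ε (1 / (η + 1 / t0))) ⟨le_max_left _ _, max_lt hεt hlt⟩
    have hfr : ∃ t ∈ Ioo (max ε (1 / (η + 1 / t0))) t0, ∫⁻ θ, ENNReal.ofReal (kk b t0 x0 θ t) ∂ν = 1 := by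
      by_contra hcon
      push Not at hcon
      refine hne (measure_eq_zero_iff_ae_notMem.2 ?_)
      filter_upwards [hR] with t ht hmem
      exact hcon t hmem ht
    obtain ⟨t, ht, hRt⟩ := hfr
    have htp : 0 < t := hε.trans ((le_max_left _ _).trans_lt ht.1)
    have ht2 : 1 / (η + 1 / t0) < t := (le_max_right _ _).trans_lt ht.1
    refine ⟨1 / t - 1 / t0, ⟨S_pos htp ht.2, ?_⟩, ?_⟩
    · rw [div_lt_iff₀ (by positivity)] at ht2
      have : 1 / t < η + 1 / t0 := by rw [div_lt_iff₀ htp]; linarith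
      linarith
    · simp only [← hck _ t htp.ne']
      exact hRt
  have hall := core_global ν (2 * b 0) (by positivity) hν c hca hz
  obtain ⟨η, hη, hgap⟩ := gap b t0 x0 ε (2 * b 0) hε hεt hx0 hbc lam hlam
  refine tail_zero b t0 x0 η ht0 hb0 hη (hba 0 (by simp)) ν hν ?_ ?_
  · rw [measure_eq_zero_iff_ae_notMem]
    filter_upwards [hF] with θ hθ hmem
    exact hgap θ hmem hθ
  · intro t ht
    have := hall (1 / t - 1 / t0) (S_pos ht.1 ht.2)
    simp only [← hck _ t ht.1.ne'] at this
    exact this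

lemma R_t0 (b : ℝ → ℝ) (t0 x0 ε a N : ℝ) (ha : 0 < a) (hε : 0 < ε) (hεt : ε < t0)
    (hbc : ContinuousOn b (Ici 0))
    (ν : Measure ℝ) [IsFiniteMeasure ν] (hν : ν (Ici a)ᶜ = 0) (hN : ν (Ioi N) = 0)
    (hR : ∀ t ∈ Ico ε t0, 1 ≤ ∫⁻ θ, ENNReal.ofReal (kk b t0 x0 θ t) ∂ν) :
    1 ≤ ∫⁻ θ, ENNReal.ofReal (kk b t0 x0 θ t0) ∂ν := by
  obtain ⟨hSc, hCc⟩ := SC_cont b t0 x0 ε hε hbc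
  obtain ⟨KS, hKS⟩ := isCompact_Icc.exists_bound_of_continuousOn hSc
  obtain ⟨KC, hKC⟩ := isCompact_Icc.exists_bound_of_continuousOn hCc
  have hmem0 : t0 ∈ Icc ε t0 := ⟨hεt.le, le_rfl⟩
  have hKS0 : 0 ≤ KS := (norm_nonneg _).trans (hKS t0 hmem0)
  have hKC0 : 0 ≤ KC := (norm_nonneg _).trans (hKC t0 hmem0)
  have hev : ∀ᶠ t in 𝓝[<] t0, t ∈ Ico ε t0 := Ico_mem_nhdsLT hεt
  have hlim : Tendsto (fun t => ∫⁻ θ, ENNReal.ofReal (kk b t0 x0 θ t) ∂ν) (𝓝[<] t0)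
      (𝓝 (∫⁻ θ, ENNReal.ofReal (kk b t0 x0 θ t0) ∂ν)) := by
    refine tendsto_lintegral_filter_of_dominated_convergence
      (fun _ => ENNReal.ofReal (Real.exp (N ^ 2 / 2 * KS + N * KC))) ?_ ?_ ?_ ?_
    · exact Eventually.of_forall fun t =>
        ENNReal.measurable_ofReal.comp (kk_cont_th b t0 x0 t).measurable
    · filter_upwards [hev] with t ht
      have hae : ∀ᵐ θ ∂ν, a ≤ θ := hν
      have haN : ∀ᵐ θ ∂ν, θ ∉ Ioi N := measure_eq_zero_iff_ae_notMem.1 hN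
      filter_upwards [hae, haN] with θ h1 h2
      have h2 : θ ≤ N := not_lt.1 h2
      have h0 : 0 ≤ θ := ha.le.trans h1
      refine ENNReal.ofReal_le_ofReal ?_
      rw [kk_eq]
      refine Real.exp_le_exp.2 ?_
      have ht' : t ∈ Icc ε t0 := ⟨ht.1, ht.2.le⟩
      have e1 : -(1 / t - 1 / t0) ≤ KS := by linarith [(abs_le.1 (hKS t ht')).1]
      have e2 : b t / t - x0 / t0 ≤ KC := (abs_le.1 (hKC t ht')).2
      have e3 : θ * (b t / t - x0 / t0) ≤ N * KC :=
        (mul_le_mul_of_nonneg_left e2 h0).trans (mul_le_mul_of_nonneg_right h2 hKC0)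
      have e4 : θ ^ 2 / 2 * -(1 / t - 1 / t0) ≤ N ^ 2 / 2 * KS :=
        (mul_le_mul_of_nonneg_left e1 (by positivity)).trans
          (mul_le_mul_of_nonneg_right (by gcongr) hKS0)
      linarith
    · rw [lintegral_const]
      exact ENNReal.mul_ne_top ENNReal.ofReal_ne_top (measure_ne_top _ _)
    · refine Eventually.of_forall fun θ => ?_
      refine (ENNReal.continuous_ofReal.tendsto _).comp ?_
      have := kk_cont_t b t0 x0 ε hε hbc θ t0 hmem0
      refine this.mono_left ?_
      rw [← nhdsWithin_Ico_eq_nhdsLT hεt]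
      exact nhdsWithin_mono _ Ico_subset_Icc_self
  refine ge_of_tendsto hlim ?_
  filter_upwards [hev] with t ht
  exact hR t ht

lemma wd_finite (t0 x0 a N : ℝ) (ν : Measure ℝ) [IsFiniteMeasure ν] (hν : ν (Ici a)ᶜ = 0)
    (hN : ν (Ioi N) = 0) : IsFiniteMeasure (wd t0 x0 ν) := by
  have hc : ContinuousOn (fun θ => 1 / rTheta θ t0 x0) (Icc a N) := by
    refine ContinuousOn.div continuousOn_const ?_ fun θ _ => (rTheta_pos θ t0 x0).ne'
    unfold rTheta
    fun_prop
  obtain ⟨K, hK⟩ := isCompact_Icc.exists_bound_of_continuousOn hc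
  have hae : ∀ᵐ θ ∂ν, a ≤ θ := hν
  have haN : ∀ᵐ θ ∂ν, θ ∉ Ioi N := measure_eq_zero_iff_ae_notMem.1 hN
  refine isFiniteMeasure_withDensity ?_
  refine ne_top_of_le_ne_top (b := ENNReal.ofReal K * ν univ)
    (ENNReal.mul_ne_top ENNReal.ofReal_ne_top (measure_ne_top _ _)) ?_
  rw [← lintegral_const]
  refine lintegral_mono_ae ?_
  filter_upwards [hae, haN] with θ h1 h2
  exact ENNReal.ofReal_le_ofReal ((le_abs_self _).trans (hK θ ⟨h1, not_lt.1 h2⟩))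

theorem stmt_9 (b : ℝ → ℝ)
    (hba : AnalyticOnNhd ℝ b (Set.Ici 0)) (hbconc : ConcaveOn ℝ (Set.Ici 0) b)
    (hb0 : 0 < b 0) (hbderiv : ∃ d : ℝ, HasDerivWithinAt b d (Set.Ici 0) 0)
    (t0 x0 : ℝ) (ht0 : 0 < t0) (hx0 : x0 < b t0) :
    ∀ ε ∈ Set.Ioo 0 t0,
      ∃ (μ2 lam2 : Measure ℝ), P2epsAdm b t0 ε μ2 ∧ D2epsAdm b t0 x0 ε lam2 ∧
        (∫⁻ θ, ENNReal.ofReal (rTheta θ t0 x0) ∂μ2)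
          = (⨅ μ ∈ {μ : Measure ℝ | P2epsAdm b t0 ε μ},
              ∫⁻ θ, ENNReal.ofReal (rTheta θ t0 x0) ∂μ) ∧
        (⨅ μ ∈ {μ : Measure ℝ | P2epsAdm b t0 ε μ},
            ∫⁻ θ, ENNReal.ofReal (rTheta θ t0 x0) ∂μ)
          = (⨆ lam ∈ {lam : Measure ℝ | D2epsAdm b t0 x0 ε lam}, lam (Set.Icc ε t0)) ∧
        (⨆ lam ∈ {lam : Measure ℝ | D2epsAdm b t0 x0 ε lam}, lam (Set.Icc ε t0))
          = lam2 (Set.Icc ε t0) ∧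
        (∀ᵐ t ∂lam2, rMu μ2 t (b t) = 1) ∧
        (∀ᵐ θ ∂μ2, (∫⁻ t, ENNReal.ofReal (rTheta θ t (b t)) ∂lam2)
          = ENNReal.ofReal (rTheta θ t0 x0)) := by
  intro ε hε
  obtain ⟨hε0, hεt⟩ := hε
  have hbc : ContinuousOn b (Ici 0) := hba.continuousOn
  have ha : 0 < 2 * b 0 := by positivity
  obtain ⟨D, ν, lam, hD0, hνf, hlamf, hν, hlam, hνD, hlamD, hF, hR⟩ :=
    duality (2 * b 0) ε t0 ha hεt (kk b t0 x0) (kk_pos b t0 x0)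
      (kk_cont_t b t0 x0 ε hε0 hbc) (fun t _ => kk_cont_th b t0 x0 t)
      (fun t ht => kk_lim b t0 x0 t (hε0.trans_le ht.1) ht.2)
  have hl0 : lam {t0} = 0 := lam_t0 b t0 x0 (2 * b 0) ht0 hx0 lam hF
  have haet : ∀ᵐ t ∂lam, t ∈ Icc ε t0 := hlam
  have haet0 : ∀ᵐ t ∂lam, t ∉ ({t0} : Set ℝ) := measure_eq_zero_iff_ae_notMem.1 hl0
  have hsf : SFinite (wd t0 x0 ν) := by unfold wd; infer_instance
  have hwν : wd t0 x0 ν (Ici (2 * b 0))ᶜ = 0 := (ae_wd t0 x0 ν (fun θ => θ ∈ Ici (2 * b 0))).2 hν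
  have hP : ∀ᵐ t ∂lam, 1 ≤ rMu (wd t0 x0 ν) t (b t) := by
    filter_upwards [haet, haet0] with t h1 h2
    rw [rMu_wd]
    exact hR t ⟨h1.1, lt_of_le_of_ne h1.2 h2⟩
  have hDual : ∀ θ ∈ Ici (2 * b 0),
      (∫⁻ t, ENNReal.ofReal (rTheta θ t (b t)) ∂lam) ≤ ENNReal.ofReal (rTheta θ t0 x0) := by
    intro θ hθ
    rw [lam_kk b t0 x0]
    exact mul_le_of_le_one_right' (hF θ hθ)
  have hle : ∫⁻ θ, ENNReal.ofReal (rTheta θ t0 x0) ∂(wd t0 x0 ν) ≤ lam univ := by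
    rw [g_wd, hlamD]; exact hνD
  obtain ⟨hval, hs1, hs2⟩ := slack b t0 x0 ε (2 * b 0) hε0 hbc (wd t0 x0 ν) lam hlam hwν hP hDual hle
  have hR1 : ∀ᵐ t ∂lam, ∫⁻ θ, ENNReal.ofReal (kk b t0 x0 θ t) ∂ν = 1 := by
    filter_upwards [hs1] with t ht
    rw [← rMu_wd]; exact ht
  have hF1 : ∀ᵐ θ ∂ν, ∫⁻ t, ENNReal.ofReal (kk b t0 x0 θ t) ∂lam = 1 := by
    filter_upwards [(ae_wd t0 x0 ν _).1 hs2] with θ hθ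
    rw [lam_kk b t0 x0] at hθ
    have h0 : ENNReal.ofReal (rTheta θ t0 x0) ≠ 0 := by
      rw [Ne, ENNReal.ofReal_eq_zero, not_le]; exact rTheta_pos _ _ _
    exact (ENNReal.mul_right_inj h0 ENNReal.ofReal_ne_top).1 (by rw [hθ, mul_one])
  obtain ⟨N, hN⟩ : ∃ N, ν (Ioi N) = 0 := by
    by_cases hcase : ∃ t1 ∈ Ico ε t0, lam (Ioo t1 t0) = 0
    · obtain ⟨t1, ht1, h1⟩ := hcase
      obtain ⟨N, -, hN⟩ := support_A b t0 x0 ε (2 * b 0) t1 hε0 hbc ν lam hlam hl0 ht1 h1 hF1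
      exact ⟨N, hN⟩
    · push Not at hcase
      exact ⟨2 * b 0, support_B b t0 x0 ε hε0 hεt hx0 hba hb0 ν lam hlam hν hcase hR1 hF1⟩
  have hfin : IsFiniteMeasure (wd t0 x0 ν) := wd_finite t0 x0 (2 * b 0) N ν hν hN
  have hPadm : P2epsAdm b t0 ε (wd t0 x0 ν) := by
    refine ⟨hfin, hwν, fun t ht => ?_⟩
    rw [rMu_wd]
    rcases ht.2.lt_or_eq with h | h
    · exact hR t ⟨ht.1, h⟩
    · rw [h]
      exact R_t0 b t0 x0 ε (2 * b 0) N ha hε0 hεt hbc ν hν hN hR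
  have hDadm : D2epsAdm b t0 x0 ε lam := ⟨hlamf, hlam, hDual⟩
  have huniv : ∀ l : Measure ℝ, l (Icc ε t0)ᶜ = 0 → l (Icc ε t0) = l univ := by
    intro l hl
    exact measure_of_measure_compl_eq_zero hl
  have hweak : ∀ μ l : Measure ℝ, P2epsAdm b t0 ε μ → D2epsAdm b t0 x0 ε l →
      l (Icc ε t0) ≤ ∫⁻ θ, ENNReal.ofReal (rTheta θ t0 x0) ∂μ := by
    rintro μ l ⟨m1, m2, m3⟩ ⟨l1, l2, l3⟩
    have hael : ∀ᵐ t ∂l, t ∈ Icc ε t0 := l2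
    rw [huniv l l2]
    obtain ⟨w1, w2⟩ := weak b t0 x0 ε (2 * b 0) hε0 hbc μ l l2 m2
      (by filter_upwards [hael] with t ht using m3 t ht) l3
    exact w1.trans w2
  have hvl : ∫⁻ θ, ENNReal.ofReal (rTheta θ t0 x0) ∂(wd t0 x0 ν) = lam (Icc ε t0) := by
    rw [huniv lam hlam]; exact hval
  have hinf : (⨅ μ ∈ {μ : Measure ℝ | P2epsAdm b t0 ε μ},
      ∫⁻ θ, ENNReal.ofReal (rTheta θ t0 x0) ∂μ) = lam (Icc ε t0) := by
    refine le_antisymm ?_ (le_iInf₂ fun μ hμ => hweak μ lam hμ hDadm)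
    rw [← hvl]
    exact iInf₂_le (wd t0 x0 ν) hPadm
  have hsup : (⨆ l ∈ {l : Measure ℝ | D2epsAdm b t0 x0 ε l}, l (Icc ε t0)) = lam (Icc ε t0) := by
    refine le_antisymm (iSup₂_le fun l hl => ?_) ?_
    · rw [← hvl]
      exact hweak _ l hPadm hl
    · exact le_iSup₂ (f := fun (l : Measure ℝ) (_ : l ∈ {l : Measure ℝ | D2epsAdm b t0 x0 ε l}) =>
        l (Icc ε t0)) lam hDadm
  exact ⟨wd t0 x0 ν, lam, hPadm, hDadm, by rw [hvl, hinf], by rw [hinf, hsup], hsup, hs1, hs2⟩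
end

section
/- (Representability via optimal value matching.) Let b : [0,∞) → ℝ be continuous with b(0) > 0, t0 > 0 and x0 < b(t0). Suppose λ̄ is a finite nonnegative Borel measure on (0,t0] whose topological support is all of (0,t0] (equivalently, λ̄(I) > 0 for every nonempty relatively open subinterval I of (0,t0]) and which satisfies ∫ r_θ(t,b(t)) λ̄(dt) = r_θ(t0,x0) for every θ ∈ [2b(0),∞). If μ is a (D1)-admissible measure with ∫ r_θ(t0,x0) μ(dθ) = λ̄((0,t0]), then r_μ(t, b(t)) = 1 for every t ∈ (0,t0). -/
open MeasureTheory Set Filter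
open scoped ENNReal NNReal Topology

theorem stmt_12 (b : ℝ → ℝ) (hbcont : ContinuousOn b (Set.Ici 0)) (hb0 : 0 < b 0)
    (t0 x0 : ℝ) (ht0 : 0 < t0) (hx0 : x0 < b t0)
    (lamBar : Measure ℝ) [IsFiniteMeasure lamBar]
    (hlamBarSupp : lamBar (Set.Ioc 0 t0)ᶜ = 0)
    -- the topological support of `lamBar` is all of `(0, t0]`: every nonempty
    -- relatively open subinterval has positive mass
    (hfull : ∀ u v : ℝ, (Set.Ioo u v ∩ Set.Ioc 0 t0).Nonempty →
      0 < lamBar (Set.Ioo u v ∩ Set.Ioc 0 t0))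
    (hlamBarEq : ∀ θ ∈ Set.Ici (2 * b 0),
      (∫⁻ t, ENNReal.ofReal (rTheta θ t (b t)) ∂lamBar) = ENNReal.ofReal (rTheta θ t0 x0))
    (μ : Measure ℝ) [IsFiniteMeasure μ] (hμsupp : μ (Set.Ici (2 * b 0))ᶜ = 0)
    (hμadm : ∀ t ∈ Set.Ioc 0 t0, rMu μ t (b t) ≤ 1)
    (hval : (∫⁻ θ, ENNReal.ofReal (rTheta θ t0 x0) ∂μ) = lamBar (Set.Ioc 0 t0)) :
    ∀ t ∈ Set.Ioo 0 t0, rMu μ t (b t) = 1 := by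
  set c : ℝ → ℝ := fun t => b (max t 0) with hc
  have hcc : Continuous c := by
    have := hbcont.comp_continuous (f := fun t : ℝ => max t 0) (by fun_prop)
      (fun t => le_max_right t 0)
    exact this
  have hcb : ∀ t, 0 < t → c t = b t := fun t ht => by simp [hc, max_eq_left ht.le]
  have hae : ∀ᵐ t ∂lamBar, t ∈ Set.Ioc 0 t0 := by
    rw [ae_iff]; exact hlamBarSupp
  have haeμ : ∀ᵐ θ ∂μ, θ ∈ Set.Ici (2 * b 0) := by
    rw [ae_iff]; exact hμsupp
  have hmeas : Measurable (fun p : ℝ × ℝ => ENNReal.ofReal (rTheta p.2 p.1 (c p.1))) := by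
    have := hcc.measurable
    unfold rTheta
    fun_prop
  have hswap : ∫⁻ t, rMu μ t (c t) ∂lamBar = lamBar (Set.Ioc 0 t0) := by
    unfold rMu
    rw [lintegral_lintegral_swap hmeas.aemeasurable, ← hval]
    refine lintegral_congr_ae ?_
    filter_upwards [haeμ] with θ hθ
    rw [← hlamBarEq θ hθ]
    refine lintegral_congr_ae ?_
    filter_upwards [hae] with t ht
    simp only [hcb t ht.1]
  have huniv : lamBar Set.univ = lamBar (Set.Ioc 0 t0) := by
    refine measure_congr ?_
    filter_upwards [hae] with t ht
    exact propext ⟨fun _ => ht, fun _ => trivial⟩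
  have hF1 : (fun t => rMu μ t (c t)) =ᵐ[lamBar] fun _ => (1 : ℝ≥0∞) := by
    refine ae_eq_of_ae_le_of_lintegral_le ?_ ?_ aemeasurable_const ?_
    · filter_upwards [hae] with t ht
      rw [hcb t ht.1]; exact hμadm t ht
    · rw [hswap]; exact measure_ne_top _ _
    · rw [hswap, lintegral_one, huniv]
  intro t ht
  rw [← hcb t ht.1]
  have hcont : Tendsto (fun s => rMu μ s (c s)) (𝓝 t) (𝓝 (rMu μ t (c t))) := by
    have hne : t ≠ 0 := ht.1.ne'
    have hbd : ContinuousAt (fun s => Real.exp (c s ^ 2 / (2 * s))) t := by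
      have := hcc.continuousAt (x := t)
      have h2 : 2 * t ≠ 0 := by simpa using hne
      fun_prop (disch := assumption)
    have hm : ∀ s, Measurable (fun θ : ℝ => ENNReal.ofReal (rTheta θ s (c s))) := by
      intro s
      unfold rTheta
      fun_prop
    have hev := hbd.eventually (eventually_le_nhds (lt_add_one (Real.exp (c t ^ 2 / (2 * t)))))
    unfold rMu
    refine tendsto_lintegral_filter_of_dominated_convergence
      (fun _ => ENNReal.ofReal (Real.exp (c t ^ 2 / (2 * t)) + 1)) ?_ ?_ ?_ ?_
    · exact Eventually.of_forall hm
    · filter_upwards [hev, lt_mem_nhds ht.1] with s hs hs0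
      refine Eventually.of_forall fun θ => ENNReal.ofReal_le_ofReal (le_trans ?_ hs)
      unfold rTheta
      refine Real.exp_le_exp.2 ?_
      have : c s ^ 2 / (2 * s) - (-θ ^ 2 / (2 * s) + θ * c s / s) = (θ - c s) ^ 2 / (2 * s) := by
        field_simp
        ring
      have h3 : 0 ≤ (θ - c s) ^ 2 / (2 * s) := by positivity
      linarith
    · rw [lintegral_const]
      exact ENNReal.mul_ne_top ENNReal.ofReal_ne_top (measure_ne_top _ _)
    · refine Eventually.of_forall fun θ => ENNReal.tendsto_ofReal ?_
      change ContinuousAt (fun s => rTheta θ s (c s)) t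
      unfold rTheta
      have := hcc.continuousAt (x := t)
      have h2 : 2 * t ≠ 0 := by simpa using hne
      fun_prop (disch := assumption)
  by_contra hcon
  obtain ⟨u, v, htuv, hsub⟩ := mem_nhds_iff_exists_Ioo_subset.1 (hcont.eventually_ne hcon)
  have hpos := hfull u v ⟨t, htuv, ht.1, ht.2.le⟩
  have hz : lamBar (Set.Ioo u v ∩ Set.Ioc 0 t0) = 0 :=
    measure_mono_null (fun s hs => hsub hs.1) (ae_iff.1 hF1)
  exact hpos.ne' hz
end

section
/- Under Assumption (A), with t0 > 0 and x0 < b(t0), every (P1)-admissible finite nonnegative Borel measure λ on (0,t0] satisfies λ([t0−ε, t0]) > 0 for every ε ∈ (0,t0). -/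
open MeasureTheory Set Filter
open scoped ENNReal NNReal Topology

theorem stmt_13 (b : ℝ → ℝ)
    (hba : AnalyticOnNhd ℝ b (Set.Ici 0)) (hbconc : ConcaveOn ℝ (Set.Ici 0) b)
    (hb0 : 0 < b 0) (hbderiv : ∃ d : ℝ, HasDerivWithinAt b d (Set.Ici 0) 0)
    (t0 x0 : ℝ) (ht0 : 0 < t0) (hx0 : x0 < b t0)
    (lam : Measure ℝ) [IsFiniteMeasure lam] (hlamsupp : lam (Set.Ioc 0 t0)ᶜ = 0)
    (hlamadm : ∀ θ ∈ Set.Ici (2 * b 0),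
      ENNReal.ofReal (rTheta θ t0 x0) ≤ ∫⁻ t, ENNReal.ofReal (rTheta θ t (b t)) ∂lam) :
    ∀ ε ∈ Set.Ioo 0 t0, 0 < lam (Set.Icc (t0 - ε) t0) := by
  intro ε hε
  obtain ⟨hε0, hε1⟩ := hε
  by_contra hcon
  have hz : lam (Set.Icc (t0 - ε) t0) = 0 := by
    simpa using hcon
  set s := t0 - ε with hs
  have hs0 : 0 < s := by linarith
  have hst : s < t0 := by linarith
  -- an upper bound for b
  have hcont : ContinuousOn b (Set.Icc 0 t0) :=
    hba.continuousOn.mono (fun x hx => hx.1)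
  obtain ⟨M, hM⟩ := (isCompact_Icc.image_of_continuousOn hcont).bddAbove
  have hbM : ∀ t, 0 < t → t ≤ t0 → b t ≤ M := fun t h1 h2 =>
    hM ⟨t, ⟨h1.le, h2⟩, rfl⟩
  have hae : ∀ᵐ t ∂lam, 0 < t ∧ t < s ∧ b t ≤ M := by
    have h1 : ∀ᵐ t ∂lam, t ∉ (Set.Ioc 0 t0)ᶜ := measure_eq_zero_iff_ae_notMem.1 hlamsupp
    have h2 : ∀ᵐ t ∂lam, t ∉ Set.Icc s t0 := measure_eq_zero_iff_ae_notMem.1 hz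
    filter_upwards [h1, h2] with t h1 h2
    have h1' : t ∈ Set.Ioc 0 t0 := by simpa using h1
    refine ⟨h1'.1, ?_, hbM t h1'.1 h1'.2⟩
    by_contra h
    exact h2 ⟨not_lt.1 h, h1'.2⟩
  set A := (1 / s - 1 / t0) / 2 with hA
  set B := M / s - x0 / t0 with hB
  have hA0 : 0 < A := by
    have := one_div_lt_one_div_of_lt hs0 hst
    rw [hA]; linarith
  set C := lam.real Set.univ with hC
  have hC0 : 0 ≤ C := measureReal_nonneg
  obtain ⟨θ, hθ⟩ : ∃ θ, max (max (2 * b 0) (2 * M)) (max C ((|B| + 1) / A)) ≤ θ := ⟨_, le_rfl⟩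
  simp only [max_le_iff] at hθ
  obtain ⟨⟨hθb, hθM⟩, hθC, hθA⟩ := hθ
  have hθ0 : 0 < θ := by linarith
  have hA1 : |B| + 1 ≤ θ * A := (div_le_iff₀ hA0).1 hθA
  have key := hlamadm θ hθb
  have hbound : ∫⁻ t, ENNReal.ofReal (rTheta θ t (b t)) ∂lam
      ≤ ∫⁻ _, ENNReal.ofReal (Real.exp (-(θ * (θ - 2 * M) / (2 * s)))) ∂lam := by
    apply lintegral_mono_ae
    filter_upwards [hae] with t ht
    obtain ⟨h0, h1, h2⟩ := ht
    apply ENNReal.ofReal_le_ofReal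
    unfold rTheta
    apply Real.exp_le_exp.2
    have e1 : θ * b t / t ≤ θ * M / t := by gcongr
    have e2 : -θ ^ 2 / (2 * t) + θ * M / t = -(θ * (θ - 2 * M) / (2 * t)) := by
      field_simp; ring
    have e3 : θ * (θ - 2 * M) / (2 * s) ≤ θ * (θ - 2 * M) / (2 * t) := by
      have : 0 ≤ θ * (θ - 2 * M) := mul_nonneg hθ0.le (by linarith)
      gcongr
    linarith
  rw [lintegral_const] at hbound
  have h3 := key.trans hbound
  rw [← ofReal_measureReal, ← ENNReal.ofReal_mul (Real.exp_pos _).le,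
    ENNReal.ofReal_le_ofReal_iff (by positivity)] at h3
  have hfac : rTheta θ t0 x0 = Real.exp (-(θ * (θ - 2 * M) / (2 * s)))
      * Real.exp (θ * (θ * A - B)) := by
    unfold rTheta
    rw [← Real.exp_add]
    congr 1
    rw [hA, hB]
    have := hs0.ne'
    clear_value s
    field_simp
    ring
  rw [hfac] at h3
  have h4 : Real.exp (θ * (θ * A - B)) ≤ C := le_of_mul_le_mul_left h3 (Real.exp_pos _)
  have h5 := Real.add_one_le_exp (θ * (θ * A - B))
  have h6 : θ * 1 ≤ θ * (θ * A - B) := by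
    apply mul_le_mul_of_nonneg_left _ hθ0.le
    linarith [le_abs_self B]
  linarith
end

section
/- Let b : [0,∞) → ℝ be continuous with b(0) > 0, t0 > 0 and x0 < b(t0). Every (D2)-admissible finite nonnegative Borel measure λ on (0,t0] satisfies λ({t0}) = 0. -/
open MeasureTheory Set Filter
open scoped ENNReal NNReal Topology

theorem stmt_14 (b : ℝ → ℝ) (hbcont : ContinuousOn b (Set.Ici 0)) (hb0 : 0 < b 0)
    (t0 x0 : ℝ) (ht0 : 0 < t0) (hx0 : x0 < b t0)
    (lam : Measure ℝ) [IsFiniteMeasure lam] (hlamsupp : lam (Set.Ioc 0 t0)ᶜ = 0)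
    (hlamadm : ∀ θ ∈ Set.Ici (2 * b 0),
      (∫⁻ t, ENNReal.ofReal (rTheta θ t (b t)) ∂lam) ≤ ENNReal.ofReal (rTheta θ t0 x0)) :
    lam {t0} = 0 := by
  have hlt : (x0 - b t0) / t0 < 0 := div_neg_of_neg_of_pos (by linarith) ht0
  have key : ∀ θ ∈ Set.Ici (2 * b 0),
      lam {t0} ≤ ENNReal.ofReal (Real.exp (θ * ((x0 - b t0) / t0))) := by
    intro θ hθ
    have h1 : ENNReal.ofReal (rTheta θ t0 (b t0)) * lam {t0}
        ≤ ENNReal.ofReal (rTheta θ t0 x0) := by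
      refine le_trans ?_ (hlamadm θ hθ)
      rw [← lintegral_singleton (fun t => ENNReal.ofReal (rTheta θ t (b t))) t0]
      exact setLIntegral_le_lintegral _ _
    have hpos : 0 < rTheta θ t0 (b t0) := Real.exp_pos _
    have h2 : rTheta θ t0 x0
        = rTheta θ t0 (b t0) * Real.exp (θ * ((x0 - b t0) / t0)) := by
      unfold rTheta
      rw [← Real.exp_add]
      congr 1
      ring
    rw [h2, ENNReal.ofReal_mul hpos.le] at h1
    exact (ENNReal.mul_le_mul_iff_right (ENNReal.ofReal_pos.mpr hpos).ne'
      ENNReal.ofReal_ne_top).mp h1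
  have hlim : Tendsto (fun θ : ℝ => ENNReal.ofReal (Real.exp (θ * ((x0 - b t0) / t0))))
      atTop (𝓝 0) := by
    rw [← ENNReal.ofReal_zero]
    exact ENNReal.tendsto_ofReal
      (Real.tendsto_exp_atBot.comp (tendsto_id.atTop_mul_const_of_neg hlt))
  have := ge_of_tendsto hlim ((eventually_ge_atTop (2 * b 0)).mono fun θ hθ => key θ hθ)
  exact le_antisymm this zero_le
end

section
/- (Sufficient conditions for representability.) Assume Assumption (A), let t0 > 0, x0 < b(t0), and let μ be a finite nonnegative Borel measure on [2b(0),∞) with ∫ exp(−θ²/(2t*)) μ(dθ) < ∞ for some t* > t0. Suppose that either (i) there is a (P1)-admissible measure λ1 on (0,t0] with λ1({t0}) = 0 such that r_μ(t, b(t)) = 1 for λ1-almost every t ∈ (0,t0], or (ii) there is a (D2)-admissible measure λ2 on (0,t0] with λ2([t0−ε, t0]) > 0 for every ε ∈ (0,t0) such that r_μ(t, b(t)) = 1 for λ2-almost every t ∈ (0,t0]. Then r_μ(t, b(t)) = 1 for every t ∈ (0,t0], i.e. b is representable by μ on [0,t0]. -/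
open MeasureTheory Set Filter
open scoped ENNReal NNReal Topology

/-- `(P_1)`-admissibility. -/
def P1Adm (b : ℝ → ℝ) (t0 x0 : ℝ) (lam : Measure ℝ) : Prop :=
  IsFiniteMeasure lam ∧ lam (Set.Ioc 0 t0)ᶜ = 0 ∧
    ∀ θ ∈ Set.Ici (2 * b 0),
      ENNReal.ofReal (rTheta θ t0 x0) ≤ ∫⁻ t, ENNReal.ofReal (rTheta θ t (b t)) ∂lam

/-- `(D_2)`-admissibility. -/
def D2Adm (b : ℝ → ℝ) (t0 x0 : ℝ) (lam : Measure ℝ) : Prop :=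
  IsFiniteMeasure lam ∧ lam (Set.Ioc 0 t0)ᶜ = 0 ∧
    ∀ θ ∈ Set.Ici (2 * b 0),
      (∫⁻ t, ENNReal.ofReal (rTheta θ t (b t)) ∂lam) ≤ ENNReal.ofReal (rTheta θ t0 x0)
lemma aux_exp_bound {c M : ℝ} (hc : 0 < c) (hM : 0 ≤ M) (θ : ℝ) :
    (1 + θ ^ 2) * Real.exp (-c * θ ^ 2 + M * |θ|)
      ≤ (1 + 2 / c) * Real.exp (M ^ 2 / (2 * c)) := by
  have h1 : -c * θ ^ 2 + M * |θ| ≤ M ^ 2 / (2 * c) + (-(c / 2 * θ ^ 2)) := by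
    have e : M ^ 2 / (2 * c) + (-(c / 2 * θ ^ 2)) - (-c * θ ^ 2 + M * |θ|)
        = (c * |θ| - M) ^ 2 / (2 * c) := by
      field_simp
      rw [← sq_abs θ]
      ring
    have : 0 ≤ (c * |θ| - M) ^ 2 / (2 * c) := by positivity
    linarith
  have h2 : Real.exp (-c * θ ^ 2 + M * |θ|)
      ≤ Real.exp (M ^ 2 / (2 * c)) * Real.exp (-(c / 2 * θ ^ 2)) := by
    rw [← Real.exp_add]; exact Real.exp_le_exp.mpr h1
  have h3 : (1 + θ ^ 2) * Real.exp (-(c / 2 * θ ^ 2)) ≤ 1 + 2 / c := by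
    rw [Real.exp_neg, ← div_eq_mul_inv, div_le_iff₀ (Real.exp_pos _)]
    have := Real.add_one_le_exp (c / 2 * θ ^ 2)
    have h4 : (1 + 2 / c) * (c / 2 * θ ^ 2 + 1) ≤
        (1 + 2 / c) * Real.exp (c / 2 * θ ^ 2) := by gcongr
    refine le_trans ?_ h4
    have e : (1 + 2 / c) * (c / 2 * θ ^ 2 + 1) = 1 + θ ^ 2 + (2 / c + c / 2 * θ ^ 2) := by
      field_simp; ring
    rw [e]
    have : 0 ≤ 2 / c + c / 2 * θ ^ 2 := by positivity
    linarith
  calc (1 + θ ^ 2) * Real.exp (-c * θ ^ 2 + M * |θ|)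
      ≤ (1 + θ ^ 2) * (Real.exp (M ^ 2 / (2 * c)) * Real.exp (-(c / 2 * θ ^ 2))) := by gcongr
    _ = ((1 + θ ^ 2) * Real.exp (-(c / 2 * θ ^ 2))) * Real.exp (M ^ 2 / (2 * c)) := by ring
    _ ≤ _ := by gcongr

lemma aux_norm_bound {c M : ℝ} (p q : ℂ) (hp : c ≤ p.re) (hq : ‖q‖ ≤ M) (θ : ℝ) :
    ‖Complex.exp (-(θ : ℂ) ^ 2 * p + θ * q)‖ ≤ Real.exp (-c * θ ^ 2 + M * |θ|) := by
  rw [Complex.norm_exp]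
  apply Real.exp_le_exp.mpr
  have e : (-(θ : ℂ) ^ 2 * p + θ * q).re = -θ ^ 2 * p.re + θ * q.re := by
    have h : (-(θ : ℂ) ^ 2 * p + θ * q) = ((-θ ^ 2 : ℝ) : ℂ) * p + (θ : ℂ) * q := by
      push_cast; ring
    rw [h, Complex.add_re, Complex.re_ofReal_mul, Complex.re_ofReal_mul]
  rw [e]
  have h1 : θ * q.re ≤ M * |θ| := by
    calc θ * q.re ≤ |θ * q.re| := le_abs_self _
      _ = |q.re| * |θ| := by rw [abs_mul, mul_comm]
      _ ≤ M * |θ| := by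
        gcongr
        exact (Complex.abs_re_le_norm q).trans hq
  nlinarith [sq_nonneg θ]

lemma aux_analytic (μ : Measure ℝ) [IsFiniteMeasure μ] (P Q : ℂ → ℂ) (z0 : ℂ)
    (hP : AnalyticAt ℂ P z0) (hQ : AnalyticAt ℂ Q z0) (hpos : 0 < (P z0).re) :
    AnalyticAt ℂ (fun z => ∫ θ : ℝ, Complex.exp (-(θ : ℂ) ^ 2 * P z + θ * Q z) ∂μ) z0 := by
  set c := (P z0).re / 2 with hc
  have hc0 : 0 < c := by positivity
  set M := ‖Q z0‖ + 1 with hM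
  set K := ‖deriv P z0‖ + ‖deriv Q z0‖ + 1 with hK
  have e1 : ∀ᶠ z in 𝓝 z0, c < (P z).re :=
    (Complex.continuous_re.continuousAt.comp hP.continuousAt).eventually
      (lt_mem_nhds (by simp only [Function.comp]; linarith))
  have e2 : ∀ᶠ z in 𝓝 z0, ‖Q z‖ < M :=
    hQ.continuousAt.norm.eventually (gt_mem_nhds (by linarith))
  have e3 : ∀ᶠ z in 𝓝 z0, ‖deriv P z‖ < K :=
    hP.deriv.continuousAt.norm.eventually
      (gt_mem_nhds (by have := norm_nonneg (deriv Q z0); linarith))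
  have e4 : ∀ᶠ z in 𝓝 z0, ‖deriv Q z‖ < K :=
    hQ.deriv.continuousAt.norm.eventually
      (gt_mem_nhds (by have := norm_nonneg (deriv P z0); linarith))
  have hM0 : 0 ≤ M := by positivity
  have hK0 : 0 ≤ K := by positivity
  have hev := (((e1.and e2).and (e3.and e4)).and
    (hP.eventually_analyticAt.and hQ.eventually_analyticAt)).eventually_nhds
  rw [Complex.analyticAt_iff_eventually_differentiableAt]
  filter_upwards [hev] with w hw
  have hcont : ∀ z, Continuous
      (fun θ : ℝ => Complex.exp (-(θ : ℂ) ^ 2 * P z + θ * Q z)) := by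
    intro z; fun_prop
  have hww := hw.self_of_nhds
  have key := hasDerivAt_integral_of_dominated_loc_of_deriv_le (μ := μ)
    (F := fun z (θ : ℝ) => Complex.exp (-(θ : ℂ) ^ 2 * P z + θ * Q z))
    (F' := fun z (θ : ℝ) => Complex.exp (-(θ : ℂ) ^ 2 * P z + θ * Q z) *
      (-(θ : ℂ) ^ 2 * deriv P z + θ * deriv Q z)) (x₀ := w)
    (bound := fun _ => 2 * K * ((1 + 2 / c) * Real.exp (M ^ 2 / (2 * c))))
    hw (Eventually.of_forall fun z => (hcont z).aestronglyMeasurable) ?_ ?_ ?_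
    (integrable_const _) ?_
  · exact key.2.differentiableAt
  · refine Integrable.of_bound (hcont w).aestronglyMeasurable
      ((1 + 2 / c) * Real.exp (M ^ 2 / (2 * c))) (Eventually.of_forall fun θ => ?_)
    refine (aux_norm_bound _ _ hww.1.1.1.le hww.1.1.2.le θ).trans
      (le_trans ?_ (aux_exp_bound hc0 hM0 θ))
    have := Real.exp_pos (-c * θ ^ 2 + M * |θ|)
    nlinarith [sq_nonneg θ]
  · apply Continuous.aestronglyMeasurable
    fun_prop
  · refine Eventually.of_forall fun θ z hz => ?_
    obtain ⟨⟨⟨h1, h2⟩, h3, h4⟩, h5, h6⟩ := hz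
    rw [norm_mul]
    have hb := aux_norm_bound _ _ h1.le h2.le θ
    have hn : ‖-(θ : ℂ) ^ 2 * deriv P z + θ * deriv Q z‖ ≤ 2 * K * (1 + θ ^ 2) := by
      refine (norm_add_le _ _).trans ?_
      rw [norm_mul, norm_mul, norm_neg, norm_pow, Complex.norm_real, Real.norm_eq_abs, sq_abs]
      have a1 : θ ^ 2 * ‖deriv P z‖ ≤ θ ^ 2 * K := by gcongr
      have a2 : |θ| * ‖deriv Q z‖ ≤ |θ| * K := by gcongr
      have a3 : |θ| ≤ 1 + θ ^ 2 := by
        rw [← sq_abs θ]; nlinarith [sq_nonneg (|θ| - 1)]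
      have a4 : |θ| * K ≤ (1 + θ ^ 2) * K := by gcongr
      nlinarith
    calc _ ≤ Real.exp (-c * θ ^ 2 + M * |θ|) * (2 * K * (1 + θ ^ 2)) := by gcongr
      _ = 2 * K * ((1 + θ ^ 2) * Real.exp (-c * θ ^ 2 + M * |θ|)) := by ring
      _ ≤ _ := mul_le_mul_of_nonneg_left (aux_exp_bound hc0 hM0 θ) (by positivity)
  · refine Eventually.of_forall fun θ z hz => ?_
    obtain ⟨_, h5, h6⟩ := hz
    exact (((h5.differentiableAt.hasDerivAt).const_mul _).add
      ((h6.differentiableAt.hasDerivAt).const_mul _)).cexp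

lemma aux_complexify (b : ℝ → ℝ) (t1 : ℝ) (hb : AnalyticAt ℝ b t1) :
    ∃ B : ℂ → ℂ, AnalyticAt ℂ B t1 ∧ ∀ᶠ t : ℝ in 𝓝 t1, B t = (b t : ℂ) := by
  obtain ⟨p, r, hp⟩ := hb
  set q : FormalMultilinearSeries ℂ ℂ ℂ :=
    FormalMultilinearSeries.ofScalars ℂ (fun n => (p.coeff n : ℂ)) with hq
  have hrad : p.radius ≤ q.radius := by
    refine ENNReal.le_of_forall_nnreal_lt fun r' hr' => ?_
    obtain ⟨C, _, hC⟩ := p.norm_mul_pow_le_of_lt_radius hr'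
    refine q.le_radius_of_bound C fun n => ?_
    have : ‖q n‖ ≤ ‖p n‖ := by
      rw [hq, FormalMultilinearSeries.ofScalars_norm, Complex.norm_real,
        ← FormalMultilinearSeries.norm_apply_eq_norm_coef]
    exact le_trans (by gcongr) (hC n)
  have hqpos : 0 < q.radius := hp.r_pos.trans_le (hp.r_le.trans hrad)
  have hqs := q.hasFPowerSeriesOnBall hqpos
  refine ⟨fun z => q.sum (z - t1), ?_, ?_⟩
  · have : AnalyticAt ℂ q.sum ((t1 : ℂ) - t1) := by
      rw [sub_self]; exact hqs.analyticAt
    exact AnalyticAt.fun_comp (f := fun z : ℂ => z - t1) this (by fun_prop)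
  · filter_upwards [Metric.eball_mem_nhds t1 hp.r_pos] with t ht
    have hs := hp.hasSum_sub ht
    have hs' := Complex.hasSum_ofReal.mpr hs
    rw [← hs'.tsum_eq, FormalMultilinearSeries.sum]
    congr 1
    ext n
    rw [hq, FormalMultilinearSeries.ofScalars_apply_eq]
    rw [FormalMultilinearSeries.apply_eq_pow_smul_coeff]
    simp [mul_comm]

lemma aux_rTheta_nonneg (θ t x : ℝ) : 0 ≤ rTheta θ t x := (Real.exp_pos _).le

lemma aux_rTheta (θ t x : ℝ) :
    ((rTheta θ t x : ℝ) : ℂ) =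
      Complex.exp (-(θ : ℂ) ^ 2 * ((1 / (2 * t) : ℝ) : ℂ) + θ * ((x / t : ℝ) : ℂ)) := by
  rw [rTheta]
  push_cast
  congr 1
  ring

lemma aux_integrable (μ : Measure ℝ) [IsFiniteMeasure μ] (t x : ℝ) (ht : 0 < t) :
    Integrable (fun θ => rTheta θ t x) μ := by
  have hc : 0 < 1 / (2 * t) := by positivity
  refine Integrable.of_bound (C := (1 + 2 / (1 / (2 * t))) *
    Real.exp (|x / t| ^ 2 / (2 * (1 / (2 * t))))) ?_ (Eventually.of_forall fun θ => ?_)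
  · apply Continuous.aestronglyMeasurable
    unfold rTheta
    fun_prop
  · rw [← Complex.norm_real, aux_rTheta]
    refine (aux_norm_bound (c := 1 / (2 * t)) (M := |x / t|) _ _ ?_ ?_ θ).trans
      (le_trans ?_ (aux_exp_bound hc (abs_nonneg _) θ))
    · rw [Complex.ofReal_re]
    · rw [Complex.norm_real, Real.norm_eq_abs]
    · have := Real.exp_pos (-(1 / (2 * t)) * θ ^ 2 + |x / t| * |θ|)
      nlinarith [sq_nonneg θ]

lemma aux_rMu (μ : Measure ℝ) [IsFiniteMeasure μ] (t x : ℝ) (ht : 0 < t) :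
    rMu μ t x = ENNReal.ofReal (∫ θ, rTheta θ t x ∂μ) := by
  rw [rMu, ofReal_integral_eq_lintegral_ofReal (aux_integrable μ t x ht)]
  exact Eventually.of_forall fun θ => (Real.exp_pos _).le

lemma aux_F_analytic (b : ℝ → ℝ) (hba : AnalyticOnNhd ℝ b (Set.Ici 0))
    (μ : Measure ℝ) [IsFiniteMeasure μ] :
    AnalyticOnNhd ℝ (fun t => ∫ θ, rTheta θ t (b t) ∂μ) (Set.Ioi 0) := by
  intro t1 ht1
  have ht1' : 0 < t1 := ht1
  obtain ⟨B, hB, hBb⟩ := aux_complexify b t1 (hba t1 (le_of_lt ht1'))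
  have hne : (t1 : ℂ) ≠ 0 := by exact_mod_cast ht1'.ne'
  have hA := aux_analytic μ (fun z => 1 / (2 * z)) (fun z => B z / z) t1
    (analyticAt_const.div (analyticAt_const.mul analyticAt_id) (by simpa using hne))
    (hB.div analyticAt_id hne) (by
      have : (1 / (2 * (t1 : ℂ))) = ((1 / (2 * t1) : ℝ) : ℂ) := by push_cast; rfl
      rw [this, Complex.ofReal_re]; positivity)
  have hR : AnalyticAt ℝ (fun t : ℝ => Complex.reCLM
      (∫ θ : ℝ, Complex.exp (-(θ : ℂ) ^ 2 * (1 / (2 * (t : ℂ))) + θ * (B t / t)) ∂μ)) t1 := by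
    have h1 := hA.restrictScalars (𝕜 := ℝ)
    have h2 := AnalyticAt.fun_comp (f := fun t : ℝ => (t : ℂ)) h1
      (Complex.ofRealCLM.analyticAt t1)
    exact (Complex.reCLM.analyticAt _).fun_comp h2
  refine hR.congr ?_
  filter_upwards [hBb] with t ht
  rw [ht]
  have : ∀ θ : ℝ, Complex.exp (-(θ : ℂ) ^ 2 * (1 / (2 * (t : ℂ))) + θ * ((b t : ℂ) / t))
      = ((rTheta θ t (b t) : ℝ) : ℂ) := by
    intro θ
    rw [aux_rTheta]
    push_cast
    rfl
  simp_rw [this]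
  rw [integral_complex_ofReal]
  simp

lemma aux_main (b : ℝ → ℝ) (hba : AnalyticOnNhd ℝ b (Set.Ici 0)) (t0 : ℝ) (ht0 : 0 < t0)
    (μ : Measure ℝ) [IsFiniteMeasure μ] (lam : Measure ℝ) (h0 : lam {t0} = 0)
    (hpos : ∀ ε ∈ Set.Ioo 0 t0, 0 < lam (Set.Icc (t0 - ε) t0))
    (hae : ∀ᵐ t ∂lam, rMu μ t (b t) = 1) :
    ∀ t ∈ Set.Ioc 0 t0, rMu μ t (b t) = 1 := by
  have hF := aux_F_analytic b hba μ
  have hfreq : ∃ᶠ t in 𝓝[≠] t0, (∫ θ, rTheta θ t (b t) ∂μ) = 1 := by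
    intro hcon
    rw [eventually_nhdsWithin_iff, Metric.eventually_nhds_iff] at hcon
    obtain ⟨δ, hδ, hcon⟩ := hcon
    have hm1 : min δ t0 ≤ δ := min_le_left _ _
    have hm2 : min δ t0 ≤ t0 := min_le_right _ _
    have hm3 : 0 < min δ t0 := lt_min hδ ht0
    have hp := hpos (min δ t0 / 2) ⟨by linarith, by linarith⟩
    apply hp.ne'
    refine measure_mono_null (t := {t0} ∪ {t | ¬ rMu μ t (b t) = 1}) ?_
      (measure_union_null h0 (ae_iff.mp hae))
    intro t ht
    by_cases htt : t = t0
    · left; exact htt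
    · right
      intro h1
      have htp : 0 < t := by linarith [ht.1]
      refine hcon (y := t) ?_ htt ?_
      · rw [Real.dist_eq, abs_lt]
        constructor <;> linarith [ht.1, ht.2]
      · rw [aux_rMu μ t _ htp] at h1
        simpa using h1
  have heq := hF.eqOn_of_preconnected_of_frequently_eq (g := fun _ => (1 : ℝ))
    (fun _ _ => analyticAt_const) isPreconnected_Ioi ht0 hfreq
  intro t ht
  rw [aux_rMu μ t _ ht.1]
  have := heq (show t ∈ Set.Ioi 0 from ht.1)
  simp only at this
  rw [this]
  simp

lemma aux_no_bound (δ m C : ℝ) (hδ : 0 < δ) :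
    ∀ᶠ θ : ℝ in atTop, C < Real.exp (θ * (δ * θ - m)) := by
  have h1 : Tendsto (fun θ : ℝ => δ * θ - m) atTop atTop :=
    tendsto_atTop_add_const_right _ (-m) (tendsto_id.const_mul_atTop hδ)
  exact (Real.tendsto_exp_atTop.comp (tendsto_id.atTop_mul_atTop₀ h1)).eventually_gt_atTop C

lemma aux_case2 (b : ℝ → ℝ) (t0 x0 : ℝ) (ht0 : 0 < t0) (hx0 : x0 < b t0)
    (lam : Measure ℝ) (h : D2Adm b t0 x0 lam) : lam {t0} = 0 := by
  obtain ⟨hfin, _, hle⟩ := h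
  by_contra hne
  set L := (lam {t0}).toReal with hL
  have hLt : lam {t0} ≠ ⊤ := measure_ne_top _ _
  have hL0 : 0 < L := ENNReal.toReal_pos hne hLt
  have hd : 0 < (b t0 - x0) / t0 := div_pos (by linarith) ht0
  have h1 : Tendsto (fun θ : ℝ => Real.exp (θ * ((b t0 - x0) / t0))) atTop atTop :=
    Real.tendsto_exp_atTop.comp (tendsto_id.atTop_mul_const hd)
  obtain ⟨θ, hθ1, hθ2⟩ :=
    ((h1.eventually_gt_atTop (1 / L)).and (eventually_ge_atTop (2 * b 0))).exists
  have h2 := hle θ hθ2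
  have h3 : ENNReal.ofReal (rTheta θ t0 (b t0)) * lam {t0} ≤
      ∫⁻ t, ENNReal.ofReal (rTheta θ t (b t)) ∂lam := by
    calc _ = ∫⁻ t in {t0}, ENNReal.ofReal (rTheta θ t (b t)) ∂lam := by
            rw [lintegral_singleton]
      _ ≤ _ := setLIntegral_le_lintegral _ _
  have h4 := h3.trans h2
  rw [← ENNReal.ofReal_toReal hLt, ← ENNReal.ofReal_mul (aux_rTheta_nonneg _ _ _),
    ENNReal.ofReal_le_ofReal_iff (aux_rTheta_nonneg _ _ _), ← hL] at h4
  have h5 : rTheta θ t0 (b t0) = rTheta θ t0 x0 * Real.exp (θ * ((b t0 - x0) / t0)) := by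
    rw [rTheta, rTheta, ← Real.exp_add]
    congr 1
    ring
  have hr : 0 < rTheta θ t0 x0 := Real.exp_pos _
  rw [h5] at h4
  rw [div_lt_iff₀ hL0] at hθ1
  nlinarith

lemma aux_case1 (b : ℝ → ℝ) (hba : AnalyticOnNhd ℝ b (Set.Ici 0)) (t0 x0 : ℝ) (ht0 : 0 < t0)
    (lam : Measure ℝ) (h : P1Adm b t0 x0 lam) :
    ∀ ε ∈ Set.Ioo 0 t0, 0 < lam (Set.Icc (t0 - ε) t0) := by
  intro ε hε
  obtain ⟨hfin, hsupp, hge⟩ := h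
  rw [pos_iff_ne_zero]
  intro hz
  set s := t0 - ε with hs
  have hs0 : 0 < s := by linarith [hε.2]
  have hst : s < t0 := by linarith [hε.1]
  have hcont : ContinuousOn b (Set.Icc 0 t0) :=
    hba.continuousOn.mono Set.Icc_subset_Ici_self
  obtain ⟨B, hB⟩ := (isCompact_Icc.image_of_continuousOn hcont).bddAbove
  have hBb : ∀ t ∈ Set.Icc 0 t0, b t ≤ B := fun t ht => hB (Set.mem_image_of_mem _ ht)
  have hae : ∀ᵐ t ∂lam, t ∈ Set.Ioo 0 s := by
    have h1 : ∀ᵐ t ∂lam, t ∈ Set.Ioc 0 t0 := hsupp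
    have h2 : ∀ᵐ t ∂lam, t ∉ Set.Icc s t0 := measure_eq_zero_iff_ae_notMem.mp hz
    filter_upwards [h1, h2] with t h1 h2
    refine ⟨h1.1, ?_⟩
    by_contra hc
    exact h2 ⟨not_lt.mp hc, h1.2⟩
  set L := (lam Set.univ).toReal with hL
  have hLt : lam Set.univ ≠ ⊤ := measure_ne_top _ _
  have hδ : 0 < 1 / (2 * s) - 1 / (2 * t0) := by
    rw [sub_pos]
    apply one_div_lt_one_div_of_lt <;> linarith
  obtain ⟨θ, hθ1, hθ2, hθ3, hθ4⟩ :=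
    ((aux_no_bound _ (B / s - x0 / t0) L hδ).and ((eventually_ge_atTop (2 * b 0)).and
      ((eventually_ge_atTop (2 * B)).and (eventually_ge_atTop 0)))).exists
  have hle : ∫⁻ t, ENNReal.ofReal (rTheta θ t (b t)) ∂lam ≤
      ∫⁻ t, ENNReal.ofReal (rTheta θ s B) ∂lam := by
    refine lintegral_mono_ae ?_
    filter_upwards [hae] with t ht
    apply ENNReal.ofReal_le_ofReal
    apply Real.exp_le_exp.mpr
    have e : ∀ u x : ℝ, -θ ^ 2 / (2 * u) + θ * x / u = -(θ * (θ / 2 - x) * (1 / u)) := by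
      intro u x; ring
    rw [e, e, neg_le_neg_iff]
    have hb := hBb t ⟨ht.1.le, by linarith [ht.2]⟩
    have hi : 1 / s ≤ 1 / t := one_div_le_one_div_of_le ht.1 ht.2.le
    have hi0 : 0 ≤ 1 / t := by have := ht.1; positivity
    calc θ * (θ / 2 - B) * (1 / s) ≤ θ * (θ / 2 - B) * (1 / t) :=
          mul_le_mul_of_nonneg_left hi (mul_nonneg hθ4 (by linarith))
      _ ≤ θ * (θ / 2 - b t) * (1 / t) := by gcongr
  have h4 := (hge θ hθ2).trans hle
  rw [lintegral_const, ← ENNReal.ofReal_toReal hLt, ← ENNReal.ofReal_mul (aux_rTheta_nonneg _ _ _),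
    ENNReal.ofReal_le_ofReal_iff (mul_nonneg (aux_rTheta_nonneg _ _ _) ENNReal.toReal_nonneg),
    ← hL] at h4
  have h5 : rTheta θ t0 x0 = rTheta θ s B *
      Real.exp (θ * ((1 / (2 * s) - 1 / (2 * t0)) * θ - (B / s - x0 / t0))) := by
    rw [rTheta, rTheta, ← Real.exp_add]
    congr 1
    ring
  have hr : 0 < rTheta θ s B := Real.exp_pos _
  rw [h5] at h4
  exact absurd (le_of_mul_le_mul_left h4 hr) (not_le.mpr hθ1)

theorem stmt_15 (b : ℝ → ℝ)
    (hba : AnalyticOnNhd ℝ b (Set.Ici 0)) (hbconc : ConcaveOn ℝ (Set.Ici 0) b)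
    (hb0 : 0 < b 0) (hbderiv : ∃ d : ℝ, HasDerivWithinAt b d (Set.Ici 0) 0)
    (t0 x0 : ℝ) (ht0 : 0 < t0) (hx0 : x0 < b t0)
    (μ : Measure ℝ) [IsFiniteMeasure μ] (hμsupp : μ (Set.Ici (2 * b 0))ᶜ = 0)
    (tstar : ℝ) (htstar : t0 < tstar)
    (hint : (∫⁻ θ, ENNReal.ofReal (Real.exp (-θ ^ 2 / (2 * tstar))) ∂μ) < ⊤)
    (hcase :
      (∃ lam1 : Measure ℝ, P1Adm b t0 x0 lam1 ∧ lam1 {t0} = 0 ∧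
        ∀ᵐ t ∂lam1, rMu μ t (b t) = 1) ∨
      (∃ lam2 : Measure ℝ, D2Adm b t0 x0 lam2 ∧
        (∀ ε ∈ Set.Ioo 0 t0, 0 < lam2 (Set.Icc (t0 - ε) t0)) ∧
        ∀ᵐ t ∂lam2, rMu μ t (b t) = 1)) :
    ∀ t ∈ Set.Ioc 0 t0, rMu μ t (b t) = 1 := by
  rcases hcase with ⟨lam, hadm, h0, hae⟩ | ⟨lam, hadm, hpos, hae⟩
  · exact aux_main b hba t0 ht0 μ lam h0 (aux_case1 b hba t0 x0 ht0 lam hadm) hae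
  · exact aux_main b hba t0 ht0 μ lam (aux_case2 b t0 x0 ht0 hx0 lam hadm) hpos hae
end
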